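/- Let B = K[X] with X an order-t skew-symmetric matrix of indeterminates with zero upper-left 3×3 block, and let I be the grade-3 almost complete intersection Pfaffian ideal: for odd t = 2r + 1 ≥ 5, I = ⟨Pf_{1̄}(X), Pf_{2̄}(X), Pf_{3̄}(X), Pf_{123̄}(X)⟩. Then for every m ≥ 2, reg(B/I^m) = ((t−1)/2)(m + 2) − 5. -/

import Mathlib

open Ideal

/-- A sequence `f 0, …, f (n-1)` is a *d-sequence* in `A` if
`(⟨f_0,…,f_{i-1}⟩ : f_i) ∩ ⟨f_0,…,f_{n-1}⟩ = ⟨f_0,…,f_{i-1}⟩` for every `i`. -/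
def IsDSequence {A : Type*} [CommRing A] {n : ℕ} (f : Fin n → A) : Prop :=
  ∀ i : Fin n,
    (Ideal.span (f '' {j | j < i})).colon (Ideal.span {f i}) ⊓ Ideal.span (Set.range f)
      = Ideal.span (f '' {j | j < i})

/-- A (proper) regular sequence: each `f i` is a nonzerodivisor modulo the previous ones,
and the sequence generates a proper ideal. -/
def IsRegSeq {A : Type*} [CommRing A] {n : ℕ} (f : Fin n → A) : Prop :=
  (∀ i : Fin n, ∀ a : A, a * f i ∈ Ideal.span (f '' {j | j < i}) →
      a ∈ Ideal.span (f '' {j | j < i}))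
  ∧ Ideal.span (Set.range f) ≠ ⊤

/-- Extension of an `ℕ`-graded family of submodules to `ℤ` (zero in negative degrees). -/
def zg {K A : Type*} [Semiring K] [AddCommMonoid A] [Module K A]
    (𝒜 : ℕ → Submodule K A) : ℤ → Submodule K A :=
  fun z => if 0 ≤ z then 𝒜 z.toNat else ⊥

/-- The irrelevant (graded maximal) ideal of a graded algebra. -/
def irrel {K A : Type*} [CommRing K] [CommRing A] [Algebra K A]
    (𝒜 : ℕ → Submodule K A) : Ideal A :=
  Ideal.span (⋃ n : ℕ, ((𝒜 (n + 1) : Submodule K A) : Set A))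

/-- `𝒜` is a standard grading: `𝒜 0 = K·1`, the grading is generated in degree one,
and the degree-one part is finitely generated. -/
def IsStdGraded {K A : Type*} [CommSemiring K] [Semiring A] [Algebra K A]
    (𝒜 : ℕ → Submodule K A) : Prop :=
  𝒜 0 = 1 ∧ (∀ n : ℕ, 𝒜 (n + 1) = 𝒜 1 * 𝒜 n) ∧ (𝒜 1).FG

/-- A minimal graded free resolution of the graded module `M` (graded pieces `ℳ`) over the
`γ`-graded ring `A` (graded pieces `𝒜`, graded maximal ideal `𝔪`):
free modules `ι i →₀ A` with generator degrees `σ i`, differentials `d`, augmentation `ε`,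
which is exact, with graded differentials and augmentation, and minimal
(all differentials land in `𝔪 • F`). -/
structure MinGradedFreeRes (K : Type) [Field K] (A : Type) [CommRing A] [Algebra K A]
    {γ : Type} [AddCommGroup γ] (𝒜 : γ → Submodule K A) (𝔪 : Ideal A)
    (M : Type) [AddCommGroup M] [Module A M] [Module K M]
    (ℳ : γ → Submodule K M) where
  ι : ℕ → Type
  fin : ∀ i, Finite (ι i)
  σ : ∀ i, ι i → γ
  d : ∀ i, (ι (i + 1) →₀ A) →ₗ[A] (ι i →₀ A)
  ε : (ι 0 →₀ A) →ₗ[A] M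
  exact_d : ∀ i, Function.Exact (d (i + 1)) (d i)
  exact_ε : Function.Exact (d 0) ε
  surj : Function.Surjective ε
  graded_d : ∀ (i : ℕ) (j : γ) (f : ι (i + 1) →₀ A),
      (∀ k, f k ∈ 𝒜 (j - σ (i + 1) k)) → ∀ k, (d i f) k ∈ 𝒜 (j - σ i k)
  graded_ε : ∀ (j : γ) (f : ι 0 →₀ A),
      (∀ k, f k ∈ 𝒜 (j - σ 0 k)) → ε f ∈ ℳ j
  minimal : ∀ (i : ℕ) (f : ι (i + 1) →₀ A), d i f ∈ 𝔪 • (⊤ : Submodule A (ι i →₀ A))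

/-- Castelnuovo–Mumford regularity read off from a minimal graded free resolution:
`sup { (degree of a generator of F_i) - i }`. -/
noncomputable def MinGradedFreeRes.reg {K : Type} [Field K] {A : Type} [CommRing A]
    [Algebra K A] {𝒜 : ℤ → Submodule K A} {𝔪 : Ideal A} {M : Type} [AddCommGroup M]
    [Module A M] [Module K M] {ℳ : ℤ → Submodule K M}
    (R : MinGradedFreeRes K A 𝒜 𝔪 M ℳ) : ℤ :=
  sSup {x : ℤ | ∃ (i : ℕ) (k : R.ι i), x = R.σ i k - (i : ℤ)}

/-- The graded pieces of a quotient module `A ⧸ J`. -/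
def quotPieces {K A : Type*} [Field K] [CommRing A] [Algebra K A]
    (𝒜 : ℕ → Submodule K A) (J : Ideal A) : ℤ → Submodule K (A ⧸ J) :=
  fun j => (zg 𝒜 j).map ((J.mkQ).restrictScalars K)

/-- The Pfaffian of an `n × n` matrix, defined by the recursive expansion along the
first row: `pf(M) = ∑_j (-1)^j M 0 (j+1) · pf(M with rows/columns 0 and j+1 deleted)`,
with `pf = 1` in size `0` and `pf = 0` in odd sizes. -/
def pfaffian {R : Type*} [CommRing R] : (n : ℕ) → Matrix (Fin n) (Fin n) R → R
  | 0, _ => 1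
  | 1, _ => 0
  | (n + 2), M =>
      ∑ j : Fin (n + 1), (-1 : R) ^ (j : ℕ) * M 0 j.succ *
        pfaffian n (M.submatrix (fun k => (j.succAbove k).succ)
          (fun k => (j.succAbove k).succ))

/-- The variables of the skew-symmetric matrix `X`: pairs `(i,j)` with `i < j` and
`j ≥ 3` (the upper-left `3 × 3` block being zero). -/
def PairVar (t : ℕ) : Type := {p : Fin t × Fin t // (p.1 : ℕ) < (p.2 : ℕ) ∧ 3 ≤ (p.2 : ℕ)}

/-- The generic order-`t` skew-symmetric matrix with zero upper-left `3 × 3` block. -/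
noncomputable def Xmat (K : Type) [Field K] (t : ℕ) :
    Matrix (Fin t) (Fin t) (MvPolynomial (PairVar t) K) := fun i j =>
  if h : (i : ℕ) < (j : ℕ) ∧ 3 ≤ (j : ℕ) then MvPolynomial.X ⟨(i, j), h⟩
  else if h' : (j : ℕ) < (i : ℕ) ∧ 3 ≤ (i : ℕ) then - MvPolynomial.X ⟨(j, i), h'⟩
  else 0

/-- The order embedding `Fin n → Fin (n+1)` skipping the index `a`. -/
def emb1 (a : ℕ) {n : ℕ} (k : Fin n) : Fin (n + 1) :=
  ⟨if (k : ℕ) < a then (k : ℕ) else (k : ℕ) + 1, by have := k.2; split_ifs <;> omega⟩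

/-- The order embedding `Fin n → Fin (n+2)` skipping the indices `a < b`. -/
def emb2 (a b : ℕ) {n : ℕ} (k : Fin n) : Fin (n + 2) :=
  ⟨if (k : ℕ) < a then (k : ℕ) else if (k : ℕ) + 1 < b then (k : ℕ) + 1 else (k : ℕ) + 2,
   by have := k.2; split_ifs <;> omega⟩

/-- The order embedding `Fin n → Fin (n+3)` skipping the indices `0, 1, 2`. -/
def emb3 {n : ℕ} (k : Fin n) : Fin (n + 3) := ⟨(k : ℕ) + 3, by have := k.2; omega⟩


section FilePB
set_option linter.unusedSectionVars false
namespace PfReg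
open Polynomial

section B
variable {S : Type*} [CommRing S]

def nzd (p : S) (J : Ideal S) : Prop := ∀ a, a * p ∈ J → a ∈ J

theorem nzd_unit {p : S} (h : IsUnit p) (J : Ideal S) : nzd p J := by
  intro a ha
  obtain ⟨u, rfl⟩ := h
  simpa [mul_assoc] using J.mul_mem_right (↑u⁻¹) ha

theorem nzd_neg {p : S} {J : Ideal S} (h : nzd p J) : nzd (-p) J := by
  intro a ha
  apply h a
  simpa using J.neg_mem ha

theorem nzd_perm {p e f : S} (h1 : nzd e (Ideal.span {p})) (h2 : nzd f (Ideal.span {p, e})) :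
    nzd e (Ideal.span {p, f}) := by
  intro a ha
  rw [Ideal.mem_span_pair] at ha ⊢
  obtain ⟨y, z, hyz⟩ := ha
  have hz : z ∈ Ideal.span {p, e} := by
    apply h2
    rw [Ideal.mem_span_pair]
    exact ⟨-y, a, by linear_combination -hyz⟩
  rw [Ideal.mem_span_pair] at hz
  obtain ⟨s, w, hsw⟩ := hz
  have : a - w * f ∈ Ideal.span {p} := by
    apply h1
    rw [Ideal.mem_span_singleton']
    exact ⟨y + s * f, by linear_combination hyz + f * hsw⟩
  rw [Ideal.mem_span_singleton'] at this
  obtain ⟨b, hb⟩ := this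
  exact ⟨b, w, by linear_combination hb⟩

theorem nzd_sym [IsDomain S] {p e : S} (he : e ≠ 0) (h : nzd p (Ideal.span {e})) :
    nzd e (Ideal.span {p}) := by
  intro a ha
  rw [Ideal.mem_span_singleton'] at ha ⊢
  obtain ⟨b, hb⟩ := ha
  have : b ∈ Ideal.span {e} := h b (by rw [Ideal.mem_span_singleton']; exact ⟨a, hb.symm⟩)
  rw [Ideal.mem_span_singleton'] at this
  obtain ⟨c, hc⟩ := this
  refine ⟨c, ?_⟩
  apply mul_right_cancel₀ he
  rw [← hb, ← hc]; ring

structure VarS (x : S) where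
  ψ : S →+* S[X]
  hx : ψ x = X
  hev : ∀ s, (ψ s).eval x = s

noncomputable def VarS.R {x : S} (V : VarS x) : Subring S := RingHom.eqLocus V.ψ C

theorem VarS.mem {x : S} (V : VarS x) {s : S} : s ∈ V.R ↔ V.ψ s = C s := Iff.rfl

theorem VarS.neg_R {x : S} (V : VarS x) : ∃ V' : VarS (-x), V'.R = V.R := by
  refine ⟨⟨(compRingHom (-X)).comp V.ψ, by simp [V.hx], fun s => by
    simp [V.hev s, Polynomial.eval_comp]⟩, ?_⟩
  ext s
  rw [VarS.mem, VarS.mem]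
  constructor
  · intro h
    have h' : (V.ψ s).comp (-X) = C s := h
    have := congrArg (fun p => p.comp (-X)) h'
    simpa [comp_assoc] using this
  · intro h
    change (V.ψ s).comp (-X) = C s
    rw [h]; simp

theorem VarS.LC {x : S} (V : VarS x) {G : Set S} (hG : ∀ s ∈ G, s ∈ V.R) {c r p : S}
    (hp : p = c * x + r) (hc : c ∈ V.R) (hr : r ∈ V.R) (h : nzd c (Ideal.span G)) :
    nzd p (Ideal.span G) := by
  intro a ha
  set J := Ideal.span G
  have hJ : ∀ s ∈ J, ∀ n, (V.ψ s).coeff n ∈ J := by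
    intro s hs
    have : J ≤ (J.map C).comap V.ψ := by
      rw [Ideal.span_le]
      intro s hs
      change V.ψ s ∈ J.map C
      rw [V.mem.1 (hG s hs)]
      exact Ideal.mem_map_of_mem _ (Ideal.subset_span hs)
    exact Ideal.mem_map_C_iff.1 (this hs)
  have key : ∀ n, (V.ψ a).coeff n * c + (V.ψ a).coeff (n+1) * r ∈ J := by
    intro n
    have := hJ _ ha (n+1)
    rwa [hp, map_mul, map_add, map_mul, V.hx, V.mem.1 hc, V.mem.1 hr, mul_add, coeff_add,
      ← mul_assoc, coeff_mul_X, coeff_mul_C, coeff_mul_C] at this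
  have all : ∀ k n, (V.ψ a).natDegree < n + k → (V.ψ a).coeff n ∈ J := by
    intro k
    induction k with
    | zero => intro n hn; rw [coeff_eq_zero_of_natDegree_lt (by simpa using hn)]; exact J.zero_mem
    | succ k ih =>
      intro n hn
      apply h
      have h1 := ih (n+1) (by omega)
      exact (J.add_mem_iff_left (J.mul_mem_right _ h1)).1 (key n)
  rw [← V.hev a, eval_eq_sum_range]
  exact J.sum_mem fun n _ => J.mul_mem_right _ (all _ n (by
    have : (V.ψ a).natDegree < n + ((V.ψ a).natDegree + 1) := by omega
    exact this))

section core
variable {E : Type*} [AddCommGroup E] [Module S E] (ω : E →ₗ[S] E →ₗ[S] S) (N : Submodule S E)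
  (g : S)

def Ex (e : E) : Prop := ∀ v, ω e v ∈ Ideal.span {g} → ∃ h : S, v - h • e ∈ N

/-- the ideal `(g) + ω(u,·)` -/
def Lu (u : E) : Ideal S := Ideal.span {g} ⊔ LinearMap.range (ω u)

theorem mem_Lu {u : E} {a : S} : a ∈ Lu ω g u ↔ ∃ v, a - ω u v ∈ Ideal.span {g} := by
  rw [Lu, Submodule.mem_sup]
  constructor
  · rintro ⟨y, hy, z, ⟨v, rfl⟩, rfl⟩
    exact ⟨v, by simpa using hy⟩
  · rintro ⟨v, hv⟩
    exact ⟨_, hv, _, ⟨v, rfl⟩, by simp⟩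

variable {ω N g} (alt : ∀ v, ω v v = 0) (hN : ∀ u, ∀ v ∈ N, ω u v ∈ Ideal.span {g})
  (hg : ∀ v, g • v ∈ N) {ub e : E} (x : S)
include alt hN hg

theorem coreX (hEx : Ex ω N g e) (hnz : nzd (ω ub e) (Ideal.span {g})) :
    ∀ D : ℕ, ∀ v : ℕ → E, (∀ n, D < n → v n = 0) → ω ub (v 0) ∈ Ideal.span {g} →
      (∀ n, ω ub (v (n+1)) + ω e (v n) ∈ Ideal.span {g}) →
      ∃ h : S, (∑ n ∈ Finset.range (D+1), x ^ n • v n) - h • (ub + x • e) ∈ N := by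
  intro D
  induction D with
  | zero =>
    intro v hv h0 h1
    have h2 := h1 0
    rw [hv 1 (by omega)] at h2
    obtain ⟨h, hh⟩ := hEx (v 0) (by simpa using h2)
    have h3 := hN ub _ hh
    have h4 : h ∈ Ideal.span {g} := by
      apply hnz
      have := Ideal.sub_mem _ h0 h3
      simpa using this
    rw [Ideal.mem_span_singleton'] at h4
    obtain ⟨s, rfl⟩ := h4
    refine ⟨0, ?_⟩
    have h5 : (s * g) • e ∈ N := by rw [mul_smul]; exact N.smul_mem _ (hg e)
    simpa using N.add_mem hh h5
  | succ D ih =>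
    intro v hv h0 h1
    have h2 := h1 (D+1)
    rw [hv (D+1+1) (by omega)] at h2
    obtain ⟨h, hh⟩ := hEx (v (D+1)) (by simpa using h2)
    let v' : ℕ → E := fun n => if n = D + 1 then 0 else if n = D then v D - h • ub else v n
    have e1 : v' (D+1) = 0 := by simp [v']
    have e2 : v' D = v D - h • ub := by simp [v']
    have e3 : ∀ n, n ≠ D → n ≠ D+1 → v' n = v n := by intro n a b; simp [v', a, b]
    have aub := alt ub
    have ae : ω e ub = - ω ub e := by
      have := alt (ub + e); simp only [map_add, LinearMap.add_apply, alt] at this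
      linear_combination this
    obtain ⟨h', hh'⟩ := ih v' (by
        intro n hn
        by_cases hn' : n = D + 1
        · subst hn'; exact e1
        · rw [e3 n (by omega) hn']; exact hv n (by omega)) (by
        by_cases hD : 0 = D
        · subst hD; rw [e2]; simpa [aub] using h0
        · rw [e3 0 hD (by omega)]; exact h0) (by
        intro n
        by_cases hn : n = D
        · subst hn
          rw [e1, e2]
          have a1 := hN ub _ hh
          have a2 := Ideal.sub_mem _ (h1 n) a1
          convert a2 using 1
          simp [ae]
        · by_cases hn2 : n = D + 1
          · subst hn2
            rw [e1, e3 _ (by omega) (by omega), hv _ (by omega)]; simp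
          · rw [e3 n hn hn2]
            by_cases hn3 : n + 1 = D
            · subst hn3; rw [e2]; simpa [aub] using h1 n
            · rw [e3 (n+1) hn3 (by omega)]; exact h1 n)
    refine ⟨h' + x ^ D * h, ?_⟩
    have : (∑ n ∈ Finset.range (D+1+1), x ^ n • v n) - (h' + x ^ D * h) • (ub + x • e)
        = ((∑ n ∈ Finset.range (D+1), x ^ n • v' n) - h' • (ub + x • e))
          + x ^ (D+1) • (v (D+1) - h • e) := by
      have es : ∑ n ∈ Finset.range D, x ^ n • v' n = ∑ n ∈ Finset.range D, x ^ n • v n :=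
        Finset.sum_congr rfl (fun n hn => by
          rw [e3 n (by have := Finset.mem_range.1 hn; omega)
            (by have := Finset.mem_range.1 hn; omega)])
      rw [Finset.sum_range_succ, Finset.sum_range_succ, Finset.sum_range_succ, e2, es]
      module
    rw [this]
    exact N.add_mem hh' (N.smul_mem _ hh)

theorem coreY {c : S} (hEx : Ex ω N g e) (hcL : nzd c (Lu ω g e)) (hcg : nzd c (Ideal.span {g}))
    (hnz : nzd (ω ub e) (Ideal.span {c, g})) (B : ℕ) :
    ∀ D : ℕ, D + 1 < B → ∀ (v : ℕ → E) (a : ℕ → S), (∀ n, D < n → v n = 0) →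
      c * a 0 - ω ub (v 0) ∈ Ideal.span {g} →
      (∀ n, c * a (n+1) - ω ub (v (n+1)) - ω e (v n) ∈ Ideal.span {g}) →
      (∑ n ∈ Finset.range B, x ^ n * a n) ∈ Lu ω g (ub + x • e) := by
  have ae : ω e ub = - ω ub e := by
      have := alt (ub + e); simp only [map_add, LinearMap.add_apply, alt] at this
      linear_combination this
  have gL : ∀ u, Ideal.span {g} ≤ Lu ω g u := fun u => le_sup_left
  have wL : ∀ u v, ω u v ∈ Lu ω g u := fun u v => (le_sup_right : _ ≤ Lu ω g u) ⟨v, rfl⟩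
  have key : ∀ D : ℕ, D + 1 < B →
      (∀ (v : ℕ → E) (a : ℕ → S), (∀ n, D < n → v n = 0) →
        c * a 0 - ω ub (v 0) ∈ Ideal.span {g} →
        (∀ n, c * a (n+1) - ω ub (v (n+1)) - ω e (v n) ∈ Ideal.span {g}) →
        ω e (v D) ∈ Ideal.span {g} →
        (∑ n ∈ Finset.range B, x ^ n * a n) ∈ Lu ω g (ub + x • e)) →
      (∀ (v : ℕ → E) (a : ℕ → S), (∀ n, D < n → v n = 0) →
        c * a 0 - ω ub (v 0) ∈ Ideal.span {g} →
        (∀ n, c * a (n+1) - ω ub (v (n+1)) - ω e (v n) ∈ Ideal.span {g}) →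
        (∑ n ∈ Finset.range B, x ^ n * a n) ∈ Lu ω g (ub + x • e)) := by
    intro D hD main v a hv h0 h1
    have h2 := h1 D
    rw [hv (D+1) (by omega), map_zero, sub_zero] at h2
    have h3 : a (D+1) ∈ Lu ω g e := by
      apply hcL
      rw [mem_Lu]
      exact ⟨v D, by rwa [mul_comm]⟩
    rw [mem_Lu] at h3
    obtain ⟨v1, hv1⟩ := h3
    let v' : ℕ → E := fun n => if n = D then v D - c • v1 else v n
    let a' : ℕ → S := fun n => if n = D + 1 then a (D+1) - ω e v1 else
      if n = D then a D - ω ub v1 else a n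
    have e2 : v' D = v D - c • v1 := by simp [v']
    have e3 : ∀ n, n ≠ D → v' n = v n := by intro n a; simp [v', a]
    have f1 : a' (D+1) = a (D+1) - ω e v1 := by simp [a']
    have f2 : a' D = a D - ω ub v1 := by simp [a']
    have f3 : ∀ n, n ≠ D → n ≠ D+1 → a' n = a n := by intro n a b; simp [a', a, b]
    have hD0 : ∀ n, D < n → v' n = 0 := by
      intro n hn; rw [e3 n (by omega)]; exact hv n hn
    have := main v' a' hD0 (by
        by_cases h : 0 = D
        · subst h; rw [f2, e2]; convert h0 using 1; simp; ring
        · rw [f3 0 h (by omega), e3 0 h]; exact h0) (by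
        intro n
        by_cases hn : n = D
        · subst hn; rw [f1, e2, e3 _ (by omega)]; convert h1 n using 1; simp; ring
        · rw [e3 n hn]
          by_cases hn2 : n + 1 = D
          · subst hn2; rw [f2, e2]; convert h1 n using 1; simp; ring
          · rw [f3 (n+1) hn2 (by omega), e3 _ hn2]; exact h1 n) (by
        rw [e2]
        have := Ideal.sub_mem _ (Ideal.mul_mem_left _ c hv1) h2
        convert this using 1; simp; ring)
    have es : (∑ n ∈ Finset.range B, x ^ n * a n) = (∑ n ∈ Finset.range B, x ^ n * a' n)
        + x ^ D * ω (ub + x • e) v1 := by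
      have : ∀ n, x ^ n * a n = x ^ n * a' n + ((if n = D then x ^ D * ω ub v1 else 0)
          + (if n = D + 1 then x ^ (D+1) * ω e v1 else 0)) := by
        intro n
        by_cases hn : n = D
        · subst hn; rw [f2]; simp; ring
        · by_cases hn2 : n = D + 1
          · subst hn2; rw [f1]; simp; ring
          · rw [f3 n hn hn2]; simp [hn, hn2]
      rw [Finset.sum_congr rfl (fun n _ => this n), Finset.sum_add_distrib,
        Finset.sum_add_distrib, Finset.sum_ite_eq', Finset.sum_ite_eq',
        if_pos (Finset.mem_range.2 (by omega)), if_pos (Finset.mem_range.2 (by omega))]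
      simp; ring
    rw [es]
    exact Ideal.add_mem _ this (Ideal.mul_mem_left _ _ (wL _ _))
  intro D
  induction D with
  | zero =>
    intro hB
    apply key 0 hB
    intro v a hv h0 h1 h2
    obtain ⟨h, hh⟩ := hEx (v 0) h2
    have h3 := hN ub _ hh
    have h4 : h ∈ Ideal.span {c, g} := by
      apply hnz
      rw [Ideal.mem_span_singleton'] at h3 h0
      obtain ⟨s, hs⟩ := h3
      obtain ⟨s', hs'⟩ := h0
      rw [Ideal.mem_span_pair]
      refine ⟨a 0, -s - s', ?_⟩
      simp at hs
      linear_combination -hs - hs'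
    rw [Ideal.mem_span_pair] at h4
    obtain ⟨h', s, hs⟩ := h4
    have h5 : a 0 - h' * ω ub e ∈ Ideal.span {g} := by
      apply hcg
      rw [Ideal.mem_span_singleton'] at h3 h0 ⊢
      obtain ⟨s1, hs1⟩ := h3
      obtain ⟨s', hs'⟩ := h0
      simp at hs1
      refine ⟨s1 + s' + s * ω ub e, ?_⟩
      linear_combination hs1 + hs' + ω ub e * hs
    have h6 : ∀ n, 0 < n → a n ∈ Ideal.span {g} := by
      intro n hn
      obtain ⟨n, rfl⟩ : ∃ k, n = k + 1 := ⟨n-1, by omega⟩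
      apply hcg
      have := h1 n
      rw [hv (n+1) (by omega), map_zero, sub_zero] at this
      by_cases hn0 : n = 0
      · subst hn0
        have := Ideal.add_mem _ this h2
        rw [mul_comm]; simpa using this
      · rw [hv n (by omega), map_zero, sub_zero] at this
        rwa [mul_comm]
    obtain ⟨B', rfl⟩ : ∃ k, B = k + 1 := ⟨B-1, by omega⟩
    rw [Finset.sum_range_succ']
    refine Ideal.add_mem _ (Ideal.sum_mem _ fun n _ =>
      Ideal.mul_mem_left _ _ (gL _ (h6 _ (by omega)))) ?_
    have h7 : h' * ω ub e = ω (ub + x • e) (h' • e) := by simp [alt]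
    rw [pow_zero, one_mul, ← sub_add_cancel (a 0) (h' * ω ub e)]
    refine Ideal.add_mem _ (gL _ h5) ?_
    rw [h7]
    exact wL _ _
  | succ D ih =>
    intro hB
    apply key (D+1) hB
    intro v a hv h0 h1 h2
    obtain ⟨h, hh⟩ := hEx (v (D+1)) h2
    let v' : ℕ → E := fun n => if n = D + 1 then 0 else if n = D then v D - h • ub else v n
    have e1 : v' (D+1) = 0 := by simp [v']
    have e2 : v' D = v D - h • ub := by simp [v']
    have e3 : ∀ n, n ≠ D → n ≠ D+1 → v' n = v n := by intro n a b; simp [v', a, b]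
    have aub := alt ub
    refine ih (by omega) v' a (by
        intro n hn
        by_cases hn' : n = D + 1
        · subst hn'; exact e1
        · rw [e3 n (by omega) hn']; exact hv n (by omega)) (by
        by_cases hD : 0 = D
        · subst hD; rw [e2]; simpa [aub] using h0
        · rw [e3 0 hD (by omega)]; exact h0) (by
        intro n
        by_cases hn : n = D
        · subst hn
          rw [e1, e2]
          have a1 := hN ub _ hh
          have a2 := Ideal.add_mem _ (h1 n) a1
          convert a2 using 1
          simp [ae]; ring
        · by_cases hn2 : n = D + 1
          · subst hn2
            have := Ideal.add_mem _ (h1 (D+1)) h2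
            rw [e1, e3 _ (by omega) (by omega)]
            simpa using this
          · rw [e3 n hn hn2]
            by_cases hn3 : n + 1 = D
            · subst hn3; rw [e2]; simpa [aub] using h1 n
            · rw [e3 (n+1) hn3 (by omega)]; exact h1 n)
end core

section transport
variable {ι : Type*} [Fintype ι] [DecidableEq ι] {ω : (ι → S) →ₗ[S] (ι → S) →ₗ[S] S}
  {N : Submodule S (ι → S)} {g : S} (alt : ∀ v, ω v v = 0)
  (hN : ∀ u, ∀ v ∈ N, ω u v ∈ Ideal.span {g})
  (hg : ∀ v, g • v ∈ N) {ub e : ι → S} {x : S} (V : VarS x)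

theorem VarS.span_coeff {g : S} (hgR : g ∈ V.R) {s : S} (hs : s ∈ Ideal.span {g}) (n : ℕ) :
    (V.ψ s).coeff n ∈ Ideal.span {g} := by
  rw [Ideal.mem_span_singleton'] at hs
  obtain ⟨b, rfl⟩ := hs
  rw [map_mul, V.mem.1 hgR, coeff_mul_C]
  exact Ideal.mul_mem_left _ _ (Ideal.mem_span_singleton_self g)

theorem VarS.coeff_om {y : ι → S} (hy : ∀ i, ω y (Pi.single i 1) ∈ V.R) (v : ι → S) (n : ℕ) :
    (V.ψ (ω y v)).coeff n = ω y (fun i => (V.ψ (v i)).coeff n) := by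
  rw [LinearMap.pi_apply_eq_sum_univ (ω y) v, LinearMap.pi_apply_eq_sum_univ (ω y) (fun i => _),
    map_sum, finsetSum_coeff]
  refine Finset.sum_congr rfl fun i _ => ?_
  have : (fun j => if i = j then (1:S) else 0) = Pi.single i 1 := by
    ext j; by_cases h : i = j
    · subst h; simp
    · simp [h, Ne.symm h]
  rw [this, smul_eq_mul, map_mul, V.mem.1 (hy i), coeff_mul_C, smul_eq_mul]

theorem VarS.sum_vec (v : ι → S) (D : ℕ) (hD : ∀ i, (V.ψ (v i)).natDegree < D) :
    v = ∑ n ∈ Finset.range D, x ^ n • (fun i => (V.ψ (v i)).coeff n) := by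
  ext i
  rw [Finset.sum_apply]
  conv_lhs => rw [← V.hev (v i), eval_eq_sum_range' (hD i)]
  exact Finset.sum_congr rfl fun n _ => by simp [mul_comm]

theorem VarS.bound (v : ι → S) : ∃ D, ∀ i, (V.ψ (v i)).natDegree < D := by
  refine ⟨(Finset.univ.sup fun i => (V.ψ (v i)).natDegree) + 1, fun i => ?_⟩
  exact Nat.lt_succ_of_le (Finset.le_sup (f := fun i => (V.ψ (v i)).natDegree) (Finset.mem_univ i))

include alt hN hg

theorem lemX (hub : ∀ i, ω ub (Pi.single i 1) ∈ V.R) (he : ∀ i, ω e (Pi.single i 1) ∈ V.R)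
    (hgR : g ∈ V.R) (hEx : Ex ω N g e) (hnz : nzd (ω ub e) (Ideal.span {g})) :
    Ex ω N g (ub + x • e) := by
  intro v hv
  obtain ⟨D, hD⟩ := V.bound v
  have key := V.span_coeff hgR hv
  have := coreX alt hN hg x hEx hnz D (fun n i => (V.ψ (v i)).coeff n)
    (by intro n hn; ext i; exact coeff_eq_zero_of_natDegree_lt ((hD i).trans hn))
    (by
      have := key 0
      simp only [map_add, map_smul, LinearMap.add_apply, LinearMap.smul_apply, smul_eq_mul,
        map_mul, V.hx, coeff_add, coeff_X_mul_zero, add_zero] at this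
      rwa [V.coeff_om hub] at this)
    (by
      intro n
      have := key (n+1)
      simp only [map_add, map_smul, LinearMap.add_apply, LinearMap.smul_apply, smul_eq_mul,
        map_mul, V.hx, coeff_add, coeff_X_mul] at this
      rwa [V.coeff_om hub, V.coeff_om he] at this)
  rwa [← V.sum_vec v (D+1) (fun i => (hD i).trans (Nat.lt_succ_self _))] at this

theorem lemY {c : S} (hc : c ∈ V.R) (hub : ∀ i, ω ub (Pi.single i 1) ∈ V.R)
    (he : ∀ i, ω e (Pi.single i 1) ∈ V.R)
    (hgR : g ∈ V.R) (hEx : Ex ω N g e) (hcL : nzd c (Lu ω g e)) (hcg : nzd c (Ideal.span {g}))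
    (hnz : nzd (ω ub e) (Ideal.span {c, g})) : nzd c (Lu ω g (ub + x • e)) := by
  intro a ha
  rw [mem_Lu] at ha
  obtain ⟨v, hv⟩ := ha
  obtain ⟨D, hD⟩ := V.bound v
  have key := V.span_coeff hgR hv
  let B := max (D + 2) ((V.ψ a).natDegree + 1)
  have := coreY alt hN hg x hEx hcL hcg hnz B D (by omega) (fun n i => (V.ψ (v i)).coeff n)
    (fun n => (V.ψ a).coeff n)
    (by intro n hn; ext i; exact coeff_eq_zero_of_natDegree_lt ((hD i).trans hn))
    (by
      have := key 0
      simp only [map_add, map_sub, map_smul, LinearMap.add_apply, LinearMap.smul_apply, smul_eq_mul,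
        map_mul, V.hx, coeff_add, coeff_sub, coeff_X_mul_zero, add_zero, V.mem.1 hc,
        coeff_mul_C] at this
      rwa [V.coeff_om hub, mul_comm] at this)
    (by
      intro n
      have := key (n+1)
      simp only [map_add, map_sub, map_smul, LinearMap.add_apply, LinearMap.smul_apply, smul_eq_mul,
        map_mul, V.hx, coeff_add, coeff_sub, coeff_X_mul, V.mem.1 hc, coeff_mul_C] at this
      rwa [V.coeff_om hub, V.coeff_om he, mul_comm, ← sub_sub] at this)
  have e : a = ∑ n ∈ Finset.range B, x ^ n * (V.ψ a).coeff n := by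
    conv_lhs => rw [← V.hev a, eval_eq_sum_range' (n := B) (by omega)]
    exact Finset.sum_congr rfl fun n _ => by ring
  rwa [← e] at this
end transport
end B
end PfReg

end FilePB

section FilePA
set_option linter.unusedSectionVars false
namespace PfReg

section A
variable {S : Type*} [CommRing S] {ι : Type*} [Fintype ι] [DecidableEq ι]

abbrev Lam (S : Type*) [CommRing S] (ι : Type*) := ExteriorAlgebra S (ι →₀ S)

noncomputable def cv : (ι → S) →ₗ[S] Module.Dual S (ι →₀ S) where
  toFun d := Finsupp.linearCombination S d
  map_add' d d' := by ext; simp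
  map_smul' s d := by ext; simp

theorem cv_single (d : ι → S) (i : ι) : cv d (Finsupp.single i 1) = d i := by simp [cv]

noncomputable def ee (i : ι) : Lam S ι := ExteriorAlgebra.ι S (Finsupp.single i 1)

noncomputable def ctr : (ι → S) →ₗ[S] (Lam S ι →ₗ[S] Lam S ι) :=
  (CliffordAlgebra.contractLeft (Q := (0 : QuadraticForm S (ι →₀ S)))) ∘ₗ cv

theorem ctr_mul (d : ι → S) (i : ι) (x : Lam S ι) :
    ctr d (ee i * x) = d i • x - ee i * ctr d x := by
  have := CliffordAlgebra.contractLeft_ι_mul (Q := (0 : QuadraticForm S (ι →₀ S)))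
    (cv d) (Finsupp.single i 1) x
  rw [cv_single] at this
  exact this

theorem ctr_one (d : ι → S) : ctr d (1 : Lam S ι) = 0 :=
  CliffordAlgebra.contractLeft_one (Q := (0 : QuadraticForm S (ι →₀ S))) (cv d)

theorem ctr_ctr (d : ι → S) (x : Lam S ι) : ctr d (ctr d x) = 0 :=
  CliffordAlgebra.contractLeft_contractLeft (Q := (0 : QuadraticForm S (ι →₀ S))) (cv d) x

theorem ctr_comm (d d' : ι → S) (x : Lam S ι) : ctr d (ctr d' x) = - ctr d' (ctr d x) :=
  CliffordAlgebra.contractLeft_comm (Q := (0 : QuadraticForm S (ι →₀ S))) _ _ x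

theorem ee_sq (i : ι) (x : Lam S ι) : ee i * (ee i * x) = 0 := by
  rw [← mul_assoc]; unfold ee; rw [ExteriorAlgebra.ι_sq_zero, zero_mul]

theorem ee_swap (i j : ι) (x : Lam S ι) : ee i * (ee j * x) = - (ee j * (ee i * x)) := by
  rw [← mul_assoc, ← mul_assoc, ← neg_mul]
  congr 1
  exact eq_neg_of_add_eq_zero_left (ExteriorAlgebra.ι_add_mul_swap _ _)

structure Alt (M : ι → ι → S) : Prop where
  diag : ∀ i, M i i = 0
  skew : ∀ i j, M i j = - M j i

noncomputable def BM (M : ι → ι → S) : LinearMap.BilinForm S (ι →₀ S) :=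
  Finsupp.linearCombination S (fun i => - cv (M i))

theorem BM_quad {M : ι → ι → S} (hM : Alt M) :
    (BM M).toQuadraticMap = (0 : QuadraticForm S (ι →₀ S)) - 0 := by
  ext x
  have h : ∀ x y, BM M x y = - BM M y x := by
    intro x y
    have : BM M = - (BM M).flip := by
      ext i j; simp [BM, cv_single, hM.skew i j]
    conv_lhs => rw [this]
    simp
  change BM M x x = 0 - 0
  rw [sub_zero]
  induction x using Finsupp.induction_linear with
  | zero => simp
  | add x y hx hy => simp [hx, hy, h x y]
  | single i s =>
    have : Finsupp.single i s = s • Finsupp.single i (1 : S) := by simp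
    rw [this]; simp only [map_smul, LinearMap.smul_apply]
    simp [BM, cv_single, hM.diag]

open Classical in
noncomputable def Ph (M : ι → ι → S) : Lam S ι →ₗ[S] S :=
  if hM : Alt M then (ExteriorAlgebra.algebraMapInv (R := S) (M := ι →₀ S)).toLinearMap ∘ₗ
    (CliffordAlgebra.changeForm (BM_quad hM)) else 0

theorem Ph_one {M : ι → ι → S} (hM : Alt M) : Ph M 1 = 1 := by
  rw [Ph, dif_pos hM]
  simp only [LinearMap.comp_apply, CliffordAlgebra.changeForm_one]
  exact map_one (ExteriorAlgebra.algebraMapInv (R := S) (M := ι →₀ S))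

theorem Ph_mul {M : ι → ι → S} (hM : Alt M) (a : ι) (x : Lam S ι) :
    Ph M (ee a * x) = Ph M (ctr (M a) x) := by
  rw [Ph, dif_pos hM]
  simp only [LinearMap.comp_apply]
  have h1 := CliffordAlgebra.changeForm_ι_mul (BM_quad hM) (Finsupp.single a 1) x
  have h2 : BM M (Finsupp.single a 1) = - cv (M a) := by simp [BM]
  rw [h2] at h1
  have h3 : CliffordAlgebra.changeForm (BM_quad hM) (ctr (M a) x) =
     CliffordAlgebra.contractLeft (Q := 0) (cv (M a)) (CliffordAlgebra.changeForm (BM_quad hM) x) :=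
    CliffordAlgebra.changeForm_contractLeft (BM_quad hM) _ x
  rw [h3]
  have h4 : CliffordAlgebra.changeForm (BM_quad hM) (ee a * x) =
     ee a * CliffordAlgebra.changeForm (BM_quad hM) x +
     CliffordAlgebra.contractLeft (Q := 0) (cv (M a)) (CliffordAlgebra.changeForm (BM_quad hM) x) := by
    refine h1.trans ?_
    simp [ee]
  rw [h4, map_add]
  have : (ExteriorAlgebra.algebraMapInv.toLinearMap : Lam S ι →ₗ[S] S)
     (ee a * CliffordAlgebra.changeForm (BM_quad hM) x) = 0 := by
    simp [ee, ExteriorAlgebra.algebraMapInv]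
  rw [this, zero_add]

noncomputable def zl (l : List ι) : Lam S ι := (l.map ee).prod
@[simp] theorem zl_nil : zl ([] : List ι) = (1 : Lam S ι) := rfl
@[simp] theorem zl_cons (a : ι) (l : List ι) : zl (a :: l) = (ee a * zl l : Lam S ι) := by
  simp [zl]

theorem ee_zl {a : ι} {l : List ι} (h : a ∈ l) : ee a * zl l = (0 : Lam S ι) := by
  induction l with
  | nil => simp at h
  | cons b l ih =>
    rw [zl_cons]
    by_cases hab : a = b
    · subst hab; exact ee_sq _ _
    · rw [ee_swap, ih (by simpa [hab] using h)]; simp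

theorem ctr_congr {d d' : ι → S} {l : List ι} (h : ∀ i ∈ l, d i = d' i) :
    ctr d (zl l) = ctr d' (zl l) := by
  induction l with
  | nil => simp [ctr_one]
  | cons b l ih =>
    rw [zl_cons, ctr_mul, ctr_mul, ih (fun i hi => h i (by simp [hi])), h b (by simp)]

variable (M : ι → ι → S)
noncomputable def pf (l : List ι) : S := Ph M (zl l)

noncomputable def om (l : List ι) : (ι → S) →ₗ[S] (ι → S) →ₗ[S] S :=
  LinearMap.mk₂ S (fun u v => Ph M (ctr u (ctr v (zl l)))) (by intros; simp) (by intros; simp)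
    (by intros; simp) (by intros; simp)

theorem om_def (l : List ι) (u v : ι → S) : om M l u v = Ph M (ctr u (ctr v (zl l))) := rfl

theorem om_alt (l : List ι) (u : ι → S) : om M l u u = 0 := by rw [om_def, ctr_ctr, map_zero]
theorem om_skew (l : List ι) (u v : ι → S) : om M l u v = - om M l v u := by
  rw [om_def, ctr_comm, map_neg, om_def]

variable {M} (hM : Alt M)
include hM
theorem pf_nil : pf M [] = 1 := Ph_one hM
theorem pf_cons (a : ι) (l : List ι) : pf M (a :: l) = Ph M (ctr (M a) (zl l)) := by
  rw [pf, zl_cons, Ph_mul hM]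

theorem om_row {l : List ι} {a : ι} (ha : a ∈ l) (v : ι → S) : om M l v (M a) = - (v a * pf M l) := by
  rw [om_skew, om_def, ← Ph_mul hM]
  have : ee a * ctr v (zl l) = v a • zl l - ctr v (ee a * zl l) := by rw [ctr_mul]; abel
  rw [this, ee_zl ha]; simp [pf]

theorem Ph_ctr_cons (v : ι → S) (a : ι) (l : List ι) :
    Ph M (ctr v (zl (a :: l))) = v a * pf M l - om M l (M a) v := by
  rw [zl_cons, ctr_mul, map_sub, Ph_mul hM]; simp [pf, om_def]

/-- pf (a::b::l) = M a b * pf l - ω_l(M_b, M_a) -/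
theorem pf_cons2 (a b : ι) (l : List ι) : pf M (a :: b :: l) = M a b * pf M l - om M l (M b) (M a) := by
  rw [pf_cons hM, Ph_ctr_cons hM]
omit hM

theorem pf_swap (a b : ι) (l : List ι) : pf M (a :: b :: l) = - pf M (b :: a :: l) := by
  simp only [pf, zl_cons]; rw [ee_swap, map_neg]

/-- sign-permutation of lists -/
theorem zl_perm {l l' : List ι} (h : l.Perm l') :
    (zl l : Lam S ι) = zl l' ∨ (zl l : Lam S ι) = - zl l' := by
  induction h with
  | nil => simp
  | cons x _ ih => rcases ih with h | h <;> simp [h]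
  | swap x y l => right; simp only [zl_cons]; rw [ee_swap]
  | trans _ _ ih1 ih2 =>
    rcases ih1 with h | h <;> rcases ih2 with h' | h' <;> simp [h, h']

/-- x-freeness -/
noncomputable def NR (R : Subring S) (l : List ι) : AddSubgroup (Lam S ι) :=
  AddSubgroup.closure {y | ∃ r ∈ R, ∃ s, List.Sublist s l ∧ y = r • zl s}

theorem NR_mono {R : Subring S} {l l' : List ι} (h : List.Sublist l l') : NR R l ≤ NR R l' :=
  AddSubgroup.closure_mono fun _ ⟨r, hr, s, hs, e⟩ => ⟨r, hr, s, hs.trans h, e⟩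

theorem NR_zl (R : Subring S) (l : List ι) : zl l ∈ NR R l :=
  AddSubgroup.subset_closure ⟨1, R.one_mem, l, List.Sublist.refl l, by simp⟩

theorem NR_smul {R : Subring S} {l : List ι} {r : S} (hr : r ∈ R) {y : Lam S ι} (hy : y ∈ NR R l) :
    r • y ∈ NR R l := by
  induction hy using AddSubgroup.closure_induction with
  | mem y h =>
    obtain ⟨r', hr', s, hs, rfl⟩ := h
    exact AddSubgroup.subset_closure ⟨r * r', R.mul_mem hr hr', s, hs, by rw [mul_smul]⟩
  | zero => simp
  | add x y _ _ h1 h2 => rw [smul_add]; exact add_mem h1 h2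
  | neg x _ h => rw [smul_neg]; exact neg_mem h

theorem NR_mul {R : Subring S} {l : List ι} (a : ι) {y : Lam S ι} (hy : y ∈ NR R l) :
    ee a * y ∈ NR R (a :: l) := by
  induction hy using AddSubgroup.closure_induction with
  | mem y h =>
    obtain ⟨r', hr', s, hs, rfl⟩ := h
    exact AddSubgroup.subset_closure ⟨r', hr', a :: s, hs.cons_cons a, by simp⟩
  | zero => simp
  | add x y _ _ h1 h2 => rw [mul_add]; exact add_mem h1 h2
  | neg x _ h => rw [mul_neg]; exact neg_mem h

theorem NR_ctr_zl {R : Subring S} {d : ι → S} : ∀ {l : List ι}, (∀ i ∈ l, d i ∈ R) →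
    ctr d (zl l) ∈ NR R l := by
  intro l
  induction l with
  | nil => simp [ctr_one]
  | cons a l ih =>
    intro h
    rw [zl_cons, ctr_mul]
    exact sub_mem (NR_smul (h a (by simp)) (NR_mono (List.sublist_cons_self a l) (NR_zl R l)))
      (NR_mul a (ih fun i hi => h i (by simp [hi])))

theorem NR_ctr {R : Subring S} {d : ι → S} {l : List ι} (h : ∀ i ∈ l, d i ∈ R) {y : Lam S ι}
    (hy : y ∈ NR R l) : ctr d y ∈ NR R l := by
  induction hy using AddSubgroup.closure_induction with
  | mem y hh =>
    obtain ⟨r', hr', s, hs, rfl⟩ := hh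
    rw [map_smul]
    exact NR_smul hr' (NR_mono hs (NR_ctr_zl fun i hi => h i (hs.subset hi)))
  | zero => simp
  | add x y _ _ h1 h2 => rw [map_add]; exact add_mem h1 h2
  | neg x _ h => rw [map_neg]; exact neg_mem h

include hM
theorem pf_mem {R : Subring S} : ∀ {l : List ι}, (∀ a ∈ l, ∀ b ∈ l, M a b ∈ R) →
    pf M l ∈ R ∧ ∀ y ∈ NR R l, Ph M y ∈ R := by
  intro l
  induction hn : l.length using Nat.strong_induction_on generalizing l with
  | _ n ih =>
  intro h
  have hp : pf M l ∈ R := by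
    cases l with
    | nil => rw [pf_nil hM]; exact R.one_mem
    | cons a l =>
      rw [pf_cons hM]
      refine (ih l.length (by simp [← hn]) rfl
        (fun a ha b hb => h a (by simp [ha]) b (by simp [hb]))).2 _ (NR_ctr_zl fun i hi => ?_)
      exact h a (by simp) i (by simp [hi])
  refine ⟨hp, fun y hy => ?_⟩
  induction hy using AddSubgroup.closure_induction with
  | mem y hh =>
    obtain ⟨r', hr', s, hs, rfl⟩ := hh
    rw [map_smul]
    refine R.mul_mem hr' ?_
    by_cases hl : s.length = l.length
    · rw [hs.eq_of_length hl]; exact hp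
    · exact (ih s.length (by have := hs.length_le; omega) rfl
        (fun a ha b hb => h a (hs.subset ha) b (hs.subset hb))).1
  | zero => simp
  | add x y _ _ h1 h2 => rw [map_add]; exact add_mem h1 h2
  | neg x _ h => rw [map_neg]; exact neg_mem h

theorem om_mem {R : Subring S} {l : List ι} (h : ∀ a ∈ l, ∀ b ∈ l, M a b ∈ R) {u v : ι → S}
    (hu : ∀ i ∈ l, u i ∈ R) (hv : ∀ i ∈ l, v i ∈ R) : om M l u v ∈ R :=
  (pf_mem hM h).2 _ (NR_ctr hu (NR_ctr hv (NR_zl R l)))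

theorem Phctr_mem {R : Subring S} {l : List ι} (h : ∀ a ∈ l, ∀ b ∈ l, M a b ∈ R) {u : ι → S}
    (hu : ∀ i ∈ l, u i ∈ R) : Ph M (ctr u (zl l)) ∈ R :=
  (pf_mem hM h).2 _ (NR_ctr hu (NR_zl R l))
omit hM

theorem om_congr {l : List ι} {u v u' v' : ι → S} (hu : ∀ i ∈ l, u i = u' i)
    (hv : ∀ i ∈ l, v i = v' i) : om M l u v = om M l u' v' := by
  rw [om_def, ctr_congr hv, ctr_comm, ctr_congr hu, ctr_comm, neg_neg]; rfl

/-- the image of `Z` -/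
def NZ (M : ι → ι → S) (l : List ι) : Submodule S (ι → S) :=
  Submodule.span S {v | (∃ a ∈ l, v = M a) ∨ ∀ i ∈ l, v i = 0}

include hM
theorem NZ_om {l : List ι} (u : ι → S) : ∀ v ∈ NZ M l, om M l u v ∈ Ideal.span {pf M l} := by
  intro v hv
  have : NZ M l ≤ Submodule.comap (om M l u) (Ideal.span {pf M l}) := by
    rw [NZ, Submodule.span_le]
    rintro v (⟨a, ha, rfl⟩ | h)
    · change om M l u (M a) ∈ Ideal.span {pf M l}
      rw [om_row hM ha]
      exact neg_mem (Ideal.mul_mem_left _ _ (Ideal.mem_span_singleton_self _))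
    · change om M l u v ∈ Ideal.span {pf M l}
      rw [om_def, ctr_congr (d' := 0) (by simpa using h)]; simp
  exact this hv

theorem NZ_g {l : List ι} (v : ι → S) : pf M l • v ∈ NZ M l := by
  have key : pf M l • v = (∑ b ∈ l.toFinset, om M l v (Pi.single b 1) • M b) +
      (pf M l • v - (∑ b ∈ l.toFinset, om M l v (Pi.single b 1) • M b)) := by abel
  rw [key]
  refine add_mem (Submodule.sum_mem _ fun b hb => Submodule.smul_mem _ _
    (Submodule.subset_span (Or.inl ⟨b, by simpa using hb, rfl⟩))) (Submodule.subset_span (Or.inr ?_))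
  intro a ha
  have h1 := om_row hM ha v
  have h2 : om M l v (M a) = om M l v (∑ b ∈ l.toFinset, M a b • Pi.single b 1) := by
    apply om_congr (fun _ _ => rfl)
    intro i hi
    rw [Finset.sum_apply, Finset.sum_eq_single i]
    · simp
    · intro b _ hb; simp [Ne.symm hb]
    · intro h; simp at h; exact absurd hi h
  rw [h2, map_sum] at h1
  simp only [Pi.sub_apply, Pi.smul_apply, Finset.sum_apply, smul_eq_mul]
  rw [sub_eq_zero, mul_comm]
  have h3 : v a * pf M l = - ∑ b ∈ l.toFinset, (om M l v) (M a b • Pi.single b 1) := by rw [h1]; simp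
  rw [h3, ← Finset.sum_neg_distrib]
  refine Finset.sum_congr rfl fun b _ => ?_
  rw [map_smul, hM.skew a b]; simp [mul_comm]
omit hM
end A
end PfReg

end FilePA

section FilePC
set_option linter.unusedSectionVars false
namespace PfReg

section A2
variable {S : Type*} [CommRing S] {ι : Type*} [Fintype ι] [DecidableEq ι]

theorem ctr_ofFn (d : ι → S) : ∀ (n : ℕ) (f : Fin (n+1) → ι), ctr d (zl (List.ofFn f)) =
    ∑ j : Fin (n+1), ((-1 : S) ^ (j : ℕ) * d (f j)) • zl (List.ofFn (fun k => f (j.succAbove k))) := by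
  intro n
  induction n with
  | zero => intro f; have := ctr_mul d (f 0) 1; simp [List.ofFn_succ, ctr_one] at this ⊢; exact this
  | succ n ih =>
    intro f
    rw [List.ofFn_succ, zl_cons, ctr_mul, ih, sub_eq_add_neg, Finset.mul_sum,
      ← Finset.sum_neg_distrib]
    conv_rhs => rw [Fin.sum_univ_succ]
    congr 1
    · simp
    · refine Finset.sum_congr rfl fun j _ => ?_
      rw [List.ofFn_succ (f := fun k => f (j.succ.succAbove k)), zl_cons]
      simp [pow_succ]

theorem pfaffian_eq {M : ι → ι → S} (hM : Alt M) : ∀ (n : ℕ) (f : Fin n → ι),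
    pfaffian n (Matrix.of fun i j => M (f i) (f j)) = pf M (List.ofFn f) := by
  intro n
  induction n using Nat.strong_induction_on with
  | _ n ih =>
  intro f
  match n with
  | 0 => simp [pfaffian, pf_nil hM]
  | 1 => simp [pfaffian, List.ofFn_succ, pf_cons hM, ctr_one]
  | n+2 =>
    rw [List.ofFn_succ, pf_cons hM, ctr_ofFn, map_sum, pfaffian]
    refine Finset.sum_congr rfl fun j _ => ?_
    rw [map_smul, smul_eq_mul]
    congr 1
    exact ih n (by omega) (fun k => f (j.succAbove k).succ)

theorem pfaffian_map {S' : Type*} [CommRing S'] (φ : S →+* S') : ∀ (n : ℕ)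
    (M : Matrix (Fin n) (Fin n) S), φ (pfaffian n M) = pfaffian n (M.map φ) := by
  intro n
  induction n using Nat.strong_induction_on with
  | _ n ih =>
  intro M
  match n with
  | 0 => simp [pfaffian]
  | 1 => simp [pfaffian]
  | n+2 =>
    simp only [pfaffian, map_sum, map_mul, map_pow, map_neg, map_one]
    refine Finset.sum_congr rfl fun j _ => ?_
    rw [ih n (by omega)]; rfl
end A2

section C
variable {S : Type*} [CommRing S] [IsDomain S] {ι : Type*} [Fintype ι] [DecidableEq ι]

structure Gen (M : ι → ι → S) where
  G : ι → ι → Prop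
  ne : ∀ {i j}, G i j → i ≠ j
  symm : ∀ {i j}, G i j → G j i
  alt : Alt M
  V : ∀ i j, G i j → VarS (M i j)
  free : ∀ i j (h : G i j) a b, ¬ (a = i ∧ b = j) → ¬ (a = j ∧ b = i) → M a b ∈ (V i j h).R

variable {M : ι → ι → S} (𝒢 : Gen M)

def Gen.gl (l : List ι) : Prop := l.Pairwise 𝒢.G

theorem Gen.gl_perm {l l' : List ι} (h : l.Perm l') (hl : 𝒢.gl l) : 𝒢.gl l' :=
  (h.pairwise_iff (fun h => 𝒢.symm h)).1 hl

variable {𝒢}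
theorem Gen.fr {a b : ι} (h : 𝒢.G a b) {l : List ι} (hl : a ∉ l ∨ b ∉ l) :
    ∀ c ∈ l, ∀ d ∈ l, M c d ∈ (𝒢.V a b h).R := by
  intro c hc d hd
  apply 𝒢.free
  · rintro ⟨rfl, rfl⟩; tauto
  · rintro ⟨rfl, rfl⟩; tauto

theorem Gen.fr_pf {a b : ι} (h : 𝒢.G a b) {l : List ι} (hl : a ∉ l ∨ b ∉ l) :
    pf M l ∈ (𝒢.V a b h).R := (pf_mem 𝒢.alt (Gen.fr h hl)).1

theorem Gen.nodup {l : List ι} (h : 𝒢.gl l) : l.Nodup := h.imp 𝒢.ne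

theorem Gen.split2 {a b : ι} {l : List ι} (h : 𝒢.gl (a :: b :: l)) :
    𝒢.G a b ∧ a ∉ l ∧ b ∉ l ∧ a ≠ b ∧ 𝒢.gl (a :: l) ∧ 𝒢.gl (b :: l) ∧ 𝒢.gl l := by
  have hn := Gen.nodup h
  simp only [List.nodup_cons, List.mem_cons, not_or] at hn
  have h' := h
  unfold Gen.gl at h' ⊢
  simp only [List.pairwise_cons, List.mem_cons] at h' ⊢
  refine ⟨h'.1 b (by simp), hn.1.2, hn.2.1, hn.1.1, ⟨fun c hc => h'.1 c (by simp [hc]), h'.2.2⟩,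
    h'.2, h'.2.2⟩

theorem Gen.cr {a b : ι} {l : List ι} (h : 𝒢.gl (a :: b :: l)) :
    om M l (M b) (M a) ∈ (𝒢.V a b (Gen.split2 h).1).R := by
  obtain ⟨hG, ha, hb, hab, -⟩ := Gen.split2 h
  apply om_mem 𝒢.alt (Gen.fr hG (Or.inl ha))
  · intro i hi; apply 𝒢.free
    · rintro ⟨rfl, rfl⟩; exact hab rfl
    · rintro ⟨_, rfl⟩; exact ha hi
  · intro i hi; apply 𝒢.free
    · rintro ⟨_, rfl⟩; exact hb hi
    · rintro ⟨rfl, rfl⟩; exact hab rfl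

theorem Gen.LC {a b : ι} {l : List ι} (h : 𝒢.gl (a :: b :: l)) {H : Set S}
    (hH : ∀ s ∈ H, s ∈ (𝒢.V a b (Gen.split2 h).1).R) (hc : nzd (pf M l) (Ideal.span H)) :
    nzd (pf M (a :: b :: l)) (Ideal.span H) := by
  obtain ⟨hG, ha, hb, hab, -⟩ := Gen.split2 h
  refine (𝒢.V a b hG).LC hH (c := pf M l) (r := - om M l (M b) (M a)) ?_
    (Gen.fr_pf hG (Or.inl ha)) (neg_mem (Gen.cr h)) hc
  rw [pf_cons2 𝒢.alt]; ring

theorem pf_swap2 (a b c : ι) (l : List ι) : pf M (a :: b :: c :: l) = - pf M (a :: c :: b :: l) := by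
  simp only [pf, zl_cons]; rw [ee_swap b c]; simp

theorem pf_rot (a b c d : ι) (l : List ι) : pf M (a :: b :: c :: d :: l) = pf M (a :: d :: b :: c :: l) := by
  simp only [pf, zl_cons]; rw [ee_swap c d, mul_neg, ee_swap b d]; simp

theorem Gen.K0 : ∀ (n : ℕ) (l : List ι), l.length = 2 * n → 𝒢.gl l → pf M l ≠ 0 := by
  intro n
  induction n with
  | zero => intro l hl _; rw [List.length_eq_zero_iff.1 hl, pf_nil 𝒢.alt]; exact one_ne_zero
  | succ n ih =>
    intro l hl hg
    match l with
    | a :: b :: l =>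
    obtain ⟨hG, ha, hb, hab, -, -, hl0⟩ := Gen.split2 hg
    intro h0
    apply ih l (by simp at hl; omega) hl0
    have h1 : (𝒢.V a b hG).ψ (pf M (a :: b :: l)) = Polynomial.X * Polynomial.C (pf M l)
        - Polynomial.C (om M l (M b) (M a)) := by
      rw [pf_cons2 𝒢.alt, map_sub, map_mul, (𝒢.V a b hG).hx,
        (𝒢.V a b hG).mem.1 (Gen.fr_pf hG (Or.inl ha)), (𝒢.V a b hG).mem.1 (Gen.cr hg)]
    rw [h0, map_zero] at h1
    have := congrArg (fun p => p.coeff 1) h1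
    simpa [Polynomial.coeff_C] using this.symm

theorem Gen.K2_of {n : ℕ} (K1 : ∀ (a b : ι) (l : List ι), l.length = 2 * n → 𝒢.gl (a :: b :: l) →
      nzd (pf M l) (Ideal.span {pf M (a :: b :: l)})) {a b c : ι} {l : List ι}
    (hn : l.length = 2 * n) (h : 𝒢.gl (a :: b :: c :: l)) :
    nzd (pf M (b :: c :: l)) (Ideal.span {pf M (a :: c :: l)}) := by
  obtain ⟨hG, ha, hb, hab, h1, h2, h3⟩ := Gen.split2 h
  apply Gen.LC h2
  · rintro s rfl
    apply Gen.fr_pf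
    left; simp only [List.mem_cons, not_or] at hb ⊢; exact ⟨hab.symm, hb⟩
  · exact K1 a c l hn h1

theorem Gen.K1 : ∀ (n : ℕ) (a b : ι) (l : List ι), l.length = 2 * n → 𝒢.gl (a :: b :: l) →
      nzd (pf M l) (Ideal.span {pf M (a :: b :: l)}) := by
  intro n
  induction n with
  | zero =>
    intro a b l hl _
    rw [List.length_eq_zero_iff.1 hl, pf_nil 𝒢.alt]; exact nzd_unit isUnit_one _
  | succ n ih =>
    intro a b l hl h
    match l with
    | c :: d :: l =>
    have hln : l.length = 2 * n := by simp at hl; omega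
    obtain ⟨hG, ha, hb, hab, h1, h2, h3⟩ := Gen.split2 h
    apply nzd_sym (Gen.K0 (n+1) _ hl h3)
    rw [pf_swap2]
    apply nzd_neg
    have hp : (a :: b :: c :: d :: l).Perm (a :: c :: b :: d :: l) := (List.Perm.swap c b _).cons a
    apply Gen.LC (𝒢.gl_perm hp h)
    · rintro s rfl
      exact Gen.fr_pf _ (Or.inl ha)
    · exact Gen.K2_of ih hln (𝒢.gl_perm (List.Perm.swap c b _) h2)

theorem Gen.K2 {n : ℕ} {a b c : ι} {l : List ι}
    (hn : l.length = 2 * n) (h : 𝒢.gl (a :: b :: c :: l)) :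
    nzd (pf M (b :: c :: l)) (Ideal.span {pf M (a :: c :: l)}) := Gen.K2_of (Gen.K1 n) hn h

theorem Gen.C3_of {n : ℕ} (TRI : ∀ (a b c : ι) (l : List ι), l.length = 2 * n →
      𝒢.gl (a :: b :: c :: l) →
      nzd (pf M (a :: b :: l)) (Ideal.span {pf M (b :: c :: l), pf M (a :: c :: l)}))
    {b c d e : ι} {l : List ι} (hn : l.length = 2 * n) (h : 𝒢.gl (b :: c :: d :: e :: l)) :
    nzd (pf M (c :: e :: l)) (Ideal.span {pf M (d :: e :: l), pf M (b :: c :: d :: e :: l)}) := by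
  obtain ⟨hG, hb, hc, hbc, h1, h2, h3⟩ := Gen.split2 h
  apply nzd_perm
  · exact Gen.K2 hn (𝒢.gl_perm (List.Perm.swap d c _) h2)
  · rw [pf_rot]
    have hp : (b :: c :: d :: e :: l).Perm (b :: e :: c :: d :: l) :=
      (((List.Perm.swap e d _).cons c).trans (List.Perm.swap e c _)).cons b
    apply Gen.LC (𝒢.gl_perm hp h)
    · rintro s (rfl | rfl)
      · exact Gen.fr_pf _ (Or.inl hb)
      · apply Gen.fr_pf; left
        simp only [List.mem_cons, not_or] at hb ⊢; exact ⟨hbc, hb.2⟩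
    · exact TRI c d e l hn h2

theorem Gen.TRI : ∀ (n : ℕ) (a b c : ι) (l : List ι), l.length = 2 * n →
      𝒢.gl (a :: b :: c :: l) →
      nzd (pf M (a :: b :: l)) (Ideal.span {pf M (b :: c :: l), pf M (a :: c :: l)}) := by
  intro n
  induction n with
  | zero =>
    intro a b c l hl h
    obtain ⟨hG, ha, hb, hab, h1, h2, h3⟩ := Gen.split2 h
    rw [List.length_eq_zero_iff.1 hl] at *
    have hp : [a, b, c].Perm [c, a, b] := by
      exact ((List.Perm.swap c b _).cons a).trans (List.Perm.swap c a _)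
    apply Gen.LC (Gen.split2 (𝒢.gl_perm hp h)).2.2.2.2.2.1
    · simp only [List.mem_cons, not_or] at ha hb
      rintro s (rfl | rfl)
      · apply Gen.fr_pf; left; simp; exact ⟨hab, ha.1⟩
      · apply Gen.fr_pf; right; simp; exact ⟨hab.symm, hb.1⟩
    · rw [pf_nil 𝒢.alt]; exact nzd_unit isUnit_one _
  | succ n ih =>
    intro a b c l hl h
    match l with
    | d :: e :: l =>
    have hln : l.length = 2 * n := by simp at hl; omega
    obtain ⟨hG, ha, hb, hab, h1, h2, h3⟩ := Gen.split2 h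
    have hp : (a :: b :: c :: d :: e :: l).Perm (c :: a :: b :: d :: e :: l) :=
      ((List.Perm.swap c b _).cons a).trans (List.Perm.swap c a _)
    apply Gen.LC (Gen.split2 (𝒢.gl_perm hp h)).2.2.2.2.2.1
    · simp only [List.mem_cons, not_or] at ha hb
      rintro s (rfl | rfl)
      · apply Gen.fr_pf; left; simp; tauto
      · apply Gen.fr_pf; right; simp; tauto
    · apply nzd_perm
      · exact Gen.K1 (n+1) b c _ hl h2
      · rw [pf_swap2]
        apply nzd_neg
        have hp : (a :: c :: d :: e :: l).Perm (a :: d :: c :: e :: l) :=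
          (List.Perm.swap d c _).cons a
        apply Gen.LC (𝒢.gl_perm hp h1)
        · simp only [List.mem_cons, not_or] at ha hb
          rintro s (rfl | rfl)
          · apply Gen.fr_pf; left; simp; tauto
          · apply Gen.fr_pf; left; simp; tauto
        · rw [Set.pair_comm]
          exact Gen.C3_of ih hln h2

theorem Gen.C3 {n : ℕ} {b c d e : ι} {l : List ι} (hn : l.length = 2 * n)
    (h : 𝒢.gl (b :: c :: d :: e :: l)) :
    nzd (pf M (c :: e :: l)) (Ideal.span {pf M (d :: e :: l), pf M (b :: c :: d :: e :: l)}) :=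
  Gen.C3_of (Gen.TRI n) hn h
end C
end PfReg

end FilePC

section FilePE
set_option linter.unusedSectionVars false
namespace PfReg

section C2
variable {S : Type*} [CommRing S] [IsDomain S] {ι : Type*} [Fintype ι] [DecidableEq ι]
variable {M : ι → ι → S} {𝒢 : Gen M}

/-- dual basis covector -/
abbrev dl (i : ι) : ι → S := Pi.single i 1

theorem dl_mem (R : Subring S) (i j : ι) : (dl i : ι → S) j ∈ R := by
  by_cases h : j = i
  · subst h; simp [R.one_mem]
  · simp [h, R.zero_mem]

theorem upd (u : ι → S) (s : ι) : Function.update u s 0 + u s • dl s = u := by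
  ext i
  by_cases h : i = s
  · subst h; simp
  · simp [h]

theorem upd' (u : ι → S) (s : ι) : Function.update u s 0 = u - u s • dl s := by
  rw [eq_sub_iff_add_eq, upd]

theorem ctr_dl {i : ι} {l : List ι} (h : i ∉ l) : ctr (dl i : ι → S) (zl l) = 0 := by
  rw [ctr_congr (d' := 0)]
  · simp
  · intro j hj; simp [show j ≠ i from fun e => h (e ▸ hj)]

theorem ctr_dl_cons {i : ι} {l : List ι} (h : i ∉ l) : ctr (dl i : ι → S) (zl (i :: l)) = zl l := by
  rw [zl_cons, ctr_mul, ctr_dl h]; simp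

theorem om_dl {s : ι} {l : List ι} (h : s ∉ l) (v : ι → S) :
    om M (s :: l) (dl s) v = - Ph M (ctr v (zl l)) := by
  rw [om_skew, om_def, ctr_dl_cons h]

theorem om_dl2 {a b : ι} {l : List ι} (h : a ∉ b :: l) (hb : b ∉ l) :
    om M (a :: b :: l) (dl a) (dl b) = - pf M l := by
  rw [om_dl h, ctr_dl_cons hb]; rfl

theorem om_perm {l l' : List ι} (h : l.Perm l') : om M l = om M l' ∨ om M l = - om M l' := by
  rcases zl_perm (S := S) h with h | h
  · left; ext u v; simp only [LinearMap.comp_apply, om_def, h]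
  · right
    apply LinearMap.ext₂; intro u v
    simp only [LinearMap.neg_apply, om_def, h]; simp

theorem pf_perm {l l' : List ι} (h : l.Perm l') : pf M l = pf M l' ∨ pf M l = - pf M l' := by
  rcases zl_perm (S := S) h with h | h
  · left; simp only [pf, h]
  · right; simp only [pf, h]; simp

theorem span_pf_perm {l l' : List ι} (h : l.Perm l') :
    Ideal.span {pf M l} = Ideal.span {pf M l'} := by
  rcases pf_perm (M := M) h with h | h
  · rw [h]
  · rw [h, Ideal.span_singleton_neg]

theorem NZ_perm {l l' : List ι} (h : l.Perm l') : NZ M l = NZ M l' := by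
  unfold NZ
  simp only [h.mem_iff]

def ExZ (M : ι → ι → S) (l : List ι) (u : ι → S) : Prop := Ex (om M l) (NZ M l) (pf M l) u

theorem ExZ_perm {l l' : List ι} (h : l.Perm l') {u : ι → S} (hl : ExZ M l u) : ExZ M l' u := by
  intro v hv
  rw [← NZ_perm h]
  apply hl v
  rw [span_pf_perm h]
  rcases om_perm (M := M) h with h | h
  · rwa [h]
  · rw [h]; exact neg_mem hv

theorem NZ_sup (b : ι) (l : List ι) : NZ M l ≤ NZ M (b :: l) ⊔ Submodule.span S {dl b} := by
  rw [NZ, Submodule.span_le]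
  rintro v (⟨a, ha, rfl⟩ | h)
  · exact Submodule.mem_sup_left (Submodule.subset_span (Or.inl ⟨a, by simp [ha], rfl⟩))
  · rw [← upd v b]
    refine Submodule.add_mem_sup (Submodule.subset_span (Or.inr ?_))
      (Submodule.smul_mem _ _ (Submodule.mem_span_singleton_self _))
    intro i hi
    by_cases hib : i = b
    · subst hib; simp
    · simp only [List.mem_cons, hib, false_or] at hi
      simp [hib, h i hi]

theorem NZ_mem {a : ι} {l : List ι} (h : a ∈ l) : M a ∈ NZ M l :=
  Submodule.subset_span (Or.inl ⟨a, h, rfl⟩)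

theorem NZ_ph {l : List ι} (hM : Alt M) : ∀ v ∈ NZ M l, Ph M (ctr v (zl l)) = 0 := by
  intro v hv
  induction hv using Submodule.span_induction with
  | mem v h =>
    rcases h with ⟨a, ha, rfl⟩ | h
    · rw [← Ph_mul hM, ee_zl ha, map_zero]
    · rw [ctr_congr (d' := 0) (by simpa using h)]; simp
  | zero => simp
  | add x y _ _ hx hy => simp [hx, hy]
  | smul s x _ hx => simp [hx]

theorem syz {n : ℕ} {b : ι} {l : List ι} (hn : l.length = 2 * n) (h : 𝒢.gl (b :: l))
    (hE : ExZ M l (M b)) {v : ι → S} (hv : Ph M (ctr v (zl (b :: l))) = 0) :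
    v ∈ NZ M (b :: l) := by
  have hbl : b ∉ l := (List.nodup_cons.1 (Gen.nodup h)).1
  have hv' := hv
  rw [Ph_ctr_cons 𝒢.alt, sub_eq_zero] at hv'
  obtain ⟨k, hk⟩ := hE v (by
    rw [← hv']; exact Ideal.mul_mem_left _ _ (Ideal.mem_span_singleton_self _))
  obtain ⟨y, hy, z, hz, hyz⟩ := Submodule.mem_sup.1 (NZ_sup b l hk)
  obtain ⟨c, rfl⟩ := Submodule.mem_span_singleton.1 hz
  have e : v = (y + k • M b) + c • dl b := by
    rw [add_right_comm, hyz]; simp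
  have hy2 : y + k • M b ∈ NZ M (b :: l) :=
    add_mem hy (Submodule.smul_mem _ _ (NZ_mem (by simp)))
  have : c * pf M l = 0 := by
    rw [e, map_add, LinearMap.add_apply, map_add, NZ_ph 𝒢.alt _ hy2, zero_add, map_smul,
      LinearMap.smul_apply, ctr_dl_cons hbl, map_smul] at hv
    exact hv
  have hc : c = 0 := (mul_eq_zero.1 this).resolve_right
    (Gen.K0 n l hn (List.pairwise_cons.1 h).2)
  rw [e, hc]; simpa using hy2

theorem Ex_dl {n : ℕ} {s b : ι} {l : List ι} (hn : l.length = 2 * n) (h : 𝒢.gl (s :: b :: l))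
    (hE : ExZ M l (M b)) : ExZ M (s :: b :: l) (dl s) := by
  have hs : s ∉ b :: l := (List.nodup_cons.1 (Gen.nodup h)).1
  intro v hv
  rw [om_dl hs, pf_cons 𝒢.alt, Ideal.mem_span_singleton'] at hv
  obtain ⟨k, hk⟩ := hv
  have h1 : Ph M (ctr (v + k • M s) (zl (b :: l))) = 0 := by
    simp only [map_add, map_smul, LinearMap.add_apply, LinearMap.smul_apply, smul_eq_mul, hk]
    ring
  have h2 := NZ_sup s _ (syz hn (Gen.split2 h).2.2.2.2.2.1 hE h1)
  obtain ⟨y, hy, z, hz, hyz⟩ := Submodule.mem_sup.1 h2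
  obtain ⟨c, rfl⟩ := Submodule.mem_span_singleton.1 hz
  refine ⟨c, ?_⟩
  have : v - c • dl s = y - k • M s := by
    rw [sub_eq_sub_iff_add_eq_add, ← hyz]
  rw [this]
  exact sub_mem hy (Submodule.smul_mem _ _ (NZ_mem (by simp)))

/-- x-freeness of a row with a hole -/
theorem Gen.row_free {a s : ι} (h : 𝒢.G a s) {u : ι → S} {i : ι} (hi : i ≠ a)
    (hu : u = Function.update (M a) s 0) : u i ∈ (𝒢.V a s h).R := by
  subst hu
  by_cases his : i = s
  · subst his; simp
  · simp only [Function.update_of_ne his]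
    apply 𝒢.free
    · rintro ⟨_, rfl⟩; exact his rfl
    · rintro ⟨_, rfl⟩; exact hi rfl

/-- LC step for a row `u` agreeing with `M a` at `b` -/
theorem Gen.LCrow {a b : ι} {Z : List ι} (hG : 𝒢.G a b) (ha : a ∉ Z) {u w : ι → S}
    (hub : u b = M a b) (hu : ∀ i ∈ Z, i ≠ b → u i ∈ (𝒢.V a b hG).R)
    (hw : ∀ i ∈ Z, w i ∈ (𝒢.V a b hG).R) {H : Set S}
    (hH : ∀ s ∈ H, s ∈ (𝒢.V a b hG).R) (hc : nzd (om M Z (dl b) w) (Ideal.span H)) :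
    nzd (om M Z u w) (Ideal.span H) := by
  refine (𝒢.V a b hG).LC hH (c := om M Z (dl b) w) (r := om M Z (Function.update u b 0) w) ?_ ?_ ?_ hc
  · conv_lhs => rw [← upd u b]
    simp [hub]; ring
  · exact om_mem 𝒢.alt (Gen.fr hG (Or.inl ha)) (fun i _ => dl_mem _ _ _) hw
  · refine om_mem 𝒢.alt (Gen.fr hG (Or.inl ha)) (fun i hi => ?_) hw
    by_cases hib : i = b
    · subst hib; simp
    · rw [Function.update_of_ne hib]; exact hu i hi hib

theorem om_up_mem {R : Subring S} (hM : Alt M) {Z : List ι} (hR : ∀ a ∈ Z, ∀ b ∈ Z, M a b ∈ R)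
    {u : ι → S} (hu : ∀ i ∈ Z, u i ∈ R) (i : ι) : om M Z u (Pi.single i 1) ∈ R :=
  om_mem hM hR hu (fun _ _ => dl_mem _ _ _)

theorem Gen.E : ∀ (n : ℕ) (a : ι) (Z : List ι), Z.length = 2 * n → 𝒢.gl (a :: Z) →
    ExZ M Z (M a) := by
  intro n
  induction n with
  | zero =>
    intro a Z hZ _ v _
    rw [List.length_eq_zero_iff.1 hZ]
    exact ⟨0, Submodule.subset_span (Or.inr (by simp))⟩
  | succ n ih =>
    intro a Z hZ h
    match Z with
    | b :: s :: l =>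
    have hln : l.length = 2 * n := by simp at hZ; omega
    obtain ⟨hG, ha, hb, hab, h1, h2, h3⟩ := Gen.split2 h
    obtain ⟨hG', ha', hs', has, h1', h2', h3'⟩ := Gen.split2 h1
    have haZ : a ∉ b :: s :: l := by simp only [List.mem_cons, not_or] at ha ⊢; exact ⟨hab, ha⟩
    have hbs : b ≠ s := by simp only [List.mem_cons, not_or] at hb; exact hb.1
    have hEx : ExZ M (b :: s :: l) (dl s) :=
      ExZ_perm (List.Perm.swap b s l)
        (Ex_dl hln (𝒢.gl_perm (List.Perm.swap s b l) h2) (ih b l hln (Gen.split2 h2).2.2.2.2.1))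
    have hne : ∀ i ∈ b :: s :: l, i ≠ a := fun i hi e => haZ (e ▸ hi)
    have hR := Gen.fr hG' (Or.inl haZ)
    have key := lemX (om_alt M (b :: s :: l)) (NZ_om 𝒢.alt) (NZ_g 𝒢.alt) (𝒢.V a s hG')
      (ub := Function.update (M a) s 0) (e := dl s)
      (om_up_mem 𝒢.alt hR (fun i hi => Gen.row_free hG' (hne i hi) rfl))
      (om_up_mem 𝒢.alt hR (fun i hi => dl_mem _ _ _))
      (Gen.fr_pf hG' (Or.inl haZ)) hEx (by
        apply Gen.LCrow hG haZ (by simp [hbs])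
        · intro i hi hib
          by_cases his : i = s
          · subst his; simp
          · rw [Function.update_of_ne his]
            apply 𝒢.free
            · rintro ⟨_, rfl⟩; exact hib rfl
            · rintro ⟨_, rfl⟩; exact hne _ hi rfl
        · exact fun i _ => dl_mem _ _ _
        · rintro s rfl; exact Gen.fr_pf _ (Or.inl haZ)
        · rw [om_dl2 hb hs']
          exact nzd_neg (Gen.K1 n b s l hln h2))
    rwa [upd] at key

/-- the ideal of "sub-Pfaffians" -/
noncomputable def Lid (M : ι → ι → S) (l : List ι) : Ideal S :=
  LinearMap.range (Ph M ∘ₗ (LinearMap.applyₗ (zl l)) ∘ₗ ctr)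

theorem mem_Lid {l : List ι} {s : S} : s ∈ Lid M l ↔ ∃ v, Ph M (ctr v (zl l)) = s := Iff.rfl

theorem Lid_perm {l l' : List ι} (h : l.Perm l') : Lid M l = Lid M l' := by
  ext s
  rw [mem_Lid, mem_Lid]
  rcases zl_perm (S := S) h with h | h
  · rw [h]
  · rw [h]
    constructor
    · rintro ⟨v, rfl⟩; exact ⟨-v, by simp⟩
    · rintro ⟨v, rfl⟩; exact ⟨-v, by simp⟩

theorem Lid_span (l : List ι) : Lid M l = Ideal.span (Set.range fun i => Ph M (ctr (dl i) (zl l))) := by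
  apply le_antisymm
  · rintro s ⟨v, rfl⟩
    rw [LinearMap.pi_apply_eq_sum_univ (Ph M ∘ₗ (LinearMap.applyₗ (zl l)) ∘ₗ ctr) v]
    refine Ideal.sum_mem _ fun i _ => Ideal.mul_mem_left _ _ (Ideal.subset_span ⟨i, ?_⟩)
    have : (fun j => if i = j then (1:S) else 0) = dl i := by
      ext j; by_cases h : i = j
      · subst h; simp
      · simp [h, Ne.symm h]
    rw [this]; rfl
  · rw [Ideal.span_le]
    rintro s ⟨i, rfl⟩
    exact ⟨dl i, rfl⟩

theorem Lu_row (hM : Alt M) {a : ι} {Z : List ι} (ha : a ∉ Z) :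
    Lu (om M Z) (pf M Z) (M a) = Lid M (a :: Z) := by
  ext s
  rw [mem_Lu, mem_Lid]
  constructor
  · rintro ⟨v, hv⟩
    rw [Ideal.mem_span_singleton'] at hv
    obtain ⟨k, hk⟩ := hv
    refine ⟨Function.update (-v) a k, ?_⟩
    rw [Ph_ctr_cons hM]
    have : om M Z (M a) (Function.update (-v) a k) = om M Z (M a) (-v) := by
      apply om_congr (fun _ _ => rfl)
      intro i hi
      rw [Function.update_of_ne (show i ≠ a from fun e => ha (e ▸ hi))]
    rw [this]; simp [hk]
  · rintro ⟨v, rfl⟩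
    refine ⟨-v, ?_⟩
    rw [Ph_ctr_cons hM, Ideal.mem_span_singleton']
    exact ⟨v a, by simp⟩

theorem Lu_dl (hM : Alt M) {s : ι} {Z Y : List ι} (hp : (s :: Y).Perm Z) (hs : s ∉ Y) :
    Lu (om M Z) (pf M Z) (dl s) = Lid M Y := by
  have h1 : ∀ v, om M Z (dl s) v ∈ Lid M Y := by
    intro v
    have : om M (s :: Y) (dl s) v ∈ Lid M Y := ⟨-v, by rw [om_dl hs]; simp⟩
    rcases om_perm (M := M) hp with h | h
    · rwa [← h]
    · rw [h] at this; simpa using this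
  have h2 : pf M Z ∈ Lid M Y := by
    have : pf M (s :: Y) ∈ Lid M Y := ⟨M s, by rw [pf_cons hM]; rfl⟩
    rcases pf_perm (M := M) hp with h | h
    · rwa [← h]
    · rw [h] at this; simpa using this
  apply le_antisymm
  · rw [Lu, sup_le_iff]
    refine ⟨by rw [Ideal.span_le]; simpa using h2, ?_⟩
    rintro _ ⟨v, rfl⟩; exact h1 v
  · rintro _ ⟨v, rfl⟩
    apply (le_sup_right : _ ≤ Lu (om M Z) (pf M Z) (dl s))
    change Ph M (ctr v (zl Y)) ∈ LinearMap.range (om M Z (dl s))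
    have h3 : Ph M (ctr v (zl Y)) = om M (s :: Y) (dl s) (-v) := by rw [om_dl hs]; simp
    rw [h3]
    rcases om_perm (M := M) hp with h | h
    · rw [h]; exact ⟨_, rfl⟩
    · rw [h]; exact ⟨v, by simp⟩

theorem Gen.T : ∀ (n : ℕ) (a b c : ι) (l : List ι), l.length = 2 * n → 𝒢.gl (a :: b :: c :: l) →
    nzd (pf M l) (Lid M (a :: b :: c :: l)) := by
  intro n
  induction n with
  | zero =>
    intro a b c l hl _
    rw [List.length_eq_zero_iff.1 hl, pf_nil 𝒢.alt]; exact nzd_unit isUnit_one _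
  | succ n ih =>
    intro a b c l hl h
    match l with
    | d :: e :: l =>
    have hln : l.length = 2 * n := by simp at hl; omega
    have hnd := Gen.nodup h
    simp only [List.nodup_cons, List.mem_cons, not_or] at hnd
    obtain ⟨⟨nab, nac, nad, nae, nal⟩, ⟨nbc, nbd, nbe, nbl⟩, ⟨ncd, nce, ncl⟩, ⟨nde, ndl⟩, nel, -⟩ := hnd
    set Z := b :: c :: d :: e :: l with hZ
    have haZ : a ∉ Z := by simp [hZ]; tauto
    have hgZ : 𝒢.gl Z := (List.pairwise_cons.1 h).2
    have hGad : 𝒢.G a d := (List.pairwise_cons.1 h).1 d (by simp [hZ])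
    have hGab : 𝒢.G a b := (List.pairwise_cons.1 h).1 b (by simp [hZ])
    have hp : (d :: b :: c :: e :: l).Perm Z :=
      (List.Perm.swap b d _).trans ((List.Perm.swap c d _).cons b)
    have hgd : 𝒢.gl (d :: b :: c :: e :: l) := 𝒢.gl_perm hp.symm hgZ
    have hgY : 𝒢.gl (b :: c :: e :: l) := (List.pairwise_cons.1 hgd).2
    have hdY : d ∉ b :: c :: e :: l := by simp; tauto
    have hne : ∀ i ∈ Z, i ≠ a := fun i hi e => haZ (e ▸ hi)
    have hEx : ExZ M Z (dl d) := ExZ_perm hp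
      (Ex_dl (n := n+1) (by simp; omega) hgd (Gen.E (n+1) b _ (by simp; omega) hgY))
    have hR := Gen.fr hGad (Or.inl haZ)
    have key := lemY (om_alt M Z) (NZ_om 𝒢.alt) (NZ_g 𝒢.alt) (𝒢.V a d hGad)
      (ub := Function.update (M a) d 0) (e := dl d) (c := pf M (d :: e :: l))
      (Gen.fr_pf _ (Or.inl (by simp; tauto)))
      (om_up_mem 𝒢.alt hR (fun i hi => Gen.row_free hGad (hne i hi) rfl))
      (om_up_mem 𝒢.alt hR (fun i hi => dl_mem _ _ _))
      (Gen.fr_pf _ (Or.inl haZ)) hEx (by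
        rw [Lu_dl 𝒢.alt hp hdY, Lid_span]
        apply Gen.LC (List.pairwise_cons.1 (List.pairwise_cons.1 hgZ).2).2
        · rintro _ ⟨i, rfl⟩
          exact Phctr_mem 𝒢.alt (Gen.fr _ (Or.inl hdY)) (fun _ _ => dl_mem _ _ _)
        · rw [← Lid_span]
          exact ih b c e l hln hgY)
      (Gen.K1 (n+1) b c _ hl hgZ) (by
        apply Gen.LCrow hGab haZ (by simp [nbd])
        · intro i hi hib
          by_cases his : i = d
          · subst his; simp
          · rw [Function.update_of_ne his]
            apply 𝒢.free
            · rintro ⟨_, rfl⟩; exact hib rfl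
            · rintro ⟨_, rfl⟩; exact hne _ hi rfl
        · exact fun i _ => dl_mem _ _ _
        · rintro s (rfl | rfl)
          · exact Gen.fr_pf _ (Or.inl (by simp; tauto))
          · exact Gen.fr_pf _ (Or.inl haZ)
        · have hp2 : Z.Perm (b :: d :: c :: e :: l) := (List.Perm.swap d c _).cons b
          have e1 : om M (b :: d :: c :: e :: l) (dl b) (dl d) = - pf M (c :: e :: l) :=
            om_dl2 (by simp; tauto) (by simp; tauto)
          have e2 := Gen.C3 hln hgZ
          rcases om_perm (M := M) hp2 with h | h
          · rw [h, e1]; exact nzd_neg e2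
          · rw [h]; simp only [LinearMap.neg_apply]; rw [e1, neg_neg]; exact e2)
    rw [upd, Lu_row 𝒢.alt haZ] at key
    exact key
end C2
end PfReg

end FilePE

section FilePF
set_option linter.unusedSectionVars false
namespace PfReg

section D
variable {S : Type*} [CommRing S] [IsDomain S] {ι : Type*} [Fintype ι] [DecidableEq ι]
variable {M : ι → ι → S}

structure Gen3 (M : ι → ι → S) extends Gen M where
  n : ℕ
  b : ι
  c : ι
  l : List ι
  hl : l.length = 2 * n
  o : Fin 3 → ι
  o_inj : ∀ i j, i ≠ j → o i ≠ o j
  gl : ∀ i, toGen.gl (o i :: b :: c :: l)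
  T : Fin 3 → S
  VT : ∀ i, VarS (T i)
  M_free : ∀ i a b, M a b ∈ (VT i).R
  T_free : ∀ i j, i ≠ j → T j ∈ (VT i).R

variable (𝒯 : Gen3 M)
namespace Gen3

def Z : List ι := 𝒯.b :: 𝒯.c :: 𝒯.l
abbrev y (i : Fin 3) : ι → S := M (𝒯.o i)
noncomputable abbrev ω := om M 𝒯.Z
noncomputable abbrev g : S := pf M 𝒯.Z

theorem oZ (i : Fin 3) : 𝒯.o i ∉ 𝒯.Z := (List.nodup_cons.1 (Gen.nodup (𝒯.gl i))).1
theorem glZ : 𝒯.toGen.gl 𝒯.Z := (List.pairwise_cons.1 (𝒯.gl 0)).2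
theorem Gm (i : Fin 3) {a : ι} (ha : a ∈ 𝒯.Z) : 𝒯.G (𝒯.o i) a :=
  (List.pairwise_cons.1 (𝒯.gl i)).1 a ha
theorem bZ : 𝒯.b ∈ 𝒯.Z := by simp [Z]
theorem cZ : 𝒯.c ∈ 𝒯.Z := by simp [Z]

variable {𝒯}
theorem y_free {i j : Fin 3} (h : i ≠ j) {a : ι} (ha : a ∈ 𝒯.Z) :
    ∀ k ∈ 𝒯.Z, 𝒯.y j k ∈ (𝒯.V _ _ (𝒯.Gm i ha)).R := by
  intro k hk
  apply 𝒯.free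
  · rintro ⟨e, _⟩; exact 𝒯.o_inj i j h e.symm
  · rintro ⟨e, _⟩; exact 𝒯.oZ j (e ▸ ha)

theorem y_self {i : Fin 3} {a : ι} (ha : a ∈ 𝒯.Z) :
    ∀ k ∈ 𝒯.Z, k ≠ a → 𝒯.y i k ∈ (𝒯.V _ _ (𝒯.Gm i ha)).R := by
  intro k hk hka
  apply 𝒯.free
  · rintro ⟨_, e⟩; exact hka e
  · rintro ⟨_, e⟩; exact 𝒯.oZ i (e ▸ hk)

theorem g_free (i : Fin 3) {a : ι} (ha : a ∈ 𝒯.Z) : 𝒯.g ∈ (𝒯.V _ _ (𝒯.Gm i ha)).R :=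
  Gen.fr_pf _ (Or.inl (𝒯.oZ i))

theorem om_free {i : Fin 3} {a : ι} (ha : a ∈ 𝒯.Z) {u v : ι → S}
    (hu : ∀ k ∈ 𝒯.Z, u k ∈ (𝒯.V _ _ (𝒯.Gm i ha)).R)
    (hv : ∀ k ∈ 𝒯.Z, v k ∈ (𝒯.V _ _ (𝒯.Gm i ha)).R) :
    𝒯.ω u v ∈ (𝒯.V _ _ (𝒯.Gm i ha)).R :=
  om_mem 𝒯.alt (Gen.fr _ (Or.inl (𝒯.oZ i))) hu hv

theorem LCy {i : Fin 3} {a : ι} (ha : a ∈ 𝒯.Z) {w : ι → S}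
    (hw : ∀ k ∈ 𝒯.Z, w k ∈ (𝒯.V _ _ (𝒯.Gm i ha)).R) {H : Set S}
    (hH : ∀ s ∈ H, s ∈ (𝒯.V _ _ (𝒯.Gm i ha)).R) (hc : nzd (𝒯.ω (dl a) w) (Ideal.span H)) :
    nzd (𝒯.ω (𝒯.y i) w) (Ideal.span H) :=
  Gen.LCrow (𝒯.Gm i ha) (𝒯.oZ i) rfl (y_self ha) hw hH hc

theorem nzd_om_swap {u v : ι → S} {J : Ideal S} (h : nzd (𝒯.ω u v) J) : nzd (𝒯.ω v u) J := by
  rw [Gen3.ω, om_skew]; exact nzd_neg h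

theorem nzd_bc {J : Ideal S} (h : nzd (pf M 𝒯.l) J) : nzd (𝒯.ω (dl 𝒯.b) (dl 𝒯.c)) J := by
  have hn := Gen.nodup 𝒯.glZ
  simp only [Z, List.nodup_cons] at hn
  rw [Gen3.ω, Z, om_dl2 hn.1 hn.2.1]
  exact nzd_neg h

theorem K1' : nzd (pf M 𝒯.l) (Ideal.span {𝒯.g}) := Gen.K1 _ _ _ _ 𝒯.hl 𝒯.glZ

theorem yd_b {i : Fin 3} : nzd (𝒯.ω (𝒯.y i) (dl 𝒯.b)) (Ideal.span {𝒯.g}) := by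
  apply LCy 𝒯.cZ (fun _ _ => dl_mem _ _ _)
  · rintro s rfl; exact g_free i 𝒯.cZ
  · exact nzd_om_swap (nzd_bc K1')

theorem nzd_yy {i j : Fin 3} (h : i ≠ j) : nzd (𝒯.ω (𝒯.y i) (𝒯.y j)) (Ideal.span {𝒯.g}) := by
  apply LCy 𝒯.bZ (y_free h 𝒯.bZ)
  · rintro s rfl; exact g_free i 𝒯.bZ
  · exact nzd_om_swap yd_b

theorem R_T (k : Fin 3) : ∀ a ∈ 𝒯.Z, ∀ b ∈ 𝒯.Z, M a b ∈ (𝒯.VT k).R := fun _ _ _ _ => 𝒯.M_free _ _ _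

theorem omT (k : Fin 3) {u v : ι → S} (hu : ∀ i, u i ∈ (𝒯.VT k).R) (hv : ∀ i, v i ∈ (𝒯.VT k).R) :
    𝒯.ω u v ∈ (𝒯.VT k).R := om_mem 𝒯.alt (R_T k) (fun i _ => hu i) (fun i _ => hv i)

variable (𝒯) in
def u : ι → S := (𝒯.T 0 • 𝒯.y 0 + 𝒯.T 1 • 𝒯.y 1) + 𝒯.T 2 • 𝒯.y 2

theorem nzd_ub {G : Set S} (hG : ∀ s ∈ G, s ∈ (𝒯.VT 0).R) {j : Fin 3}
    (h : nzd (𝒯.ω (𝒯.y 0) (𝒯.y j)) (Ideal.span G)) :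
    nzd (𝒯.ω (𝒯.T 0 • 𝒯.y 0 + 𝒯.T 1 • 𝒯.y 1) (𝒯.y j)) (Ideal.span G) := by
  refine (𝒯.VT 0).LC hG (c := 𝒯.ω (𝒯.y 0) (𝒯.y j)) (r := 𝒯.T 1 * 𝒯.ω (𝒯.y 1) (𝒯.y j)) ?_ ?_ ?_ h
  · simp [mul_comm]
  · exact omT 0 (𝒯.M_free _ _) (𝒯.M_free _ _)
  · exact mul_mem (𝒯.T_free _ _ (by decide)) (omT 0 (𝒯.M_free _ _) (𝒯.M_free _ _))

theorem gT (k : Fin 3) : 𝒯.g ∈ (𝒯.VT k).R := (pf_mem 𝒯.alt (R_T k)).1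

theorem Exy (i : Fin 3) : ExZ M 𝒯.Z (𝒯.y i) :=
  Gen.E (𝒯.n + 1) _ _ (by simp [Z, 𝒯.hl]; omega) (𝒯.gl i)

theorem ub_T2 (i : ι) : (𝒯.T 0 • 𝒯.y 0 + 𝒯.T 1 • 𝒯.y 1) i ∈ (𝒯.VT 2).R :=
  add_mem (mul_mem (𝒯.T_free _ _ (by decide)) (𝒯.M_free _ _ _))
    (mul_mem (𝒯.T_free _ _ (by decide)) (𝒯.M_free _ _ _))

theorem Exu : ExZ M 𝒯.Z 𝒯.u :=
  lemX (om_alt M 𝒯.Z) (NZ_om 𝒯.alt) (NZ_g 𝒯.alt) (𝒯.VT 2)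
    (om_up_mem 𝒯.alt (R_T 2) (fun i _ => ub_T2 i))
    (om_up_mem 𝒯.alt (R_T 2) (fun i _ => 𝒯.M_free _ _ _))
    (gT 2) (Exy 2) (nzd_ub (by rintro s rfl; exact gT 0) (nzd_yy (by decide)))

theorem d_bc_aux : nzd (pf M 𝒯.l) (Ideal.span {𝒯.g, 𝒯.ω (𝒯.y 0) (dl 𝒯.b)}) := by
  have hl := 𝒯.hl
  have K := 𝒯.K1'
  have hZ : 𝒯.Z = 𝒯.b :: 𝒯.c :: 𝒯.l := rfl
  have hn := Gen.nodup 𝒯.glZ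
  have hgZ := 𝒯.glZ
  obtain hm | ⟨m, hm⟩ : 𝒯.n = 0 ∨ ∃ m, 𝒯.n = m + 1 := by
    rcases 𝒯.n with _ | m
    · simp
    · right; exact ⟨m, rfl⟩
  · have h0 : 𝒯.l = [] := List.length_eq_zero_iff.1 (by rw [hl, hm])
    rw [h0, pf_nil 𝒯.alt]; exact nzd_unit isUnit_one _
  · have h2 : 2 ≤ 𝒯.l.length := by omega
    obtain ⟨d, e, l, hde⟩ : ∃ d e l, 𝒯.l = d :: e :: l := by
      match h : 𝒯.l with
      | [] => simp [h] at h2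
      | [_] => simp [h] at h2
      | d :: e :: l => exact ⟨d, e, l, rfl⟩
    have hln : l.length = 2 * m := by rw [hde] at hl; simp at hl; omega
    have hdZ : d ∈ 𝒯.Z := by rw [hZ, hde]; simp
    apply nzd_perm K
    apply LCy hdZ (fun _ _ => dl_mem _ _ _)
    · rintro s (rfl | rfl)
      · exact g_free 0 hdZ
      · refine Gen.fr_pf _ (Or.inl ?_)
        have := 𝒯.oZ 0
        rw [hZ] at this
        simp only [List.mem_cons, not_or] at this
        exact this.2.2
    · apply nzd_om_swap
      rw [hZ, hde] at hn hgZ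
      rw [Gen3.ω, Gen3.g, hZ, hde]
      have hp2 : (𝒯.b :: 𝒯.c :: d :: e :: l).Perm (𝒯.b :: d :: 𝒯.c :: e :: l) :=
        (List.Perm.swap d 𝒯.c _).cons 𝒯.b
      simp only [List.nodup_cons, List.mem_cons, not_or] at hn
      have e1 : om M (𝒯.b :: d :: 𝒯.c :: e :: l) (dl 𝒯.b) (dl d) = - pf M (𝒯.c :: e :: l) :=
        om_dl2 (by simp; tauto) (by simp; tauto)
      have e2 := Gen.C3 hln hgZ
      rw [Set.pair_comm] at e2
      rcases om_perm (M := M) hp2 with h | h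
      · rw [h, e1]; exact nzd_neg e2
      · rw [h]; simp only [LinearMap.neg_apply]; rw [e1, neg_neg]; exact e2

theorem f3_aux : nzd (𝒯.ω (𝒯.y 0) (𝒯.y 2)) (Ideal.span {𝒯.ω (𝒯.y 0) (𝒯.y 1), 𝒯.g}) := by
  have hbc : 𝒯.b ≠ 𝒯.c := by
    have hn := Gen.nodup 𝒯.glZ
    simp only [Z, List.nodup_cons, List.mem_cons, not_or] at hn
    exact hn.1.1
  apply nzd_om_swap
  apply LCy 𝒯.bZ (y_free (by decide) 𝒯.bZ)
  · rintro s (rfl | rfl)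
    · exact om_free 𝒯.bZ (y_free (by decide) 𝒯.bZ) (y_free (by decide) 𝒯.bZ)
    · exact g_free 2 𝒯.bZ
  · apply nzd_om_swap
    rw [Set.pair_comm]
    apply nzd_perm yd_b
    apply nzd_om_swap
    apply LCy 𝒯.cZ (y_free (by decide) 𝒯.cZ)
    · rintro s (rfl | rfl)
      · exact g_free 1 𝒯.cZ
      · exact om_free 𝒯.cZ (y_free (by decide) 𝒯.cZ) (fun _ _ => dl_mem _ _ _)
    · apply nzd_om_swap
      apply LCy 𝒯.bZ (fun _ _ => dl_mem _ _ _)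
      · rintro s (rfl | rfl)
        · exact g_free 0 𝒯.bZ
        · have : 𝒯.ω (𝒯.y 0) (dl 𝒯.b) = 𝒯.ω (Function.update (𝒯.y 0) 𝒯.b 0) (dl 𝒯.b) := by
            rw [upd']; simp [om_alt]
          rw [this]
          refine om_free 𝒯.bZ (fun k hk => ?_) (fun _ _ => dl_mem _ _ _)
          by_cases h : k = 𝒯.b
          · subst h; simp
          · rw [Function.update_of_ne h]; exact y_self 𝒯.bZ k hk h
      · exact nzd_bc d_bc_aux

theorem f3_Lu : nzd (𝒯.ω (𝒯.y 0) (𝒯.y 1)) (Lu 𝒯.ω 𝒯.g 𝒯.u) := by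
  refine lemY (om_alt M 𝒯.Z) (NZ_om 𝒯.alt) (NZ_g 𝒯.alt) (𝒯.VT 2)
    (omT 2 (𝒯.M_free _ _) (𝒯.M_free _ _))
    (om_up_mem 𝒯.alt (R_T 2) (fun i _ => ub_T2 i))
    (om_up_mem 𝒯.alt (R_T 2) (fun i _ => 𝒯.M_free _ _ _))
    (gT 2) (Exy 2) ?_ (nzd_yy (by decide)) ?_
  · rw [Lu_row 𝒯.alt (𝒯.oZ 2), Lid_span]
    have hfree : ∀ (i : Fin 3) (a : ι) (ha : a ∈ 𝒯.Z), i ≠ 2 →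
        ∀ s ∈ Set.range fun i => Ph M (ctr (dl i) (zl (𝒯.o 2 :: 𝒯.Z))), s ∈ (𝒯.V _ _ (𝒯.Gm i ha)).R := by
      rintro i a ha hi s ⟨j, rfl⟩
      refine Phctr_mem 𝒯.alt (Gen.fr _ (Or.inl ?_)) (fun _ _ => dl_mem _ _ _)
      simp only [List.mem_cons, not_or]
      exact ⟨𝒯.o_inj _ _ hi, 𝒯.oZ i⟩
    apply LCy 𝒯.bZ (y_free (by decide) 𝒯.bZ) (hfree _ _ 𝒯.bZ (by decide))
    apply nzd_om_swap
    apply LCy 𝒯.cZ (fun _ _ => dl_mem _ _ _) (hfree _ _ 𝒯.cZ (by decide))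
    apply nzd_om_swap
    apply nzd_bc
    rw [← Lid_span]
    exact Gen.T _ _ _ _ _ 𝒯.hl (𝒯.gl 2)
  · apply nzd_ub
    · rintro s (rfl | rfl)
      · exact omT 0 (𝒯.M_free _ _) (𝒯.M_free _ _)
      · exact gT 0
    · exact f3_aux

variable (𝒯) in
noncomputable def F : Fin 3 → S :=
  ![𝒯.ω (𝒯.y 1) (𝒯.y 2), 𝒯.ω (𝒯.y 2) (𝒯.y 0), 𝒯.ω (𝒯.y 0) (𝒯.y 1)]

/-- vanishing of `ω(s, ∑ F_i y_i)` modulo `g` -/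
theorem om_F (s : ι → S) : 𝒯.ω s (𝒯.F 0 • 𝒯.y 0 + 𝒯.F 1 • 𝒯.y 1 + 𝒯.F 2 • 𝒯.y 2) ∈
    Ideal.span {𝒯.g} := by
  set v := 𝒯.F 0 • 𝒯.y 0 + 𝒯.F 1 • 𝒯.y 1 + 𝒯.F 2 • 𝒯.y 2 with hv
  have h2 : 𝒯.ω (𝒯.y 2) v = 0 := by
    rw [hv]; simp [F, om_alt]; rw [om_skew M _ (M (𝒯.o 2)) (M (𝒯.o 1))]; ring
  have h1 : 𝒯.ω (𝒯.y 1) v = 0 := by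
    rw [hv]; simp [F, om_alt]; rw [om_skew M _ (M (𝒯.o 1)) (M (𝒯.o 0))]; ring
  obtain ⟨h, hh⟩ := Exy (𝒯 := 𝒯) 2 v (by
    change 𝒯.ω (𝒯.y 2) v ∈ _
    rw [h2]; exact Ideal.zero_mem _)
  have h3 := NZ_om 𝒯.alt (𝒯.y 1) _ hh
  have h4 : h ∈ Ideal.span {𝒯.g} := by
    apply nzd_yy (i := 1) (j := 2) (by decide)
    have : om M 𝒯.Z (𝒯.y 1) (v - h • 𝒯.y 2) = - (h * 𝒯.ω (𝒯.y 1) (𝒯.y 2)) := by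
      rw [map_sub, map_smul, h1]; simp
    rw [this] at h3
    simpa using neg_mem h3
  rw [Ideal.mem_span_singleton'] at h4
  obtain ⟨k, rfl⟩ := h4
  have h5 : v ∈ NZ M 𝒯.Z := by
    have := add_mem hh (Submodule.smul_mem _ k (NZ_g 𝒯.alt (l := 𝒯.Z) (𝒯.y 2)))
    rwa [smul_smul, sub_add_cancel] at this
  exact NZ_om 𝒯.alt s _ h5

theorem left_inj {h : S} (hh : h • 𝒯.u ∈ NZ M 𝒯.Z) : h ∈ Ideal.span {𝒯.g} := by
  have h1 := NZ_om 𝒯.alt (𝒯.y 2) _ hh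
  apply nzd_ub (j := 2) (by rintro s rfl; exact gT 0) (nzd_yy (by decide))
  have h2 : om M 𝒯.Z (𝒯.y 2) (h • 𝒯.u) =
      - (h * 𝒯.ω (𝒯.T 0 • 𝒯.y 0 + 𝒯.T 1 • 𝒯.y 1) (𝒯.y 2)) := by
    rw [map_smul, u, map_add, map_smul, om_alt, om_skew]; simp; try ring
  rw [h2] at h1
  simpa using neg_mem h1

/-- `F_2 T_i ≡ T_2 F_i` modulo `𝓛`. -/
theorem FT (i : Fin 3) : 𝒯.F 2 * 𝒯.T i - 𝒯.T 2 * 𝒯.F i ∈ Lu 𝒯.ω 𝒯.g 𝒯.u := by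
  have w : ∀ v, 𝒯.ω 𝒯.u v ∈ Lu 𝒯.ω 𝒯.g 𝒯.u := fun v =>
    (le_sup_right : _ ≤ Lu 𝒯.ω 𝒯.g 𝒯.u) ⟨v, rfl⟩
  fin_cases i
  · convert w (𝒯.y 1) using 1
    simp [u, F, om_alt]; rw [om_skew M _ (M (𝒯.o 2)) (M (𝒯.o 1))]; ring
  · convert neg_mem (w (𝒯.y 0)) using 1
    simp [u, F, om_alt]; rw [om_skew M _ (M (𝒯.o 1)) (M (𝒯.o 0))]; ring
  · simp [mul_comm]

theorem F2_Lu : nzd (𝒯.F 2) (Lu 𝒯.ω 𝒯.g 𝒯.u) := f3_Lu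
end Gen3
end D
end PfReg

end FilePF

section FilePG
set_option linter.unusedSectionVars false
namespace PfReg
section G
open CategoryTheory MvPolynomial

variable (K : Type) [Field K] (σ : Type)

/-- degree category -/
structure DCat (σ : Type) where
  d : ℤ

noncomputable instance : Category (DCat σ) where
  Hom i j := {a : σ →₀ ℕ // i.d + (a.degree : ℤ) = j.d}
  id i := ⟨0, by simp⟩
  comp f g := ⟨f.1 + g.1, by have h1 := f.2; have h2 := g.2; rw [map_add]; push_cast; lia⟩
  id_comp f := Subtype.ext (zero_add _)
  comp_id f := Subtype.ext (add_zero _)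
  assoc f g h := Subtype.ext (add_assoc _ _ _)

/-- graded modules as functors -/
abbrev GFun := DCat σ ⥤ ModuleCat.{0} K

instance : HasExt.{1} (GFun K σ) := HasExt.standard _

theorem exact_of_eval (S : ShortComplex (GFun K σ))
    (h : ∀ X, (S.map ((evaluation _ _).obj X)).Exact) : S.Exact := by
  rw [ShortComplex.exact_iff_isZero_homology, Functor.isZero_iff]
  intro X
  have := (ShortComplex.exact_iff_isZero_homology _).1 (h X)
  exact this.of_iso (S.mapHomologyIso ((evaluation _ _).obj X)).symm

/-- A module with graded pieces -/
structure GM where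
  Q : Type
  [i1 : AddCommGroup Q]
  [i2 : Module (MvPolynomial σ K) Q]
  [i3 : Module K Q]
  [i4 : IsScalarTower K (MvPolynomial σ K) Q]
  p : ℤ → Submodule K Q
  hp : ∀ (i : ℤ) (a : σ →₀ ℕ) (q : Q), q ∈ p i → monomial a (1 : K) • q ∈ p (i + (a.degree : ℕ))

attribute [instance] GM.i1 GM.i2 GM.i3 GM.i4

variable {K σ}

noncomputable def GM.act (A : GM K σ) {i j : DCat σ} (f : i ⟶ j) : A.p i.d →ₗ[K] A.p j.d where
  toFun q := ⟨monomial f.1 (1 : K) • q.1, by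
    have h := A.hp _ f.1 _ q.2
    have e : i.d + ((f.1.degree : ℕ) : ℤ) = j.d := f.2
    rw [e] at h; exact h⟩
  map_add' x y := by ext; simp
  map_smul' c x := by ext; simp [smul_algebra_smul_comm]

noncomputable def GM.F (A : GM K σ) : GFun K σ where
  obj i := ModuleCat.of K (A.p i.d)
  map f := ModuleCat.ofHom (A.act f)
  map_id i := by
    ext q
    change monomial (0 : σ →₀ ℕ) (1 : K) • q.1 = q.1
    rw [show monomial (0 : σ →₀ ℕ) (1 : K) = 1 from rfl, one_smul]
  map_comp f g := by
    ext q
    change monomial (f.1 + g.1) (1 : K) • q.1 = monomial g.1 (1 : K) • monomial f.1 (1 : K) • q.1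
    rw [smul_smul, monomial_mul, add_comm, one_mul]

structure GM.Hom (A E : GM K σ) where
  f : A.Q →ₗ[MvPolynomial σ K] E.Q
  h : ∀ j, ∀ q ∈ A.p j, f q ∈ E.p j

noncomputable def GM.Hom.F {A E : GM K σ} (φ : A.Hom E) : A.F ⟶ E.F where
  app i := ModuleCat.ofHom
    { toFun := fun q => ⟨φ.f q.1, φ.h _ _ q.2⟩
      map_add' := fun x y => by ext; simp
      map_smul' := fun c x => by
        ext; simp only [Submodule.coe_smul, RingHom.id_apply]
        rw [← algebraMap_smul (MvPolynomial σ K) c, map_smul, algebraMap_smul] }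
  naturality i j f := by
    ext q; apply Subtype.ext
    change φ.f (monomial f.1 (1 : K) • q.1) = monomial f.1 (1 : K) • φ.f q.1
    rw [map_smul]

/-- short exact sequences of graded modules -/
structure GM.SES (A E C : GM K σ) where
  f : A.Hom E
  g : E.Hom C
  inj : ∀ j, ∀ q ∈ A.p j, f.f q = 0 → q = 0
  zero : ∀ j, ∀ q ∈ A.p j, g.f (f.f q) = 0
  ex : ∀ j, ∀ q ∈ E.p j, g.f q = 0 → ∃ a ∈ A.p j, f.f a = q
  surj : ∀ j, ∀ q ∈ C.p j, ∃ a ∈ E.p j, g.f a = q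

noncomputable def GM.SES.S {A E C : GM K σ} (s : GM.SES A E C) : ShortComplex (GFun K σ) where
  X₁ := A.F
  X₂ := E.F
  X₃ := C.F
  f := s.f.F
  g := s.g.F
  zero := by
    ext i q; apply Subtype.ext
    exact s.zero _ _ q.2

theorem GM.SES.ex' {A E C : GM K σ} (s : GM.SES A E C) : s.S.ShortExact where
  exact := by
    apply exact_of_eval
    intro X
    rw [ShortComplex.moduleCat_exact_iff]
    intro q hq
    obtain ⟨a, ha, h⟩ := s.ex X.d q.1 q.2 (congrArg Subtype.val hq)
    exact ⟨⟨a, ha⟩, Subtype.ext h⟩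
  mono_f := by
    rw [NatTrans.mono_iff_mono_app]
    intro X
    rw [ModuleCat.mono_iff_injective]
    change Function.Injective (s.f.F.app X).hom
    rw [injective_iff_map_eq_zero]
    intro a ha
    exact Subtype.ext (s.inj _ _ a.2 (congrArg Subtype.val ha))
  epi_g := by
    rw [NatTrans.epi_iff_epi_app]
    intro X
    rw [ModuleCat.epi_iff_surjective]
    intro q
    obtain ⟨a, ha, h⟩ := s.surj X.d q.1 q.2
    exact ⟨⟨a, ha⟩, Subtype.ext h⟩

/-- vanishing of Ext -/
def VV (A Y : GM K σ) (i : ℕ) : Prop := ∀ x : Abelian.Ext A.F Y.F i, x = 0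

open Abelian Abelian.Ext
variable {A E C Y : GM K σ}

theorem GM.SES.L1 (s : GM.SES A E C) {i : ℕ} (hA : VV A Y i) (hC : VV C Y i) : VV E Y i := by
  intro x
  obtain ⟨y, rfl⟩ := contravariant_sequence_exact₂ s.ex' Y.F x (hA _)
  rw [show y = 0 from hC y]; exact comp_zero _ _ _ _ _

theorem GM.SES.L2 (s : GM.SES A E C) {i : ℕ} (hE : VV E Y (i + 1)) (hA : VV A Y i) :
    VV C Y (i + 1) := by
  intro x
  obtain ⟨y, rfl⟩ := contravariant_sequence_exact₃ s.ex' Y.F x (hE _) (add_comm 1 i)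
  rw [show y = 0 from hA y]; exact comp_zero _ _ _ _ _

theorem GM.SES.L2z (s : GM.SES A E C) (hE : VV E Y 0) : VV C Y 0 := by
  intro x
  have := s.ex'.epi_g
  apply precomp_mk₀_injective_of_epi Y.F s.S.g
  exact (hE _).trans (hE _).symm

theorem GM.SES.L3 (s : GM.SES A E C) {i : ℕ} (hE : VV E Y i) (hC : VV C Y (i + 1)) :
    VV A Y i := by
  intro x
  obtain ⟨y, rfl⟩ := contravariant_sequence_exact₁ s.ex' Y.F x (add_comm 1 i) (hC _)
  rw [show y = 0 from hE y]; exact comp_zero _ _ _ _ _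

end G
end PfReg

end FilePG

section FilePH
set_option linter.unusedSectionVars false
namespace PfReg
section H
open CategoryTheory MvPolynomial

section wc
variable {K τ M : Type*} [Field K] [AddCommGroup M] [DecidableEq M] (w : τ → M)

/-- weighted pieces -/
noncomputable abbrev WP (n : M) : Submodule K (MvPolynomial τ K) := weightedHomogeneousSubmodule K w n
noncomputable abbrev wc (n : M) : MvPolynomial τ K →ₗ[K] MvPolynomial τ K :=
  weightedHomogeneousComponent w n

variable {w}
theorem WP_mul {i j : M} {a b : MvPolynomial τ K} (ha : a ∈ WP w i) (hb : b ∈ WP w j) :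
    a * b ∈ WP w (i + j) := IsWeightedHomogeneous.mul ha hb

theorem WP_mul' {i j k : M} {a b : MvPolynomial τ K} (ha : a ∈ WP w i) (hb : b ∈ WP w j)
    (h : i + j = k) : a * b ∈ WP w k := h ▸ WP_mul ha hb

theorem wc_mem (n : M) (a : MvPolynomial τ K) : wc w n a ∈ WP w n :=
  weightedHomogeneousComponent_mem _ _ _

theorem wc_of_mem {n m : M} {a : MvPolynomial τ K} (ha : a ∈ WP w n) :
    wc w m a = if m = n then a else 0 := weightedHomogeneousComponent_of_mem ha

theorem wc_self {n : M} {a : MvPolynomial τ K} (ha : a ∈ WP w n) :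
    wc w n a = a := by rw [wc_of_mem ha, if_pos rfl]

theorem exists_sum (a : MvPolynomial τ K) (n : M) : ∃ s : Finset M, n ∈ s ∧ ∑ i ∈ s, wc w i a = a := by
  classical
  refine ⟨insert n (a.support.image (Finsupp.weight w)), by simp, ?_⟩
  conv_rhs => rw [← sum_weightedHomogeneousComponent w a]
  rw [finsum_eq_sum_of_support_subset]
  intro i hi
  by_contra h
  apply hi
  apply weightedHomogeneousComponent_eq_zero_of_notMem
  intro h'; apply h; simp only [Finset.coe_insert]; right; exact h'

theorem wc_mul' {i n : M} {a b : MvPolynomial τ K} (ha : a ∈ WP w i) :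
    wc w n (a * b) = a * wc w (n - i) b := by
  obtain ⟨s, hs, h⟩ := exists_sum (w := w) b (n - i)
  conv_lhs => rw [← h]
  rw [Finset.mul_sum, map_sum, Finset.sum_eq_single (n - i)]
  · rw [wc_of_mem (WP_mul ha (wc_mem _ _)), if_pos (by abel)]
  · intro j _ hj
    rw [wc_of_mem (WP_mul ha (wc_mem _ _)), if_neg]
    rintro rfl; apply hj; abel
  · intro h; exact (h hs).elim

end wc

section deg
variable {K : Type} [Field K] {σ : Type}
/-- standard grading indexed by integers -/
noncomputable abbrev one' (σ : Type) : σ → ℤ := fun _ => 1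

theorem weight_one' (a : σ →₀ ℕ) : Finsupp.weight (one' σ) a = (a.degree : ℕ) := by
  simp [Finsupp.weight_apply, Finsupp.sum, Finsupp.degree_apply]

theorem zg_eq (j : ℤ) : zg (homogeneousSubmodule σ K) j = WP (one' σ) j := by
  ext b
  rw [zg]
  split_ifs with h
  · rw [mem_homogeneousSubmodule, mem_weightedHomogeneousSubmodule]
    constructor
    · intro hb d hd
      have := hb hd
      rw [weight_one']
      have e := congrFun (congrArg DFunLike.coe (Finsupp.degree_eq_weight_one (R := ℕ) (σ := σ))) d
      have : Finsupp.degree d = j.toNat := e.trans this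
      rw [this]; omega
    · intro hb d hd
      have := hb hd
      rw [weight_one'] at this
      have e := congrFun (congrArg DFunLike.coe (Finsupp.degree_eq_weight_one (R := ℕ) (σ := σ))) d
      refine e.symm.trans ?_
      change Finsupp.degree d = _
      omega
  · rw [Submodule.mem_bot, mem_weightedHomogeneousSubmodule]
    constructor
    · rintro rfl; exact isWeightedHomogeneous_zero _ _ _
    · intro hb
      by_contra h0
      obtain ⟨d, hd⟩ := exists_coeff_ne_zero h0
      have := hb hd
      rw [weight_one'] at this
      omega

theorem mono_mem (a : σ →₀ ℕ) : monomial a (1 : K) ∈ WP (one' σ) ((a.degree : ℕ) : ℤ) := by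
  have := isWeightedHomogeneous_monomial (one' σ) a (1 : K) rfl
  rwa [weight_one'] at this

variable (K σ) in
/-- the maximal ideal -/
noncomputable def mm : Ideal (MvPolynomial σ K) := RingHom.ker (constantCoeff (σ := σ) (R := K))

theorem mono_mm {a : σ →₀ ℕ} (h : a ≠ 0) : monomial a (1 : K) ∈ mm K σ := by
  classical
  simp [mm, RingHom.mem_ker, constantCoeff_monomial, h]

theorem mono_kk {a : σ →₀ ℕ} (h : a ≠ 0) (q : MvPolynomial σ K ⧸ mm K σ) :
    monomial a (1 : K) • q = 0 := by
  obtain ⟨b, rfl⟩ := Ideal.Quotient.mk_surjective q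
  change Ideal.Quotient.mk _ (monomial a (1 : K) * b) = 0
  exact Ideal.Quotient.eq_zero_iff_mem.2 (Ideal.mul_mem_right _ _ (mono_mm h))

variable (K σ) in
/-- residue field in degree j -/
noncomputable def kk (j : ℤ) : GM K σ where
  Q := MvPolynomial σ K ⧸ mm K σ
  p i := if i = j then ⊤ else ⊥
  hp i a q h := by
    by_cases ha : a = 0
    · subst ha
      simpa [show monomial (0 : σ →₀ ℕ) (1 : K) = 1 from rfl] using h
    · rw [mono_kk ha]; exact Submodule.zero_mem _

theorem kk_one_ne : (1 : MvPolynomial σ K ⧸ mm K σ) ≠ 0 := by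
  rw [← map_one (Ideal.Quotient.mk _), Ne, Ideal.Quotient.eq_zero_iff_mem]
  simp [mm, RingHom.mem_ker]

/-- free graded module data -/
structure IsFr (A : GM K σ) {κ : Type} (s : κ → ℤ) where
  e : κ → A.Q
  li : LinearIndependent (MvPolynomial σ K) e
  mem : ∀ k, e k ∈ A.p (s k)
  span : ∀ j, ∀ q ∈ A.p j, q ∈ Submodule.span K
    {x | ∃ k, ∃ a : σ →₀ ℕ, s k + (a.degree : ℕ) = j ∧ x = monomial a (1 : K) • e k}

variable {A : GM K σ} {κ : Type} {s : κ → ℤ} (h : IsFr A s)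
namespace IsFr

abbrev Idx (_ : IsFr A s) (j : ℤ) : Type := {x : κ × (σ →₀ ℕ) // s x.1 + ((x.2.degree : ℕ) : ℤ) = j}

noncomputable def v (j : ℤ) (x : h.Idx j) : A.p j :=
  ⟨monomial x.1.2 (1 : K) • h.e x.1.1, by
    have := A.hp _ x.1.2 _ (h.mem x.1.1)
    rw [show _ = j from x.2] at this; exact this⟩

noncomputable def bs (j : ℤ) : Module.Basis (h.Idx j) K (A.p j) :=
  Module.Basis.mk (v := h.v j)
    (by
      have h1 := linearIndependent_smul (basisMonomials σ K).linearIndependent h.li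
      have h2 : LinearIndependent K (fun x : h.Idx j => ((h.v j x : A.p j) : A.Q)) := by
        have h3 := LinearIndependent.comp h1 (fun x : h.Idx j => (x.1.2, x.1.1)) (by
          intro x y hxy
          simp only [Prod.mk.injEq] at hxy
          exact Subtype.ext (Prod.ext hxy.2 hxy.1))
        have e : (fun x : h.Idx j => ((h.v j x : A.p j) : A.Q)) =
            ((fun p : (σ →₀ ℕ) × κ => (basisMonomials σ K) p.1 • h.e p.2) ∘
              fun x : h.Idx j => (x.1.2, x.1.1)) := by
          funext x; simp [v]
        rw [e]; exact h3
      exact LinearIndependent.of_comp (A.p j).subtype h2)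
    (by
      rintro ⟨q, hq⟩ -
      have h1 := h.span j q hq
      have h2 : Submodule.span K {x | ∃ k, ∃ a : σ →₀ ℕ, s k + (a.degree : ℕ) = j ∧
          x = monomial a (1 : K) • h.e k} ≤
          (Submodule.span K (Set.range (h.v j))).map (A.p j).subtype := by
        rw [Submodule.span_le]
        rintro _ ⟨k, a, hk, rfl⟩
        exact ⟨h.v j ⟨(k, a), hk⟩, Submodule.subset_span ⟨_, rfl⟩, rfl⟩
      obtain ⟨y, hy, e⟩ := h2 h1
      have : y = ⟨q, hq⟩ := Subtype.ext e
      rwa [← this])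

theorem bs_apply (j : ℤ) (x : h.Idx j) : h.bs j x = h.v j x := by simp [bs]

/-- natural transformations out of a free object -/
noncomputable def desc (Z : GFun K σ) (y : ∀ k, Z.obj ⟨s k⟩) : A.F ⟶ Z where
  app j := ModuleCat.ofHom ((h.bs j.d).constr K fun x =>
    (Z.map (X := ⟨s x.1.1⟩) (Y := j) ⟨x.1.2, x.2⟩).hom (y x.1.1))
  naturality i j f := by
    apply ModuleCat.hom_ext
    apply (h.bs i.d).ext
    intro x
    have hx : s x.1.1 + (((x.1.2 + f.1).degree : ℕ) : ℤ) = j.d := by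
      have h1 := x.2; have h2 : i.d + ((f.1.degree : ℕ) : ℤ) = j.d := f.2
      rw [map_add]; push_cast; lia
    have e1 : A.act f (h.bs i.d x) = h.bs j.d ⟨(x.1.1, x.1.2 + f.1), hx⟩ := by
      rw [bs_apply, bs_apply]
      apply Subtype.ext
      change monomial f.1 (1 : K) • monomial x.1.2 (1 : K) • h.e x.1.1 = monomial (x.1.2 + f.1) (1 : K) • h.e x.1.1
      rw [smul_smul, monomial_mul, add_comm, one_mul]
    change (h.bs j.d).constr K _ (A.act f (h.bs i.d x)) = (Z.map f).hom ((h.bs i.d).constr K _ (h.bs i.d x))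
    rw [e1, Module.Basis.constr_basis, Module.Basis.constr_basis]
    change _ = (Z.map (X := ⟨s x.1.1⟩) (Y := i) ⟨x.1.2, x.2⟩ ≫ Z.map f).hom (y x.1.1)
    rw [← Z.map_comp]
    rfl

def gidx (k : κ) : h.Idx (s k) := ⟨(k, 0), by simp⟩

theorem v_gen (k : κ) : h.v (s k) (h.gidx k) = ⟨h.e k, h.mem k⟩ := by
  apply Subtype.ext
  change monomial (0 : σ →₀ ℕ) (1 : K) • h.e k = h.e k
  rw [show monomial (0 : σ →₀ ℕ) (1 : K) = 1 from rfl, one_smul]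

theorem desc_gen (Z : GFun K σ) (y : ∀ k, Z.obj ⟨s k⟩) (k : κ) :
    ((h.desc Z y).app ⟨s k⟩).hom ⟨h.e k, h.mem k⟩ = y k := by
  rw [← v_gen, ← bs_apply]
  change (h.bs (s k)).constr K _ (h.bs (s k) (h.gidx k)) = _
  rw [Module.Basis.constr_basis]
  change (Z.map (𝟙 (⟨s k⟩ : DCat σ))).hom (y k) = y k
  rw [Z.map_id]; rfl

theorem app_v {Z : GFun K σ} (φ : A.F ⟶ Z) (j : DCat σ) (x : h.Idx j.d) :
    (φ.app j).hom (h.v j.d x) =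
      (Z.map (X := ⟨s x.1.1⟩) (Y := j) ⟨x.1.2, x.2⟩).hom ((φ.app ⟨s x.1.1⟩).hom ⟨h.e x.1.1, h.mem _⟩) := by
  have := φ.naturality (X := ⟨s x.1.1⟩) (Y := j) ⟨x.1.2, x.2⟩
  exact congrArg (fun f => f.hom ⟨h.e x.1.1, h.mem x.1.1⟩) this

theorem hom_ext {Z : GFun K σ} {φ ψ : A.F ⟶ Z}
    (hh : ∀ k, (φ.app ⟨s k⟩).hom ⟨h.e k, h.mem k⟩ = (ψ.app ⟨s k⟩).hom ⟨h.e k, h.mem k⟩) : φ = ψ := by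
  ext j : 2
  apply ModuleCat.hom_ext
  apply (h.bs j.d).ext
  intro x
  rw [bs_apply]
  exact (h.app_v φ j x).trans ((congrArg _ (hh _)).trans (h.app_v ψ j x).symm)

include h in
theorem proj : Projective A.F where
  factors {E X} f e he := by
    rw [NatTrans.epi_iff_epi_app] at he
    have hs : ∀ k, ∃ y, (e.app ⟨s k⟩).hom y = (f.app ⟨s k⟩).hom ⟨h.e k, h.mem k⟩ := fun k =>
      (ModuleCat.epi_iff_surjective _).1 (he ⟨s k⟩) _
    choose y hy using hs
    refine ⟨h.desc E y, h.hom_ext fun k => ?_⟩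
    rw [← hy]
    change (e.app ⟨s k⟩).hom (((h.desc E y).app ⟨s k⟩).hom ⟨h.e k, h.mem k⟩) = _
    rw [desc_gen]

include h in
theorem VV_succ (Y : GM K σ) (i : ℕ) : VV A Y (i + 1) := by
  have := h.proj
  exact fun x => Abelian.Ext.eq_zero_of_projective x

theorem app_kk {j : ℤ} (φ : A.F ⟶ (kk K σ j).F) (i : DCat σ) (x : h.Idx i.d)
    (hx : s x.1.1 ≠ j ∨ x.1.2 ≠ 0) : (φ.app i).hom (h.v i.d x) = 0 := by
  rw [app_v]
  rcases hx with hx | hx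
  · have : (φ.app ⟨s x.1.1⟩).hom ⟨h.e x.1.1, h.mem _⟩ = 0 := by
      have h1 := ((φ.app ⟨s x.1.1⟩).hom ⟨h.e x.1.1, h.mem _⟩ : (kk K σ j).p (s x.1.1)).2
      have h2 : (kk K σ j).p (s x.1.1) = ⊥ := if_neg hx
      exact Subtype.ext ((Submodule.mem_bot K).1 (h2.le h1))
    rw [this]; exact map_zero _
  · apply Subtype.ext
    exact mono_kk hx _

include h in
theorem VV_zero {j : ℤ} (hs : ∀ k, s k ≠ j) : VV A (kk K σ j) 0 := by
  intro x
  obtain ⟨φ, rfl⟩ := (Abelian.Ext.mk₀_bijective _ _).2 x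
  rw [Abelian.Ext.mk₀_eq_zero_iff]
  apply h.hom_ext
  intro k
  rw [← v_gen]
  exact h.app_kk φ ⟨s k⟩ (h.gidx k) (Or.inl (hs k))

open Classical in
variable (s) in
noncomputable def cofy (k k' : κ) : (kk K σ (s k)).p (s k') :=
  if hk : k' = k then ⟨(1 : MvPolynomial σ K ⧸ mm K σ), by
    subst hk; simp only [kk, if_true]; exact Submodule.mem_top⟩ else 0

/-- the coordinate functional -/
noncomputable def cof (k : κ) : A.F ⟶ (kk K σ (s k)).F := h.desc (kk K σ (s k)).F (cofy s k)

theorem cof_ne (k : κ) : h.cof k ≠ 0 := by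
  intro h0
  have h1 : cofy (K := K) (σ := σ) s k k = 0 := by
    refine (h.desc_gen (kk K σ (s k)).F (cofy s k) k).symm.trans ?_
    change ((h.cof k).app ⟨s k⟩).hom _ = 0
    rw [h0]; rfl
  have h2 : cofy (K := K) (σ := σ) s k k = ⟨(1 : MvPolynomial σ K ⧸ mm K σ), by
    simp only [kk, if_true]; exact Submodule.mem_top⟩ := dif_pos rfl
  exact kk_one_ne (congrArg Subtype.val (h2.symm.trans h1))

include h in
theorem nVV_zero (k : κ) : ¬ VV A (kk K σ (s k)) 0 := fun hv =>
  h.cof_ne k ((Abelian.Ext.mk₀_eq_zero_iff _).1 (hv _))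

end IsFr
end deg
end H
end PfReg

end FilePH

section FilePI
set_option linter.unusedSectionVars false
namespace PfReg
section I
open CategoryTheory MvPolynomial Abelian

variable {K : Type} [Field K] {σ : Type}

theorem GM.SES.k1 {A E C Y : GM K σ} (s : GM.SES A E C) (ψ : E.F ⟶ Y.F) (h : s.f.F ≫ ψ = 0)
    (hC : VV C Y 0) : ψ = 0 := by
  have h0 : (Ext.mk₀ s.S.f).comp (Ext.mk₀ (X := s.S.X₂) ψ) (zero_add 0) = 0 :=
    (Ext.mk₀_comp_mk₀ _ _).trans ((Ext.mk₀_eq_zero_iff _).2 h)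
  obtain ⟨x, hx⟩ := Ext.contravariant_sequence_exact₂ s.ex' _ _ h0
  rw [show x = 0 from hC x, Ext.comp_zero] at hx
  exact (Ext.mk₀_eq_zero_iff _).1 hx.symm

theorem GM.SES.k2 {A E C Y : GM K σ} (s : GM.SES A E C) (h : ∀ ψ : E.F ⟶ Y.F, s.f.F ≫ ψ = 0)
    (hC : VV C Y (0 + 1)) : VV A Y 0 := by
  intro x
  obtain ⟨y, hy⟩ := Ext.contravariant_sequence_exact₁ s.ex' _ x (add_comm 1 0) (hC _)
  obtain ⟨φ, rfl⟩ := (Ext.mk₀_bijective _ _).2 y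
  exact hy.symm.trans ((Ext.mk₀_comp_mk₀ _ _).trans ((Ext.mk₀_eq_zero_iff _).2 (h φ)))

theorem mem_quotPieces {J : Ideal (MvPolynomial σ K)} {j : ℤ} {x : MvPolynomial σ K ⧸ J} :
    x ∈ quotPieces (homogeneousSubmodule σ K) J j ↔
      ∃ b ∈ WP (one' σ) j, Ideal.Quotient.mk J b = x := by
  rw [quotPieces, zg_eq]; rfl

theorem mono_WP {i : ℤ} (a : σ →₀ ℕ) {b : MvPolynomial σ K} (hb : b ∈ WP (one' σ) i) :
    monomial a (1 : K) * b ∈ WP (one' σ) (i + (a.degree : ℕ)) :=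
  WP_mul' (mono_mem a) hb (add_comm _ _)

/-- graded quotient of `B` -/
noncomputable abbrev quotGM (J : Ideal (MvPolynomial σ K)) : GM K σ where
  Q := MvPolynomial σ K ⧸ J
  p := quotPieces (homogeneousSubmodule σ K) J
  hp i a q h := by
    obtain ⟨b, hb, rfl⟩ := mem_quotPieces.1 h
    exact mem_quotPieces.2 ⟨_, mono_WP a hb, rfl⟩

/-- graded pieces of a free module -/
noncomputable def freeP {κ : Type} (s : κ → ℤ) (j : ℤ) : Submodule K (κ →₀ MvPolynomial σ K) where
  carrier := {f | ∀ k, f k ∈ zg (homogeneousSubmodule σ K) (j - s k)}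
  add_mem' := fun ha hb k => add_mem (ha k) (hb k)
  zero_mem' := fun k => zero_mem _
  smul_mem' := fun c x hx k => Submodule.smul_mem _ c (hx k)

theorem mem_freeGM {κ : Type} {s : κ → ℤ} {j : ℤ} {f : κ →₀ MvPolynomial σ K} :
    f ∈ freeP (K := K) (σ := σ) s j ↔ ∀ k, f k ∈ WP (one' σ) (j - s k) := by
  rw [← forall_congr' (fun k => by rw [← zg_eq])]; rfl

/-- graded free module -/
noncomputable abbrev freeGM {κ : Type} (s : κ → ℤ) : GM K σ where
  Q := κ →₀ MvPolynomial σ K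
  p j := freeP s j
  hp i a q h := by
    rw [mem_freeGM] at h ⊢
    intro k
    have := mono_WP a (h k)
    rw [show i - s k + ((a.degree : ℕ) : ℤ) = i + ((a.degree : ℕ) : ℤ) - s k by ring] at this
    exact this

theorem free_span {κ : Type} {s : κ → ℤ} {j : ℤ} {f : κ →₀ MvPolynomial σ K}
    (hf : f ∈ freeP (K := K) (σ := σ) s j) : f ∈ Submodule.span K
    {x | ∃ k, ∃ a : σ →₀ ℕ, (s k + (a.degree : ℕ) = j ∧ coeff a (f k) ≠ 0) ∧
      x = monomial a (1 : K) • (Finsupp.single k (1 : MvPolynomial σ K))} := by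
  rw [mem_freeGM] at hf
  suffices key : ∀ k, Finsupp.single k (f k) ∈ Submodule.span K
    {x | ∃ k, ∃ a : σ →₀ ℕ, (s k + (a.degree : ℕ) = j ∧ coeff a (f k) ≠ 0) ∧
      x = monomial a (1 : K) • (Finsupp.single k (1 : MvPolynomial σ K))} by
    have h := Submodule.sum_mem _ (fun k (_ : k ∈ f.support) => key k)
    rwa [show ∑ k ∈ f.support, Finsupp.single k (f k) = f from Finsupp.sum_single f] at h
  intro k
  have : Finsupp.single k (f k) = ∑ a ∈ (f k).support,
      coeff a (f k) • monomial a (1 : K) • Finsupp.single k (1 : MvPolynomial σ K) := by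
    conv_lhs => rw [(f k).as_sum]
    rw [← Finsupp.singleAddHom_apply, map_sum]
    refine Finset.sum_congr rfl fun a _ => ?_
    rw [Finsupp.singleAddHom_apply, Finsupp.smul_single, Finsupp.smul_single, smul_eq_mul, mul_one,
      smul_monomial, smul_eq_mul, mul_one]
  rw [this]
  refine Submodule.sum_mem _ fun a ha => Submodule.smul_mem _ _ (Submodule.subset_span ?_)
  have ha := mem_support_iff.1 ha
  have := hf k ha
  rw [weight_one'] at this
  exact ⟨k, a, ⟨by omega, ha⟩, rfl⟩

noncomputable def freeFr {κ : Type} (s : κ → ℤ) : IsFr (freeGM (K := K) (σ := σ) s) s where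
  e k := (Finsupp.single k (1 : MvPolynomial σ K) : κ →₀ MvPolynomial σ K)
  li := (Finsupp.basisSingleOne (R := MvPolynomial σ K) (ι := κ)).linearIndependent.comp id Function.injective_id
  mem k := by
    classical
    rw [mem_freeGM]
    intro k'
    rw [Finsupp.single_apply]
    split_ifs with h
    · subst h; rw [sub_self]; exact isWeightedHomogeneous_one _ _
    · exact zero_mem _
  span j q hq := by
    refine Submodule.span_mono ?_ (free_span hq)
    rintro _ ⟨k, a, ⟨h, _⟩, rfl⟩
    exact ⟨k, a, h, rfl⟩

/-- `E` has separated pieces -/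
def Sep (E : GM K σ) : Prop := ∀ x : ℤ →₀ E.Q, (∀ i, x i ∈ E.p i) → ∀ j,
  x.sum (fun _ y => y) ∈ E.p j → x.sum (fun _ y => y) = x j

theorem sum_wc (x : ℤ →₀ MvPolynomial σ K) (c : ℤ) (hx : ∀ i, x i ∈ WP (one' σ) (i - c)) (j : ℤ) :
    wc (one' σ) (j - c) (x.sum (fun _ y => y)) = x j := by
  rw [Finsupp.sum, map_sum, Finset.sum_eq_single j]
  · exact wc_self (hx j)
  · intro i _ hi; rw [wc_of_mem (hx i), if_neg (by omega)]
  · intro h; rw [Finsupp.notMem_support_iff.1 h, map_zero]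

theorem sep_free {κ : Type} (s : κ → ℤ) : Sep (freeGM (K := K) (σ := σ) s) := by
  intro (x : ℤ →₀ (κ →₀ MvPolynomial σ K)) hx j hj
  apply Finsupp.ext
  intro k
  have h1 := mem_freeGM.1 hj k
  have h2 := sum_wc (x.mapRange (fun f : κ →₀ MvPolynomial σ K => f k) rfl) (s k)
    (fun i => mem_freeGM.1 (hx i) k) j
  have h3 : (x.mapRange (fun f : κ →₀ MvPolynomial σ K => f k) rfl).sum (fun _ y => y) =
      (x.sum (fun _ y => y) : κ →₀ MvPolynomial σ K) k := by
    rw [Finsupp.sum_mapRange_index (by simp)]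
    rw [Finsupp.sum, Finsupp.sum, Finsupp.finsetSum_apply]
  rw [h3, wc_self h1] at h2
  exact h2

theorem sep_quot {J : Ideal (MvPolynomial σ K)} (hJ : ∀ b ∈ J, ∀ n, wc (one' σ) n b ∈ J) :
    Sep (quotGM J) := by
  intro x hx j hj
  choose b hb hbx using fun i => mem_quotPieces.1 (hx i)
  obtain ⟨c, hc, hcx⟩ := mem_quotPieces.1 hj
  have h1 : c - ∑ i ∈ insert j x.support, b i ∈ J := by
    rw [← Ideal.Quotient.eq, hcx, map_sum, Finsupp.sum]
    rw [Finset.sum_congr rfl (fun i _ => hbx i)]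
    refine Finset.sum_subset (Finset.subset_insert _ _) fun i _ hi => ?_
    exact Finsupp.notMem_support_iff.1 hi
  have h2 := hJ _ h1 j
  rw [map_sub, wc_self hc, map_sum, Finset.sum_eq_single j] at h2
  · rw [wc_self (hb j), ← Ideal.Quotient.eq, hcx, hbx] at h2; exact h2
  · intro i _ hi; rw [wc_of_mem (hb i), if_neg (Ne.symm hi)]
  · intro h; simp at h

theorem free_full {κ : Type} (s : κ → ℤ) (f : κ →₀ MvPolynomial σ K) :
    f ∈ ⨆ j, (freeGM (K := K) (σ := σ) s).p j := by
  induction f using Finsupp.induction_linear with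
  | zero => exact zero_mem _
  | add f g hf hg => exact add_mem hf hg
  | single k b =>
    obtain ⟨t, _, h⟩ := exists_sum (w := one' σ) b 0
    rw [← h, ← Finsupp.singleAddHom_apply, map_sum]
    refine Submodule.sum_mem _ fun i _ => ?_
    refine Submodule.mem_iSup_of_mem (i + s k) ?_
    refine mem_freeGM.2 fun k' => ?_
    classical
    rw [Finsupp.singleAddHom_apply, Finsupp.single_apply]
    split_ifs with h
    · subst h; rw [add_sub_cancel_right]; exact wc_mem _ _
    · exact zero_mem _

theorem graded_lift {κ : Type} {s : κ → ℤ} {E : GM K σ} (hE : Sep E)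
    (φ : (freeGM (K := K) (σ := σ) s).Hom E) (f : κ →₀ MvPolynomial σ K) {j : ℤ}
    (h : φ.f f ∈ E.p j) : ∃ f' ∈ (freeGM (K := K) (σ := σ) s).p j, φ.f f' = φ.f f := by
  obtain ⟨x, hx, e⟩ := (Submodule.mem_iSup_iff_exists_finsupp _ _).1 (free_full s f)
  refine ⟨x j, hx j, ?_⟩
  have h1 := hE (x.mapRange φ.f (map_zero _)) (fun i => φ.h _ _ (hx i)) j
  have h2 : (x.mapRange φ.f (map_zero _)).sum (fun _ y => y) = φ.f f := by
    rw [Finsupp.sum_mapRange_index (by simp), ← e, Finsupp.sum, Finsupp.sum]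
    exact (map_sum _ _ _).symm
  rw [h2] at h1
  exact (h1 h).symm

variable {J : Ideal (MvPolynomial σ K)} (hJ : ∀ b ∈ J, ∀ n, wc (one' σ) n b ∈ J)
  (R : MinGradedFreeRes K (MvPolynomial σ K)
        (zg (homogeneousSubmodule σ K))
        (irrel (homogeneousSubmodule σ K))
        (MvPolynomial σ K ⧸ J)
        (quotPieces (homogeneousSubmodule σ K) J))

noncomputable def Kr : (i : ℕ) → Submodule (MvPolynomial σ K) (R.ι i →₀ MvPolynomial σ K)
  | 0 => LinearMap.ker R.ε
  | i + 1 => LinearMap.ker (R.d i)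

noncomputable def Syz : ℕ → GM K σ
  | 0 => quotGM J
  | i + 1 =>
    { Q := R.ι i →₀ MvPolynomial σ K
      p := fun j => (freeGM (K := K) (σ := σ) (R.σ i)).p j ⊓ (Kr R i).restrictScalars K
      hp := fun n a q h => ⟨(freeGM (R.σ i)).hp n a q h.1, (Kr R i).smul_mem _ h.2⟩ }

noncomputable abbrev FF (i : ℕ) : GM K σ := freeGM (K := K) (σ := σ) (R.σ i)

noncomputable def inc (i : ℕ) : (Syz R (i + 1)).Hom (FF R i) where
  f := (LinearMap.id : (R.ι i →₀ MvPolynomial σ K) →ₗ[MvPolynomial σ K] _)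
  h j q hq := hq.1

noncomputable def epsH : (FF R 0).Hom (Syz R 0) where
  f := R.ε
  h j q hq := R.graded_ε j q hq

theorem Kr_eq : ∀ (i : ℕ) (f), f ∈ Kr R i ↔ ∃ g, R.d i g = f
  | 0, f => R.exact_ε f
  | i + 1, f => R.exact_d i f

noncomputable def dH' (i : ℕ) : (FF R (i + 1)).Hom (FF R i) where
  f := R.d i
  h j q hq := R.graded_d i j q hq

noncomputable def dH (i : ℕ) : (FF R (i + 1)).Hom (Syz R (i + 1)) where
  f := R.d i
  h j q hq := ⟨R.graded_d i j q hq, (Kr_eq R i _).2 ⟨q, rfl⟩⟩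

include hJ in
noncomputable def sesR : (i : ℕ) → GM.SES (Syz R (i + 1)) (FF R i) (Syz R i)
  | 0 =>
    { f := inc R 0
      g := epsH R
      inj := fun j q _ h => h
      zero := fun j q hq => hq.2
      ex := fun j q hq h => ⟨q, ⟨hq, h⟩, rfl⟩
      surj := fun j q hq => by
        obtain ⟨f, rfl⟩ := R.surj q
        exact graded_lift (sep_quot hJ) (epsH R) f hq }
  | i + 1 =>
    { f := inc R (i + 1)
      g := dH R i
      inj := fun j q _ h => h
      zero := fun j q hq => hq.2
      ex := fun j q hq h => ⟨q, ⟨hq, h⟩, rfl⟩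
      surj := fun j q hq => by
        obtain ⟨f, rfl⟩ := (Kr_eq R i _).1 hq.2
        exact graded_lift (sep_free _) (dH' R i) f hq.1 }

theorem sesR_f (i : ℕ) : (sesR hJ R i).f = inc R i := by cases i <;> rfl

theorem irrel_mm : irrel (homogeneousSubmodule σ K) ≤ mm K σ := by
  rw [irrel, Ideal.span_le]
  intro b hb
  obtain ⟨n, hn⟩ := Set.mem_iUnion.1 hb
  have : constantCoeff b = 0 := by
    by_contra h
    have := (mem_homogeneousSubmodule _ _).1 hn h
    simp at this
  exact this

theorem smul_top_mm {κ : Type} {𝔪 : Ideal (MvPolynomial σ K)} {f : κ →₀ MvPolynomial σ K}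
    (hf : f ∈ 𝔪 • (⊤ : Submodule (MvPolynomial σ K) (κ →₀ MvPolynomial σ K))) (k : κ) : f k ∈ 𝔪 := by
  refine Submodule.smul_induction_on hf (fun r hr n _ => ?_) (fun x y hx hy => ?_)
  · exact Ideal.mul_mem_right _ _ hr
  · exact add_mem hx hy

theorem kill {i : ℕ} {j : ℤ} (φ : (FF R i).F ⟶ (kk K σ j).F) : (inc R i).F ≫ φ = 0 := by
  ext n q
  obtain ⟨f, hf⟩ := q
  revert hf
  change (R.ι i →₀ MvPolynomial σ K) at f
  intro hf
  have hk : ∀ k, coeff 0 (f k) = 0 := by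
    obtain ⟨g, rfl⟩ := (Kr_eq R i f).1 hf.2
    intro k
    exact irrel_mm (smul_top_mm (R.minimal i g) k)
  have h1 := free_span hf.1
  have h2 : Submodule.span K
    {x | ∃ k, ∃ a : σ →₀ ℕ, (R.σ i k + (a.degree : ℕ) = n.d ∧ coeff a (f k) ≠ 0) ∧
      x = monomial a (1 : K) • (Finsupp.single k (1 : MvPolynomial σ K))} ≤
      (LinearMap.ker (φ.app n).hom).map ((FF R i).p n.d).subtype := by
    rw [Submodule.span_le]
    rintro _ ⟨k, a, ⟨h3, h4⟩, rfl⟩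
    refine ⟨(freeFr (R.σ i)).v n.d ⟨(k, a), h3⟩, ?_, rfl⟩
    refine (freeFr (R.σ i)).app_kk φ n ⟨(k, a), h3⟩ (Or.inr ?_)
    rintro rfl
    exact h4 (hk k)
  obtain ⟨y, hy, e⟩ := h2 h1
  have : y = ⟨f, hf.1⟩ := Subtype.ext e
  subst this
  exact hy

include hJ in
theorem VV_Syz_zero (i : ℕ) (j : ℤ) : VV (Syz R i) (kk K σ j) 0 ↔ ∀ k, R.σ i k ≠ j := by
  constructor
  · rintro h k rfl
    refine (freeFr (K := K) (σ := σ) (R.σ i)).cof_ne k ((sesR hJ R i).k1 _ ?_ h)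
    rw [sesR_f]; exact kill R _
  · intro h
    exact (sesR hJ R i).L2z ((freeFr (R.σ i)).VV_zero h)

include hJ in
theorem VV_Syz_succ (n i : ℕ) (j : ℤ) :
    VV (Syz R i) (kk K σ j) (n + 1) ↔ VV (Syz R (i + 1)) (kk K σ j) n := by
  constructor
  · intro h
    rcases n with _ | n
    · refine (sesR hJ R i).k2 (fun ψ => ?_) h
      rw [sesR_f]; exact kill R _
    · exact (sesR hJ R i).L3 ((freeFr (R.σ i)).VV_succ _ _) h
  · intro h
    exact (sesR hJ R i).L2 ((freeFr (R.σ i)).VV_succ _ _) h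

include hJ in
theorem VV_R (n : ℕ) (j : ℤ) : VV (quotGM J) (kk K σ j) n ↔ ∀ k, R.σ n k ≠ j := by
  have : ∀ n i, VV (Syz R i) (kk K σ j) n ↔ ∀ k, R.σ (i + n) k ≠ j := by
    intro n
    induction n with
    | zero => intro i; exact VV_Syz_zero hJ R i j
    | succ n ih =>
      intro i
      rw [VV_Syz_succ hJ, ih, show i + 1 + n = i + (n + 1) by ring]
  have h := this n 0
  rw [zero_add] at h
  exact h

include hJ in
theorem reg_eq {ρ : ℤ} (hu : ∀ i : ℕ, ∀ j : ℤ, ρ < j - i → VV (quotGM J) (kk K σ j) i)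
    (hl : ∃ i : ℕ, ¬ VV (quotGM J) (kk K σ (ρ + i)) i) : R.reg = ρ := by
  rw [MinGradedFreeRes.reg]
  apply IsGreatest.csSup_eq
  constructor
  · obtain ⟨i, hi⟩ := hl
    rw [VV_R hJ R] at hi
    push Not at hi
    obtain ⟨k, hk⟩ := hi
    exact ⟨i, k, by rw [hk]; ring⟩
  · rintro x ⟨i, k, rfl⟩
    by_contra h
    exact (VV_R hJ R i _).1 (hu i (R.σ i k) (by omega)) k rfl

end I
end PfReg

end FilePI

section FilePJ
set_option linter.unusedSectionVars false
namespace PfReg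
section J
open MvPolynomial

variable {K τ G : Type*} [Field K] [AddCommGroup G] [DecidableEq G] {w : τ → G} {δ : G}
variable {ι : Type*} [Fintype ι] [DecidableEq ι]

theorem pfaffian_WP : ∀ (n : ℕ) (A : Matrix (Fin (2 * n)) (Fin (2 * n)) (MvPolynomial τ K)),
    (∀ i j, A i j ∈ WP w δ) → pfaffian (2 * n) A ∈ WP w (n • δ)
  | 0, A, _ => by rw [zero_smul]; exact isWeightedHomogeneous_one _ _
  | n + 1, A, h => by
    refine Submodule.sum_mem (WP w ((n + 1) • δ)) fun j _ => ?_
    refine WP_mul' (i := δ) (j := n • δ) ?_ ?_ (by rw [succ_nsmul, add_comm])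
    · rcases neg_one_pow_eq_or (MvPolynomial τ K) (j : ℕ) with e | e <;> rw [e]
      · rw [one_mul]; exact h _ _
      · rw [neg_one_mul]; exact neg_mem (h _ _)
    · exact pfaffian_WP n _ fun _ _ => h _ _

variable {M : ι → ι → MvPolynomial τ K} (hM : Alt M) (hd : ∀ a b, M a b ∈ WP w δ)
include hM hd

theorem pf_WP {l : List ι} {n : ℕ} (hl : l.length = 2 * n) : pf M l ∈ WP w (n • δ) := by
  obtain ⟨f, rfl⟩ : ∃ f : Fin (2 * n) → ι, List.ofFn f = l :=
    ⟨fun i => l.get (i.cast hl.symm), by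
      apply List.ext_get
      · simp [hl]
      · intro i h1 h2; simp⟩
  rw [← pfaffian_eq hM]
  exact pfaffian_WP n _ fun _ _ => hd _ _

theorem om_dl_WP {l : List ι} (hn : l.Nodup) {n : ℕ} (hl : l.length = 2 * n + 2) (a b : ι) :
    om M l (dl a) (dl b) ∈ WP w (n • δ) := by
  by_cases ha : a ∈ l
  swap
  · rw [om_congr (u' := 0) (v' := dl b) (fun i hi => by
      simp [show i ≠ a from fun e => ha (e ▸ hi)]) (fun _ _ => rfl)]
    simp
  by_cases hb : b ∈ l
  swap
  · rw [om_congr (u' := dl a) (v' := 0)  (fun _ _ => rfl) (fun i hi => by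
      simp [show i ≠ b from fun e => hb (e ▸ hi)])]
    simp
  by_cases hab : a = b
  · subst hab; rw [om_alt]; exact zero_mem _
  have hp1 := List.perm_cons_erase ha
  have hb' : b ∈ l.erase a := (List.mem_erase_of_ne (Ne.symm hab)).2 hb
  have hp := hp1.trans (List.Perm.cons a (List.perm_cons_erase hb'))
  have hn' := hp.nodup_iff.1 hn
  have hlen := hp.length_eq
  simp only [List.length_cons] at hlen
  have hpf := pf_WP hM hd (l := (l.erase a).erase b) (n := n) (by omega)
  rw [List.nodup_cons, List.nodup_cons] at hn'
  rcases om_perm (M := M) hp with e | e <;> rw [e]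
  · rw [om_dl2 hn'.1 hn'.2.1]; exact neg_mem hpf
  · rw [LinearMap.neg_apply, LinearMap.neg_apply, om_dl2 hn'.1 hn'.2.1, neg_neg]; exact hpf

omit hM hd
theorem om_exp (l : List ι) (v : ι → MvPolynomial τ K) (x : ι → MvPolynomial τ K) :
    om M l v x = ∑ b, x b * om M l v (dl b) := by
  conv_lhs => rw [pi_eq_sum_univ' x]
  rw [map_sum]
  refine Finset.sum_congr rfl fun b _ => ?_
  rw [map_smul, smul_eq_mul]

include hM hd
theorem om_WP1 {l : List ι} (hn : l.Nodup) {n : ℕ} (hl : l.length = 2 * n + 2) {d : G}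
    {v : ι → MvPolynomial τ K} (hv : ∀ a, v a ∈ WP w d) (b : ι) :
    om M l v (dl b) ∈ WP w (d + n • δ) := by
  rw [om_skew, om_exp]
  exact neg_mem (Submodule.sum_mem _ fun a _ => WP_mul (hv a) (om_dl_WP hM hd hn hl _ _))

theorem om_wc {l : List ι} (hn : l.Nodup) {n : ℕ} (hl : l.length = 2 * n + 2) {d : G}
    {v : ι → MvPolynomial τ K} (hv : ∀ a, v a ∈ WP w d) (x : ι → MvPolynomial τ K) (e : G) :
    wc w e (om M l v x) = om M l v (fun b => wc w (e - (d + n • δ)) (x b)) := by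
  rw [om_exp, map_sum, om_exp l v (fun b => _)]
  refine Finset.sum_congr rfl fun b _ => ?_
  rw [mul_comm, wc_mul' (om_WP1 hM hd hn hl hv b), mul_comm]

theorem om_WP {l : List ι} (hn : l.Nodup) {n : ℕ} (hl : l.length = 2 * n + 2) {d d' e : G}
    {v x : ι → MvPolynomial τ K} (hv : ∀ a, v a ∈ WP w d) (hx : ∀ a, x a ∈ WP w d')
    (h : d' + (d + n • δ) = e) : om M l v x ∈ WP w e := by
  rw [om_exp]
  exact Submodule.sum_mem _ fun b _ => WP_mul' (hx b) (om_WP1 hM hd hn hl hv b) h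
omit hM

theorem NZ_wc {l : List ι} {v : ι → MvPolynomial τ K} (hv : v ∈ NZ M l) :
    ∀ e, (fun b => wc w e (v b)) ∈ NZ M l := by
  have hh : ∀ c : MvPolynomial τ K, ∀ x, ((∃ a ∈ l, x = M a) ∨ ∀ i ∈ l, x i = 0) → ∀ e : G,
      (fun b => wc w e ((c • x) b)) ∈ NZ M l := by
    rintro c x (⟨a, ha, rfl⟩ | h) e
    · have : (fun b => wc w e ((c • M a) b)) = wc w (e - δ) c • M a := by
        funext b
        rw [Pi.smul_apply, Pi.smul_apply, smul_eq_mul, mul_comm, wc_mul' (hd a b), smul_eq_mul, mul_comm]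
      rw [this]; exact Submodule.smul_mem _ _ (NZ_mem ha)
    · refine Submodule.subset_span (Or.inr fun i hi => ?_)
      simp [h i hi]
  induction hv using Submodule.closure_induction with
  | zero => intro e; simp; exact zero_mem _
  | add x y _ _ hx hy => intro e; simp only [Pi.add_apply, map_add]; exact add_mem (hx e) (hy e)
  | smul_mem c x h => exact hh c x h

omit hd
theorem span_wc {g : MvPolynomial τ K} {d : G} (hg : g ∈ WP w d) {a : MvPolynomial τ K}
    (ha : a ∈ Ideal.span {g}) {e : G} (hh : a ∈ WP w e) : ∃ b ∈ WP w (e - d), a = g * b := by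
  obtain ⟨b, rfl⟩ := Ideal.mem_span_singleton'.1 ha
  refine ⟨wc w (e - d) b, wc_mem _ _, ?_⟩
  rw [← wc_mul' hg, mul_comm g b, wc_self hh]

/-- closed under taking components -/
def HC (w : τ → G) (J : Ideal (MvPolynomial τ K)) : Prop := ∀ b ∈ J, ∀ n, wc w n b ∈ J

theorem HC_span {S : Set (MvPolynomial τ K)} (hS : ∀ s ∈ S, ∃ d, s ∈ WP w d) : HC w (Ideal.span S) := by
  intro b hb
  induction hb using Submodule.closure_induction with
  | zero => intro n; rw [map_zero]; exact zero_mem _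
  | add x y _ _ hx hy => intro n; rw [map_add]; exact add_mem (hx n) (hy n)
  | smul_mem c x h =>
    intro n
    obtain ⟨d, hd⟩ := hS x h
    rw [smul_eq_mul, mul_comm, wc_mul' hd]
    exact Ideal.mul_mem_right _ _ (Ideal.subset_span h)

theorem HC_mul {J J' : Ideal (MvPolynomial τ K)} (h : HC w J) (h' : HC w J') : HC w (J * J') := by
  intro b hb
  induction hb using Submodule.mul_induction_on' with
  | mem_mul_mem a ha b hb =>
    intro n
    obtain ⟨s, _, e⟩ := exists_sum (w := w) a 0
    rw [← e, Finset.sum_mul, map_sum]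
    refine Submodule.sum_mem _ fun i _ => ?_
    rw [wc_mul' (wc_mem i a)]
    exact Ideal.mul_mem_mul (h _ ha _) (h' _ hb _)
  | add x _ y _ hx hy => intro n; rw [map_add]; exact add_mem (hx n) (hy n)

theorem HC_pow {J : Ideal (MvPolynomial τ K)} (h : HC w J) : ∀ m : ℕ, HC w (J ^ m)
  | 0 => fun _ _ _ => by rw [pow_zero, Ideal.one_eq_top]; trivial
  | m + 1 => by rw [pow_succ]; exact HC_mul (HC_pow h m) h

end J
end PfReg

end FilePJ

section FilePK
set_option linter.unusedSectionVars false
namespace PfReg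
section Kk
open MvPolynomial

variable {K σ : Type} [Field K]

/-- the extended ring -/
abbrev PP (K σ : Type) [Field K] := MvPolynomial (σ ⊕ Fin 3) K

noncomputable abbrev rn : MvPolynomial σ K →ₐ[K] PP K σ := rename Sum.inl

noncomputable instance instAlgPP : Algebra (MvPolynomial σ K) (PP K σ) :=
  (rn (K := K) (σ := σ)).toRingHom.toAlgebra

theorem smul_PP (b : MvPolynomial σ K) (p : PP K σ) : b • p = rn b * p := rfl

instance instTowPP : IsScalarTower K (MvPolynomial σ K) (PP K σ) :=
  ⟨fun c b p => by rw [smul_PP, smul_PP, map_smul, smul_mul_assoc]⟩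

def wtN : σ ⊕ Fin 3 → ℕ := Sum.elim (fun _ => 0) (fun _ => 1)
def wt : σ ⊕ Fin 3 → ℤ := Sum.elim (fun _ => 0) (fun _ => 1)
def w2 (r : ℤ) : σ ⊕ Fin 3 → ℤ × ℤ := Sum.elim (fun _ => (1, 0)) (fun _ => (r, 1))

theorem weight_wt (a : σ ⊕ Fin 3 →₀ ℕ) : Finsupp.weight wt a = ((Finsupp.weight wtN a : ℕ) : ℤ) := by
  rw [Finsupp.weight_apply, Finsupp.weight_apply, Finsupp.sum, Finsupp.sum, Nat.cast_sum]
  refine Finset.sum_congr rfl fun i _ => ?_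
  rcases i with i | i <;> simp [wt, wtN]

theorem weight_w2 (r : ℤ) (a : σ ⊕ Fin 3 →₀ ℕ) : (Finsupp.weight (w2 r) a).2 = Finsupp.weight wt a := by
  rw [Finsupp.weight_apply, Finsupp.weight_apply, Finsupp.sum, Finsupp.sum, Prod.snd_sum]
  refine Finset.sum_congr rfl fun i _ => ?_
  rcases i with i | i <;> simp [wt, w2]

theorem WP_w2_wt {r j m : ℤ} {F : PP K σ} (h : F ∈ WP (w2 r) (j, m)) : F ∈ WP wt m := by
  intro a ha
  rw [← weight_w2 r, h ha]

theorem rn_WP {r j : ℤ} {b : MvPolynomial σ K} : rn b ∈ WP (w2 r) (j, 0) ↔ b ∈ WP (one' σ) j := by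
  have hw : ∀ a : σ →₀ ℕ, Finsupp.weight (w2 r) (a.mapDomain Sum.inl) = (Finsupp.weight (one' σ) a, 0) := by
    intro a
    rw [Finsupp.weight_apply, Finsupp.weight_apply, Finsupp.sum_mapDomain_index (by simp) (by intros; rw [add_smul])]
    simp [w2, Finsupp.sum, Prod.ext_iff, Prod.fst_sum, Prod.snd_sum]
  constructor
  · intro h a ha
    have := h (d := a.mapDomain Sum.inl) (by rwa [coeff_rename_mapDomain _ Sum.inl_injective])
    rw [hw] at this
    exact (Prod.ext_iff.1 this).1
  · intro h a ha
    obtain ⟨a', rfl, ha'⟩ := coeff_rename_ne_zero _ _ _ ha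
    rw [hw, h ha']

theorem rn_wt (b : MvPolynomial σ K) : rn b ∈ WP wt 0 := by
  intro a ha
  obtain ⟨a', rfl, ha'⟩ := coeff_rename_ne_zero _ _ _ ha
  rw [Finsupp.weight_apply, Finsupp.sum_mapDomain_index (by simp) (by intros; rw [add_smul])]
  simp [wt]

theorem rn_inj : Function.Injective (rn (K := K) (σ := σ)) := rename_injective _ Sum.inl_injective

theorem mon_mem {r : ℤ} (α : Fin 3 →₀ ℕ) :
    (monomial (α.mapDomain Sum.inr) (1 : K) : PP K σ) ∈ WP (w2 r) (r * (α.degree : ℕ), ((α.degree : ℕ) : ℤ)) := by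
  refine isWeightedHomogeneous_monomial _ _ _ ?_
  rw [Finsupp.weight_apply, Finsupp.sum_mapDomain_index (by simp) (by intros; rw [add_smul])]
  simp [w2, Finsupp.sum, Prod.ext_iff, Prod.fst_sum, Prod.snd_sum, Finsupp.degree_apply, Finset.mul_sum, mul_comm]

theorem mon_split (a : σ ⊕ Fin 3 →₀ ℕ) : ∃ (x : σ →₀ ℕ) (α : Fin 3 →₀ ℕ),
    a = x.mapDomain Sum.inl + α.mapDomain Sum.inr := by
  induction a using Finsupp.induction_linear with
  | zero => exact ⟨0, 0, by simp⟩
  | add a b ha hb =>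
    obtain ⟨x, α, rfl⟩ := ha
    obtain ⟨y, β, rfl⟩ := hb
    exact ⟨x + y, α + β, by rw [Finsupp.mapDomain_add, Finsupp.mapDomain_add]; abel⟩
  | single i n =>
    rcases i with i | i
    · exact ⟨Finsupp.single i n, 0, by simp⟩
    · exact ⟨0, Finsupp.single i n, by simp⟩

noncomputable def unP : PP K σ →+* MvPolynomial (Fin 3) (MvPolynomial σ K) :=
  eval₂Hom (C.comp C) (Sum.elim (fun x => C (X x)) (fun i => X i))

theorem unP_rn (b : MvPolynomial σ K) : unP (rn b) = C b := by
  have : (unP (K := K) (σ := σ)).comp (rn (K := K) (σ := σ)).toRingHom = C := by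
    apply MvPolynomial.ringHom_ext
    · intro r; simp [unP]
    · intro i; simp [unP]
  exact RingHom.congr_fun this b

noncomputable def unPl : PP K σ →ₗ[MvPolynomial σ K] MvPolynomial (Fin 3) (MvPolynomial σ K) where
  toFun := unP
  map_add' := map_add _
  map_smul' b p := by rw [smul_PP, map_mul, unP_rn, RingHom.id_apply, smul_eq_C_mul]

theorem mon_li : LinearIndependent (MvPolynomial σ K)
    (fun α : Fin 3 →₀ ℕ => (monomial (α.mapDomain Sum.inr) (1 : K) : PP K σ)) := by
  apply LinearIndependent.of_comp unPl
  suffices e : (unPl (K := K) (σ := σ) ∘ fun α : Fin 3 →₀ ℕ =>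
      (monomial (α.mapDomain Sum.inr) (1 : K) : PP K σ)) =
      basisMonomials (Fin 3) (MvPolynomial σ K) by
    rw [e]; exact (basisMonomials (Fin 3) (MvPolynomial σ K)).linearIndependent
  funext α
  rw [coe_basisMonomials]
  change unP _ = _
  have : (unP (K := K) (σ := σ)).comp (rename (R := K) (Sum.inr : Fin 3 → σ ⊕ Fin 3)).toRingHom
      = MvPolynomial.map C := by
    apply MvPolynomial.ringHom_ext
    · intro r; simp [unP]
    · intro i; simp [unP]
  have h := RingHom.congr_fun this (monomial α (1 : K))
  rw [map_monomial, C_1] at h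
  refine Eq.trans ?_ h
  change unP _ = unP (rename _ _)
  rw [rename_monomial]

/-- free module of `T`-degree `m` -/
noncomputable abbrev PGM (r d m : ℤ) : GM K σ where
  Q := PP K σ
  p j := WP (w2 r) (j - d, m)
  hp i a q h := WP_mul' (rn_WP.2 (mono_mem a)) h (by ext <;> simp; ring)

noncomputable def PFr (r d m : ℤ) : IsFr (PGM (K := K) (σ := σ) r d m)
    (κ := {α : Fin 3 →₀ ℕ // ((α.degree : ℕ) : ℤ) = m}) (fun _ => d + r * m) where
  e α := monomial (α.1.mapDomain Sum.inr) (1 : K)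
  li := mon_li.comp _ Subtype.val_injective
  mem α := by
    have := mon_mem (K := K) (σ := σ) (r := r) α.1
    rw [α.2] at this
    change _ ∈ WP (w2 r) (_, _)
    rwa [add_sub_cancel_left]
  span j F hF := by
    rw [F.as_sum]
    refine Submodule.sum_mem _ fun a ha => ?_
    have hw := hF (mem_support_iff.1 ha)
    obtain ⟨x, α, rfl⟩ := mon_split a
    have e : (monomial (x.mapDomain Sum.inl + α.mapDomain Sum.inr) (1 : K) : PP K σ) =
        monomial x (1 : K) • monomial (α.mapDomain Sum.inr) (1 : K) := by
      rw [smul_PP, rename_monomial, monomial_mul, one_mul]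
    have h1 := (rn_WP (r := r)).2 (mono_mem (K := K) x)
    have h2 := mon_mem (K := K) (σ := σ) (r := r) α
    have h3 := WP_mul h1 h2
    rw [← smul_PP, ← e] at h3
    have h4 := h3 (d := x.mapDomain Sum.inl + α.mapDomain Sum.inr) (by
      classical rw [coeff_monomial, if_pos rfl]; exact one_ne_zero)
    rw [hw] at h4
    obtain ⟨h5, h6⟩ := Prod.ext_iff.1 h4
    simp only [Prod.fst_add, Prod.snd_add, zero_add] at h5 h6
    have e2 : (monomial (x.mapDomain Sum.inl + α.mapDomain Sum.inr)
      (coeff (x.mapDomain Sum.inl + α.mapDomain Sum.inr) F) : PP K σ) =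
      coeff (x.mapDomain Sum.inl + α.mapDomain Sum.inr) F •
        monomial (x.mapDomain Sum.inl + α.mapDomain Sum.inr) (1 : K) := by
      rw [smul_monomial, smul_eq_mul, mul_one]
    rw [e2, e]
    refine Submodule.smul_mem _ _ (Submodule.subset_span ⟨⟨α, h6.symm⟩, x, ?_, rfl⟩)
    rw [h6]; linarith

theorem single_li (ζ : Type) [Fintype ζ] [DecidableEq ζ] (m : ℤ) :
    LinearIndependent (MvPolynomial σ K)
      (fun x : Σ _ : ζ, {α : Fin 3 →₀ ℕ // ((α.degree : ℕ) : ℤ) = m} =>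
        (Pi.single x.1 (monomial (x.2.1.mapDomain Sum.inr) (1 : K)) : ζ → PP K σ)) :=
  Pi.linearIndependent_single (Ms := fun _ => PP K σ)
    (fun _ (α : {α : Fin 3 →₀ ℕ // ((α.degree : ℕ) : ℤ) = m}) =>
      (monomial (α.1.mapDomain Sum.inr) (1 : K) : PP K σ))
    (fun _ => mon_li.comp _ Subtype.val_injective)

/-- vectors indexed by `ζ` -/
noncomputable abbrev FZM (ζ : Type) (r d m : ℤ) : GM K σ where
  Q := ζ → PP K σ
  p j := Submodule.pi Set.univ fun _ => WP (w2 r) (j - d, m)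
  hp i a q h k _ := (PGM r d m).hp i a (q k) (h k trivial)

noncomputable def FZFr (ζ : Type) [Fintype ζ] [DecidableEq ζ] (r d m : ℤ) :
    IsFr (FZM (K := K) (σ := σ) ζ r d m)
    (κ := Σ _ : ζ, {α : Fin 3 →₀ ℕ // ((α.degree : ℕ) : ℤ) = m}) (fun _ => d + r * m) where
  e x := (Pi.single x.1 (monomial (x.2.1.mapDomain Sum.inr) (1 : K)) : ζ → PP K σ)
  li := single_li ζ m
  mem x := by
    intro z _
    by_cases h : z = x.1
    · subst h; rw [Pi.single_eq_same]; exact (PFr r d m).mem x.2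
    · rw [Pi.single_eq_of_ne h]; exact zero_mem _
  span j v hv := by
    have : v = ∑ z, Pi.single z (v z) := by rw [Finset.univ_sum_single]
    rw [this]
    refine Submodule.sum_mem _ fun z _ => ?_
    have h1 := Submodule.mem_map_of_mem (f := LinearMap.single K (fun _ : ζ => PP K σ) z)
      ((PFr r d m).span j (v z) (hv z trivial))
    rw [Submodule.map_span] at h1
    refine Submodule.span_mono ?_ h1
    rintro _ ⟨_, ⟨α, a, h2, rfl⟩, rfl⟩
    refine ⟨⟨z, α⟩, a, h2, ?_⟩
    change Pi.single z _ = _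
    rw [Pi.single_smul]; rfl

/-- image of pieces -/
noncomputable abbrev imGM (A : GM K σ) {Q' : Type} [AddCommGroup Q'] [Module (MvPolynomial σ K) Q']
    [Module K Q'] [IsScalarTower K (MvPolynomial σ K) Q'] (f : A.Q →ₗ[MvPolynomial σ K] Q') : GM K σ where
  Q := Q'
  p j := (A.p j).map (f.restrictScalars K)
  hp i a q h := by
    obtain ⟨x, hx, rfl⟩ := h
    exact ⟨_, A.hp i a x hx, map_smul f _ _⟩

noncomputable def imSES {A A' : GM K σ} {Q' : Type} [AddCommGroup Q'] [Module (MvPolynomial σ K) Q']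
    [Module K Q'] [IsScalarTower K (MvPolynomial σ K) Q'] (f : A.Q →ₗ[MvPolynomial σ K] Q')
    (φ : A'.Hom A) (inj : ∀ j, ∀ q ∈ A'.p j, φ.f q = 0 → q = 0)
    (zero : ∀ j, ∀ q ∈ A'.p j, f (φ.f q) = 0)
    (ex : ∀ j, ∀ q ∈ A.p j, f q = 0 → ∃ a ∈ A'.p j, φ.f a = q) : GM.SES A' A (imGM A f) where
  f := φ
  g := ⟨f, fun j q hq => ⟨q, hq, rfl⟩⟩
  inj := inj
  zero := zero
  ex := ex
  surj := fun j q hq => hq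

/-- regularity bound -/
def Rg (A : GM K σ) (ρ : ℤ) : Prop := ∀ (i : ℕ) (j : ℤ), ρ < j - i → VV A (kk K σ j) i

variable {A E D : GM K σ} {ρ ρ' : ℤ}
theorem Rg.fr {κ : Type} {s : κ → ℤ} (h : IsFr A s) (hs : ∀ k, s k ≤ ρ) : Rg A ρ := by
  intro i j hij
  rcases i with _ | i
  · exact h.VV_zero fun k => by have := hs k; simp at hij; omega
  · exact h.VV_succ _ _

theorem Rg.c (s : GM.SES A E D) (hE : Rg E ρ) (hA : Rg A (ρ + 1)) : Rg D ρ := by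
  intro i j hij
  rcases i with _ | i
  · exact s.L2z (hE 0 j hij)
  · exact s.L2 (hE _ j hij) (hA i j (by push_cast at hij; linarith))

theorem Rg.a (s : GM.SES A E D) (hE : Rg E ρ) (hD : Rg D (ρ - 1)) : Rg A ρ := by
  intro i j hij
  exact s.L3 (hE i j hij) (hD (i + 1) j (by push_cast; linarith))

theorem Rg.e (s : GM.SES A E D) (hA : Rg A ρ) (hD : Rg D ρ) : Rg E ρ := by
  intro i j hij
  exact s.L1 (hA i j hij) (hD i j hij)

theorem Rg.mono (h : Rg A ρ) (hr : ρ ≤ ρ') : Rg A ρ' := fun i j hij => h i j (by linarith)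

end Kk
end PfReg

end FilePK

section FilePL
set_option linter.unusedSectionVars false
namespace PfReg
section Ll
open MvPolynomial

variable {K σ : Type} [Field K]

theorem hom_scale {R' : Type*} [CommRing R'] {φ ψ : PP K σ →+* R'} {c : R'}
    (hC : ∀ a, φ (C a) = ψ (C a)) (hl : ∀ i, φ (X (Sum.inl i)) = ψ (X (Sum.inl i)))
    (hr : ∀ i, φ (X (Sum.inr i)) = c * ψ (X (Sum.inr i))) {m : ℕ} {p : PP K σ}
    (hp : p ∈ WP wt (m : ℤ)) : φ p = c ^ m * ψ p := by
  have key : ∀ a : σ ⊕ Fin 3 →₀ ℕ, φ (monomial a 1) = c ^ (Finsupp.weight wtN a) * ψ (monomial a 1) := by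
    intro a
    induction a using Finsupp.induction_linear with
    | zero => rw [map_zero, pow_zero, one_mul]; exact hC 1
    | add a b ha hb =>
      rw [← one_mul (1 : K), ← monomial_mul, map_mul, map_mul, ha, hb, map_add, pow_add]; ring
    | single i n =>
      rw [← X_pow_eq_monomial, map_pow, map_pow, Finsupp.weight_apply,
        Finsupp.sum_single_index (by simp)]
      rcases i with i | i
      · rw [hl]; simp [wtN]
      · rw [hr]; simp [wtN, mul_pow]
  rw [p.as_sum, map_sum, map_sum, Finset.mul_sum]
  refine Finset.sum_congr rfl fun a ha => ?_
  have hw := hp (mem_support_iff.1 ha)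
  rw [weight_wt] at hw
  have hw : Finsupp.weight wtN a = m := by exact_mod_cast hw
  rw [← mul_one (coeff a p), ← C_mul_monomial, map_mul, map_mul, key, hC, hw]; ring

variable {ι : Type} [Fintype ι] [DecidableEq ι]

structure GD (M : ι → ι → PP K σ) extends Gen3 M where
  f : Fin 3 → MvPolynomial σ K
  hf : ∀ i, rn (f i) = toGen3.F i
  g0 : MvPolynomial σ K
  hg0 : rn g0 = toGen3.g
  Mr : ∀ a b, ∃ x ∈ WP (one' σ) 1, rn x = M a b
  hT : ∀ i, T i = X (Sum.inr i)

namespace GD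
variable {M : ι → ι → PP K σ} (𝒯 : GD M)

include 𝒯
theorem hZ : 𝒯.Z.length = 2 * 𝒯.n + 2 := by simp [Gen3.Z, 𝒯.hl]
theorem hZ' : 𝒯.Z.length = 2 * (𝒯.n + 1) := by rw [hZ]; ring
theorem ndZ : 𝒯.Z.Nodup := Gen.nodup 𝒯.glZ

noncomputable abbrev r : ℤ := (𝒯.n : ℤ) + 2
theorem M2 (ρ : ℤ) (a b : ι) : M a b ∈ WP (w2 ρ) ((1 : ℤ), (0 : ℤ)) := by
  obtain ⟨x, h, e⟩ := 𝒯.Mr a b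
  rw [← e]; exact rn_WP.2 h
theorem M0 (a b : ι) : M a b ∈ WP wt 0 := WP_w2_wt (𝒯.M2 0 a b)
theorem T2 (ρ : ℤ) (i : Fin 3) : 𝒯.T i ∈ WP (w2 ρ) (ρ, (1 : ℤ)) := by
  rw [𝒯.hT]; exact isWeightedHomogeneous_X _ _ _
theorem u2 (ρ : ℤ) (a : ι) : 𝒯.u a ∈ WP (w2 ρ) (ρ + 1, (1 : ℤ)) := by
  have h : ∀ i, 𝒯.T i * M (𝒯.o i) a ∈ WP (w2 ρ) (ρ + 1, (1 : ℤ)) := fun i =>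
    WP_mul' (𝒯.T2 ρ i) (𝒯.M2 ρ _ _) (by simp)
  exact add_mem (add_mem (h 0) (h 1)) (h 2)
theorem u0 (a : ι) : 𝒯.u a ∈ WP wt 1 := WP_w2_wt (𝒯.u2 0 a)
theorem g2 (ρ : ℤ) : 𝒯.g ∈ WP (w2 ρ) ((𝒯.n : ℤ) + 1, (0 : ℤ)) := by
  have := pf_WP 𝒯.alt (𝒯.M2 ρ) 𝒯.hZ'
  simpa using this
theorem g1 : 𝒯.g0 ∈ WP (one' σ) ((𝒯.n : ℤ) + 1) := by
  have := 𝒯.g2 0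
  rw [← 𝒯.hg0] at this; exact rn_WP.1 this
theorem F2' (ρ : ℤ) (i : Fin 3) : 𝒯.F i ∈ WP (w2 ρ) ((𝒯.n : ℤ) + 2, (0 : ℤ)) := by
  have h : ∀ i j, 𝒯.ω (𝒯.y i) (𝒯.y j) ∈ WP (w2 ρ) ((𝒯.n : ℤ) + 2, (0 : ℤ)) := fun i j =>
    om_WP 𝒯.alt (𝒯.M2 ρ) 𝒯.ndZ 𝒯.hZ (𝒯.M2 ρ _) (𝒯.M2 ρ _) (by ext <;> simp; ring)
  fin_cases i <;> exact h _ _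
theorem f1 (i : Fin 3) : 𝒯.f i ∈ WP (one' σ) ((𝒯.n : ℤ) + 2) := by
  have := 𝒯.F2' 0 i
  rw [← 𝒯.hf] at this; exact rn_WP.1 this

theorem g_ne : 𝒯.g ≠ 0 := Gen.K0 _ _ 𝒯.hZ' 𝒯.glZ
theorem g0_ne : 𝒯.g0 ≠ 0 := fun h => 𝒯.g_ne (by rw [← 𝒯.hg0, h, map_zero])

noncomputable def s : PP K σ →ₐ[K] MvPolynomial σ K := aeval (Sum.elim X 𝒯.f)
theorem s_rn (b : MvPolynomial σ K) : 𝒯.s (rn b) = b := by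
  rw [s, aeval_rename]
  exact aeval_X_left_apply b
theorem s_T (i : Fin 3) : 𝒯.s (𝒯.T i) = 𝒯.f i := by rw [𝒯.hT, s, aeval_X]; rfl
theorem s_g : 𝒯.s 𝒯.g = 𝒯.g0 := by rw [← 𝒯.hg0, s_rn]
theorem rn_g {z : MvPolynomial σ K} (h : rn z ∈ Ideal.span {𝒯.g}) : z ∈ Ideal.span {𝒯.g0} := by
  obtain ⟨a, ha⟩ := Ideal.mem_span_singleton'.1 h
  have := congrArg 𝒯.s ha
  rw [map_mul, s_g, s_rn] at this
  exact Ideal.mem_span_singleton'.2 ⟨_, this⟩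

omit 𝒯 in
theorem nzd_pow {S : Type*} [CommRing S] {p : S} {J : Ideal S} (h : nzd p J) :
    ∀ m : ℕ, ∀ a, a * p ^ m ∈ J → a ∈ J
  | 0, a, ha => by simpa using ha
  | m + 1, a, ha => nzd_pow h m a (h _ (by rwa [pow_succ, ← mul_assoc] at ha))

/-- linear type -/
theorem lin_type {m : ℕ} {F : PP K σ} (hF : F ∈ WP wt (m : ℤ)) (h : 𝒯.s F ∈ Ideal.span {𝒯.g0}) :
    F ∈ Lu 𝒯.ω 𝒯.g 𝒯.u := by
  set L := Lu 𝒯.ω 𝒯.g 𝒯.u with hL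
  let mk : PP K σ →+* PP K σ ⧸ L := Ideal.Quotient.mk L
  let φ : PP K σ →+* PP K σ ⧸ L := eval₂Hom (mk.comp C)
    (Sum.elim (fun i => mk (X (Sum.inl i))) (fun i => mk (𝒯.F 2 * 𝒯.T i)))
  let ψ : PP K σ →+* PP K σ ⧸ L := mk.comp ((rn (K := K) (σ := σ)).toRingHom.comp 𝒯.s.toRingHom)
  have e1 : φ F = mk (𝒯.F 2) ^ m * mk F := by
    refine hom_scale (fun a => ?_) (fun i => ?_) (fun i => ?_) hF
    · simp [φ]
    · simp [φ]
    · simp [φ, 𝒯.hT]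
  have e2 : φ F = mk (𝒯.T 2) ^ m * ψ F := by
    refine hom_scale (fun a => ?_) (fun i => ?_) (fun i => ?_) hF
    · simp [φ, ψ]
    · simp [φ, ψ, s]
    · have h1 : φ (X (Sum.inr i)) = mk (𝒯.F 2 * 𝒯.T i) := by simp [φ]
      have h2 : ψ (X (Sum.inr i)) = mk (𝒯.F i) := by
        rw [← 𝒯.hT i, ← 𝒯.hf]
        exact congrArg (fun x => mk (rn x)) (𝒯.s_T i)
      rw [h1, h2, ← map_mul]
      exact Ideal.Quotient.eq.2 (𝒯.FT i)
  have e3 : ψ F = 0 := by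
    refine Ideal.Quotient.eq_zero_iff_mem.2 ?_
    change rn (𝒯.s F) ∈ L
    obtain ⟨a, ha⟩ := Ideal.mem_span_singleton'.1 h
    rw [← ha, map_mul, 𝒯.hg0]
    exact Ideal.mul_mem_left _ _ ((le_sup_left : _ ≤ L) (Ideal.mem_span_singleton_self _))
  rw [e1, e3, mul_zero, ← map_pow, ← map_mul] at e2
  refine nzd_pow 𝒯.F2_Lu m F ?_
  rw [mul_comm]
  exact Ideal.Quotient.eq_zero_iff_mem.1 e2

theorem om_rg (i : Fin 3) (b : ι) : ∃ x, rn x = 𝒯.ω (𝒯.y i) (dl b) := by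
  have := om_mem (R := (rn (K := K) (σ := σ)).toRingHom.range) 𝒯.alt (l := 𝒯.Z) (u := 𝒯.y i) (v := dl b)
    (fun a _ b _ => (𝒯.Mr a b).imp fun x hx => hx.2)
    (fun a _ => (𝒯.Mr _ a).imp fun x hx => hx.2)
    (fun a _ => by
      by_cases h : a = b
      · subst h; rw [dl, Pi.single_eq_same]; exact one_mem _
      · rw [dl, Pi.single_eq_of_ne h]; exact zero_mem _)
  exact this

theorem cex : ∃ c : ι → MvPolynomial σ K, ∀ v, 𝒯.s (𝒯.ω 𝒯.u v) = 𝒯.g0 * ∑ b, 𝒯.s (v b) * c b := by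
  have h : ∀ b, ∃ c, 𝒯.s (𝒯.ω 𝒯.u (dl b)) = c * 𝒯.g0 := by
    intro b
    choose x hx using fun i => 𝒯.om_rg i b
    have e : 𝒯.s (𝒯.ω 𝒯.u (dl b)) = 𝒯.f 0 * x 0 + 𝒯.f 1 * x 1 + 𝒯.f 2 * x 2 := by
      simp only [Gen3.u, map_add, map_smul, LinearMap.add_apply, LinearMap.smul_apply, smul_eq_mul,
        map_mul, s_T, ← hx, s_rn]
    have h2 := neg_mem (𝒯.om_F (dl b))
    rw [Gen3.ω, ← om_skew] at h2
    simp only [map_add, map_smul, LinearMap.add_apply, LinearMap.smul_apply, smul_eq_mul, ← hx, ← 𝒯.hf,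
      ← map_mul] at h2
    rw [← map_add, ← map_add, ← e] at h2
    obtain ⟨c, hc⟩ := Ideal.mem_span_singleton'.1 (𝒯.rn_g h2)
    exact ⟨c, hc.symm⟩
  choose c hc using h
  refine ⟨c, fun v => ?_⟩
  rw [om_exp, map_sum, Finset.mul_sum]
  refine Finset.sum_congr rfl fun b _ => ?_
  rw [map_mul, hc]; ring

noncomputable def J : Ideal (MvPolynomial σ K) := Ideal.span (Set.range 𝒯.f)
noncomputable def I : Ideal (MvPolynomial σ K) := 𝒯.J ⊔ Ideal.span {𝒯.g0}

theorem f_J (i : Fin 3) : 𝒯.f i ∈ 𝒯.J := Ideal.subset_span ⟨i, rfl⟩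

theorem s_J {m : ℕ} {F : PP K σ} (hF : F ∈ WP wt (m : ℤ)) : 𝒯.s F ∈ 𝒯.J ^ m := by
  have key : ∀ a : σ ⊕ Fin 3 →₀ ℕ, 𝒯.s (monomial a 1) ∈ 𝒯.J ^ (Finsupp.weight wtN a) := by
    intro a
    induction a using Finsupp.induction_linear with
    | zero => simp
    | add a b ha hb =>
      rw [← one_mul (1 : K), ← monomial_mul, map_mul, map_add, pow_add]
      exact Ideal.mul_mem_mul ha hb
    | single i n =>
      rw [← X_pow_eq_monomial, map_pow, Finsupp.weight_apply, Finsupp.sum_single_index (by simp)]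
      rcases i with i | i
      · simp [wtN]
      · rw [← 𝒯.hT, s_T]; simp only [wtN, Sum.elim_inr, smul_eq_mul, mul_one]
        exact Ideal.pow_mem_pow (𝒯.f_J i) n
  rw [F.as_sum, map_sum]
  refine Submodule.sum_mem _ fun a ha => ?_
  have hw := hF (mem_support_iff.1 ha)
  rw [weight_wt] at hw
  have hw : Finsupp.weight wtN a = m := by exact_mod_cast hw
  rw [← mul_one (coeff a F), ← C_mul_monomial, map_mul, ← hw]
  exact Ideal.mul_mem_left _ _ (key a)

noncomputable def SP (m : ℤ) : Ideal (MvPolynomial σ K) where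
  carrier := {b | ∃ F ∈ WP wt m, 𝒯.s F = b}
  add_mem' := by
    rintro _ _ ⟨F, hF, rfl⟩ ⟨G, hG, rfl⟩
    exact ⟨_, add_mem hF hG, map_add _ _ _⟩
  zero_mem' := ⟨0, zero_mem _, map_zero _⟩
  smul_mem' := by
    rintro c _ ⟨F, hF, rfl⟩
    exact ⟨rn c * F, WP_mul' (rn_wt c) hF (zero_add _), by rw [map_mul, s_rn]; rfl⟩

theorem J_SP : ∀ m : ℕ, 𝒯.J ^ m ≤ 𝒯.SP m
  | 0 => fun b _ => ⟨rn b, rn_wt b, 𝒯.s_rn b⟩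
  | m + 1 => by
    have h1 : 𝒯.J ≤ 𝒯.SP 1 := by
      rw [J, Ideal.span_le]
      rintro _ ⟨i, rfl⟩
      exact ⟨𝒯.T i, WP_w2_wt (𝒯.T2 0 i), 𝒯.s_T i⟩
    rw [pow_succ]
    refine Ideal.mul_le.2 fun x hx y hy => ?_
    obtain ⟨F, hF, rfl⟩ := J_SP m hx
    obtain ⟨G, hG, rfl⟩ := h1 hy
    exact ⟨F * G, WP_mul' hF hG (by push_cast; rfl), map_mul _ _ _⟩

theorem g0_I : 𝒯.g0 ∈ 𝒯.I := (le_sup_right : _ ≤ 𝒯.I) (Ideal.mem_span_singleton_self _)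
theorem J_I (m : ℕ) : 𝒯.J ^ m ≤ 𝒯.I ^ m := Ideal.pow_right_mono le_sup_left m

theorem I_le : ∀ m : ℕ, 𝒯.I ^ (m + 1) ≤ 𝒯.J ^ (m + 1) ⊔ 𝒯.I ^ m * Ideal.span {𝒯.g0}
  | 0 => by simp [I]
  | m + 1 => by
    rw [pow_succ _ (m + 1)]
    conv_lhs => rw [show 𝒯.I ^ (m + 1) * 𝒯.I = 𝒯.I ^ (m + 1) * (𝒯.J ⊔ Ideal.span {𝒯.g0}) from rfl,
      Ideal.mul_sup]
    refine sup_le ((Ideal.mul_mono_left (I_le m)).trans ?_) le_sup_right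
    rw [Ideal.sup_mul, ← pow_succ]
    refine sup_le_sup le_rfl ?_
    rw [mul_right_comm, pow_succ]
    exact Ideal.mul_mono_left (Ideal.mul_mono_right le_sup_left)

theorem I_dec {m : ℕ} {x : MvPolynomial σ K} (hx : x ∈ 𝒯.I ^ (m + 1)) :
    ∃ j ∈ 𝒯.J ^ (m + 1), ∃ i ∈ 𝒯.I ^ m, x = j + 𝒯.g0 * i := by
  obtain ⟨j, hj, y, hy, rfl⟩ := Submodule.mem_sup.1 (𝒯.I_le m hx)
  obtain ⟨i, hi, rfl⟩ := Ideal.mem_mul_span_singleton.1 hy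
  exact ⟨j, hj, i, hi, by ring⟩

theorem colon {k : ℕ} {a : MvPolynomial σ K} (h : 𝒯.g0 * a ∈ 𝒯.I ^ (k + 1)) : a ∈ 𝒯.I ^ k := by
  obtain ⟨j, hj, i, hi, e⟩ := 𝒯.I_dec h
  obtain ⟨F, hF, rfl⟩ := 𝒯.J_SP _ hj
  have h1 : 𝒯.s F ∈ Ideal.span {𝒯.g0} := Ideal.mem_span_singleton'.2 ⟨a - i, by linear_combination e⟩
  obtain ⟨v, hv⟩ := (mem_Lu _ _).1 (𝒯.lin_type hF h1)
  obtain ⟨x, hx⟩ := Ideal.mem_span_singleton'.1 hv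
  have h2 := congrArg (wc wt ((k + 1 : ℕ) : ℤ)) hx
  rw [mul_comm, wc_mul' (WP_w2_wt (𝒯.g2 0)), map_sub, wc_self hF,
    om_wc 𝒯.alt 𝒯.M0 𝒯.ndZ 𝒯.hZ 𝒯.u0] at h2
  have h3 := congrArg 𝒯.s h2
  obtain ⟨c, hc⟩ := 𝒯.cex
  rw [map_mul, s_g, map_sub, hc] at h3
  have ee : a = i + (∑ b, 𝒯.s (wc wt (((k + 1 : ℕ) : ℤ) - (1 + 𝒯.n • 0)) (v b)) * c b +
      𝒯.s (wc wt (((k + 1 : ℕ) : ℤ) - 0) x)) := by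
    apply mul_left_cancel₀ 𝒯.g0_ne
    linear_combination e - h3
  rw [ee]
  refine add_mem hi (add_mem (Submodule.sum_mem _ fun b _ => Ideal.mul_mem_right _ _ ?_) ?_)
  · refine 𝒯.J_I k (𝒯.s_J ?_)
    have := wc_mem (w := wt) (((k + 1 : ℕ) : ℤ) - (1 + 𝒯.n • 0)) (v b)
    rwa [show (((k + 1 : ℕ) : ℤ) - (1 + 𝒯.n • 0)) = (k : ℤ) by simp] at this ⊢
  · refine Ideal.pow_le_pow_right (Nat.le_succ k) (𝒯.J_I (k + 1) (𝒯.s_J ?_))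
    have := wc_mem (w := wt) (((k + 1 : ℕ) : ℤ) - 0) x
    rwa [sub_zero] at this ⊢

omit 𝒯 in
theorem HC_sup {J J' : Ideal (MvPolynomial σ K)} (h : HC (one' σ) J) (h' : HC (one' σ) J') :
    HC (one' σ) (J ⊔ J') := by
  intro b hb n
  obtain ⟨x, hx, y, hy, rfl⟩ := Submodule.mem_sup.1 hb
  rw [map_add]
  exact Submodule.add_mem_sup (h x hx n) (h' y hy n)

theorem HCg : HC (one' σ) (Ideal.span {𝒯.g0}) := HC_span (by rintro _ rfl; exact ⟨_, 𝒯.g1⟩)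
theorem HCI (m : ℕ) : HC (one' σ) (𝒯.I ^ m) := by
  refine HC_pow (HC_sup (HC_span ?_) 𝒯.HCg) m
  rintro _ ⟨i, rfl⟩; exact ⟨_, 𝒯.f1 i⟩

end GD
end Ll
end PfReg

end FilePL

section FilePM
set_option linter.unusedSectionVars false
namespace PfReg
section Mm
open MvPolynomial

variable {K σ : Type} [Field K]

/-- graded quotient -/
noncomputable abbrev qGM (A : GM K σ) (N : Submodule (MvPolynomial σ K) A.Q) : GM K σ := imGM A N.mkQ

noncomputable def sesQ {A' A : GM K σ} (φ : A'.Hom A) {N' : Submodule (MvPolynomial σ K) A'.Q}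
    {N L : Submodule (MvPolynomial σ K) A.Q} (h1 : ∀ x ∈ N', φ.f x ∈ N) (hNL : N ≤ L)
    (h2 : ∀ j, ∀ q ∈ A'.p j, φ.f q ∈ N → q ∈ N') (h3 : ∀ j, ∀ q ∈ A'.p j, φ.f q ∈ L)
    (h4 : ∀ j, ∀ q ∈ A.p j, q ∈ L → ∃ a ∈ A'.p j, q - φ.f a ∈ N) :
    GM.SES (qGM A' N') (qGM A N) (qGM A L) where
  f := ⟨N'.mapQ N φ.f h1, by
    rintro j _ ⟨q, hq, rfl⟩
    exact ⟨φ.f q, φ.h j q hq, rfl⟩⟩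
  g := ⟨N.mapQ L LinearMap.id hNL, by
    rintro j _ ⟨q, hq, rfl⟩
    exact ⟨q, hq, rfl⟩⟩
  inj := by
    rintro j _ ⟨q, hq, rfl⟩ h
    exact (Submodule.Quotient.mk_eq_zero N').2 (h2 j q hq ((Submodule.Quotient.mk_eq_zero N).1 h))
  zero := by
    rintro j _ ⟨q, hq, rfl⟩
    exact (Submodule.Quotient.mk_eq_zero L).2 (h3 j q hq)
  ex := by
    rintro j _ ⟨q, hq, rfl⟩ h
    obtain ⟨a, ha, e⟩ := h4 j q hq ((Submodule.Quotient.mk_eq_zero L).1 h)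
    exact ⟨_, ⟨a, ha, rfl⟩, ((Submodule.Quotient.eq N).2 e).symm⟩
  surj := by
    rintro j _ ⟨q, hq, rfl⟩
    exact ⟨_, ⟨q, hq, rfl⟩, rfl⟩

noncomputable def ses0 {A' A : GM K σ} (φ : A'.Hom A)
    {L : Submodule (MvPolynomial σ K) A.Q} 
    (h2 : ∀ j, ∀ q ∈ A'.p j, φ.f q = 0 → q = 0) (h3 : ∀ j, ∀ q ∈ A'.p j, φ.f q ∈ L)
    (h4 : ∀ j, ∀ q ∈ A.p j, q ∈ L → ∃ a ∈ A'.p j, φ.f a = q) :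
    GM.SES A' A (qGM A L) :=
  imSES L.mkQ φ h2 (fun j q hq => (Submodule.Quotient.mk_eq_zero L).2 (h3 j q hq))
    (fun j q hq h => h4 j q hq ((Submodule.Quotient.mk_eq_zero L).1 h))

/-- the ring, shifted -/
noncomputable abbrev BGM (D : ℤ) : GM K σ where
  Q := MvPolynomial σ K
  p j := WP (one' σ) (j - D)
  hp i a q h := by
    have := mono_WP a h
    rwa [show i - D + ((a.degree : ℕ) : ℤ) = i + (a.degree : ℕ) - D by ring] at this

noncomputable def BFr (D : ℤ) : IsFr (BGM (K := K) (σ := σ) D) (κ := Unit) (fun _ => D) where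
  e _ := (1 : MvPolynomial σ K)
  li := by
    rw [linearIndependent_unique_iff]; exact one_ne_zero
  mem _ := by
    change (1 : MvPolynomial σ K) ∈ WP (one' σ) (D - D)
    rw [sub_self]; exact isWeightedHomogeneous_one _ _
  span j F hF := by
    rw [F.as_sum]
    refine Submodule.sum_mem _ fun a ha => ?_
    have hw := hF (mem_support_iff.1 ha)
    rw [weight_one'] at hw
    have e : monomial a (coeff a F) = coeff a F • (monomial a (1 : K) • (1 : MvPolynomial σ K)) := by
      rw [smul_eq_mul, mul_one, smul_monomial, smul_eq_mul, mul_one]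
    rw [e]
    refine Submodule.smul_mem _ _ (Submodule.subset_span ⟨(), a, ?_, rfl⟩)
    linarith

theorem q_quot (J : Ideal (MvPolynomial σ K)) : qGM (BGM 0) J = quotGM J := by
  have : (fun j => (WP (one' σ) (j - 0)).map ((Submodule.mkQ J).restrictScalars K)) =
      quotPieces (homogeneousSubmodule σ K) J := by
    funext j
    rw [quotPieces, zg_eq, sub_zero]
  unfold qGM imGM quotGM
  congr

variable {ι : Type} [Fintype ι] [DecidableEq ι]
namespace GD
variable {M : ι → ι → PP K σ} (𝒯 : GD M)

noncomputable def gN : Submodule (MvPolynomial σ K) (PP K σ) := (Ideal.span {𝒯.g}).restrictScalars (MvPolynomial σ K)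
theorem mem_gN {x : PP K σ} : x ∈ 𝒯.gN ↔ x ∈ Ideal.span {𝒯.g} := Iff.rfl

abbrev zt : Type := {a : ι // a ∈ 𝒯.Z}

noncomputable def ext : (𝒯.zt → PP K σ) →ₗ[PP K σ] (ι → PP K σ) where
  toFun v i := if h : i ∈ 𝒯.Z then v ⟨i, h⟩ else 0
  map_add' x y := by ext i : 1; simp only [Pi.add_apply]; split_ifs <;> simp
  map_smul' c x := by ext i : 1; simp only [Pi.smul_apply, RingHom.id_apply]; split_ifs <;> simp

theorem ext_mem (v : 𝒯.zt → PP K σ) {i : ι} (h : i ∈ 𝒯.Z) : 𝒯.ext v i = v ⟨i, h⟩ := dif_pos h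

theorem ext_NZ {v : 𝒯.zt → PP K σ} {x : ι → PP K σ} (h : ∀ k : 𝒯.zt, v k = x k) :
    x - 𝒯.ext v ∈ NZ M 𝒯.Z :=
  Submodule.subset_span (Or.inr fun i hi => by rw [Pi.sub_apply, ext_mem _ _ hi, h]; exact sub_self _)

theorem ext_NZ' {v : 𝒯.zt → PP K σ} {x : ι → PP K σ} (h : ∀ k : 𝒯.zt, v k = x k) :
    𝒯.ext v ∈ NZ M 𝒯.Z ↔ x ∈ NZ M 𝒯.Z := by
  have := 𝒯.ext_NZ h
  constructor
  · intro h1; simpa using add_mem this h1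
  · intro h1; simpa using sub_mem h1 this

theorem om_ext {v : 𝒯.zt → PP K σ} {x : ι → PP K σ} (h : ∀ k : 𝒯.zt, v k = x k) (y : ι → PP K σ) :
    𝒯.ω y (𝒯.ext v) = 𝒯.ω y x :=
  om_congr (fun _ _ => rfl) (fun i hi => by rw [ext_mem _ _ hi, h])

theorem ext_WP {w : ℤ × ℤ} {v : 𝒯.zt → PP K σ} (hv : ∀ k, v k ∈ WP (w2 𝒯.r) w) (i : ι) :
    𝒯.ext v i ∈ WP (w2 𝒯.r) w := by
  by_cases h : i ∈ 𝒯.Z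
  · rw [ext_mem _ _ h]; exact hv _
  · rw [show 𝒯.ext v i = 0 from dif_neg h]; exact zero_mem _

noncomputable def NN : Submodule (MvPolynomial σ K) (𝒯.zt → PP K σ) := ((NZ M 𝒯.Z).comap 𝒯.ext).restrictScalars (MvPolynomial σ K)
noncomputable def QN : Submodule (MvPolynomial σ K) (𝒯.zt → PP K σ) :=
  (Submodule.comap ((𝒯.ω 𝒯.u).comp 𝒯.ext) (Ideal.span {𝒯.g})).restrictScalars (MvPolynomial σ K)
theorem mem_NN {v : 𝒯.zt → PP K σ} : v ∈ 𝒯.NN ↔ 𝒯.ext v ∈ NZ M 𝒯.Z := Iff.rfl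
theorem mem_QN {v : 𝒯.zt → PP K σ} : v ∈ 𝒯.QN ↔ 𝒯.ω 𝒯.u (𝒯.ext v) ∈ Ideal.span {𝒯.g} := Iff.rfl

noncomputable abbrev Pb (d m : ℤ) : GM K σ := qGM (PGM 𝒯.r d m) 𝒯.gN
noncomputable abbrev CC (d m : ℤ) : GM K σ := qGM (FZM 𝒯.zt 𝒯.r d m) 𝒯.NN
noncomputable abbrev QQ (d m : ℤ) : GM K σ := qGM (FZM 𝒯.zt 𝒯.r d m) 𝒯.QN

noncomputable def S1 (d m : ℤ) : GM.SES (PGM 𝒯.r (d + (𝒯.n + 1)) m) (PGM 𝒯.r d m) (𝒯.Pb d m) :=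
  ses0 (A' := PGM 𝒯.r (d + (𝒯.n + 1)) m) (A := PGM 𝒯.r d m)
    ⟨(LinearMap.mulLeft (PP K σ) 𝒯.g).restrictScalars (MvPolynomial σ K), fun j q hq =>
      WP_mul' (𝒯.g2 _) hq (by refine Prod.ext ?_ ?_ <;> simp; ring)⟩
    (fun j q hq h => (mul_eq_zero.1 h).resolve_left 𝒯.g_ne)
    (fun j q hq => Ideal.mem_span_singleton'.2 ⟨q, mul_comm _ _⟩)
    (fun j q hq h => by
      obtain ⟨b, hb, e⟩ := span_wc (𝒯.g2 _) h hq
      refine ⟨b, ?_, e.symm⟩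
      change _ ∈ WP _ _
      convert hb using 2
      refine Prod.ext ?_ ?_ <;> simp <;> ring)

noncomputable def rows : (𝒯.zt → PP K σ) →ₗ[PP K σ] (𝒯.zt → PP K σ) where
  toFun a k := ∑ b : 𝒯.zt, a b * M b k
  map_add' x y := by ext k : 1; simp [add_mul, Finset.sum_add_distrib]
  map_smul' c x := by ext k : 1; simp [Finset.mul_sum, mul_assoc]

theorem rows_eq (a : 𝒯.zt → PP K σ) (k : 𝒯.zt) : 𝒯.rows a k = (∑ b : 𝒯.zt, a b • M b) k := by
  simp [rows]

theorem rows_inj {a : 𝒯.zt → PP K σ} (h : 𝒯.rows a = 0) : a = 0 := by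
  funext k
  have h1 : 𝒯.ω (dl k.1) (∑ b : 𝒯.zt, a b • M b) = 0 := by
    rw [← 𝒯.om_ext (𝒯.rows_eq a), h, map_zero, map_zero]
  have h2 : ∀ b : 𝒯.zt, 𝒯.ω (dl k.1) (a b • M b) = if b = k then - (a b * 𝒯.g) else 0 := by
    intro b
    rw [map_smul, Gen3.ω, om_row 𝒯.alt b.2, smul_eq_mul]
    split_ifs with hb
    · subst hb; simp [dl]
    · rw [dl, Pi.single_eq_of_ne (fun h => hb (Subtype.ext h))]; simp
  rw [map_sum, Finset.sum_congr rfl (fun b _ => h2 b), Finset.sum_ite_eq' Finset.univ k,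
    if_pos (Finset.mem_univ k)] at h1
  exact (mul_eq_zero.1 (neg_eq_zero.1 h1)).resolve_right 𝒯.g_ne

theorem NZ_rows {x : ι → PP K σ} (h : x ∈ NZ M 𝒯.Z) : ∃ a : 𝒯.zt → PP K σ, ∀ k : 𝒯.zt, x k = 𝒯.rows a k := by
  induction h using Submodule.span_induction with
  | mem x hx =>
    rcases hx with ⟨a, ha, rfl⟩ | hx
    · refine ⟨Pi.single ⟨a, ha⟩ 1, fun k => ?_⟩
      simp [rows, Pi.single_apply]
    · exact ⟨0, fun k => by rw [map_zero, hx _ k.2]; rfl⟩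
  | zero => exact ⟨0, fun k => by rw [map_zero]; rfl⟩
  | add x y _ _ hx hy =>
    obtain ⟨a, ha⟩ := hx
    obtain ⟨b, hb⟩ := hy
    exact ⟨a + b, fun k => by rw [map_add, Pi.add_apply, Pi.add_apply, ha, hb]⟩
  | smul c x _ hx =>
    obtain ⟨a, ha⟩ := hx
    exact ⟨c • a, fun k => by rw [map_smul, Pi.smul_apply, Pi.smul_apply, ha]⟩

noncomputable def S2 (d m : ℤ) : GM.SES (FZM 𝒯.zt 𝒯.r (d + 1) m) (FZM 𝒯.zt 𝒯.r d m) (𝒯.CC d m) :=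
  ses0 (A' := FZM 𝒯.zt 𝒯.r (d + 1) m) (A := FZM 𝒯.zt 𝒯.r d m)
    ⟨𝒯.rows.restrictScalars (MvPolynomial σ K), fun j q hq k _ => Submodule.sum_mem _ fun b _ =>
      WP_mul' (hq b trivial) (𝒯.M2 _ _ _) (by refine Prod.ext ?_ ?_ <;> simp <;> ring)⟩
    (fun j q hq h => 𝒯.rows_inj h)
    (fun j q hq => (𝒯.ext_NZ' (𝒯.rows_eq q)).2
      (Submodule.sum_mem _ fun b _ => Submodule.smul_mem _ _ (NZ_mem b.2)))
    (fun j q hq h => by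
      obtain ⟨a, ha⟩ := 𝒯.NZ_rows h
      refine ⟨fun b => wc (w2 𝒯.r) (j - (d + 1), m) (a b), fun b _ => wc_mem _ _, ?_⟩
      funext k
      have h1 := congrArg (wc (w2 𝒯.r) (j - d, m)) (ha k)
      rw [ext_mem _ _ k.2, wc_self (hq k trivial)] at h1
      refine Eq.trans ?_ h1.symm
      change ∑ b : 𝒯.zt, _ = wc _ _ (∑ b : 𝒯.zt, _)
      rw [map_sum]
      refine Finset.sum_congr rfl fun b _ => ?_
      have e : ((j - d, m) - (1, 0) : ℤ × ℤ) = (j - (d + 1), m) := by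
        refine Prod.ext ?_ ?_ <;> simp <;> ring
      rw [mul_comm (a b), wc_mul' (𝒯.M2 _ _ _), mul_comm, e])

noncomputable def ur : PP K σ →ₗ[PP K σ] (𝒯.zt → PP K σ) where
  toFun h k := h * 𝒯.u k
  map_add' x y := by ext k : 1; simp [add_mul]
  map_smul' c x := by ext k : 1; simp [mul_assoc]

noncomputable def S3 (d m : ℤ) : GM.SES (𝒯.Pb (d + (𝒯.r + 1)) (m - 1)) (𝒯.CC d m) (𝒯.QQ d m) :=
  sesQ (A' := PGM 𝒯.r (d + (𝒯.r + 1)) (m - 1)) (A := FZM 𝒯.zt 𝒯.r d m)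
    ⟨𝒯.ur.restrictScalars (MvPolynomial σ K), fun j q hq k _ =>
      WP_mul' hq (𝒯.u2 _ _) (by refine Prod.ext ?_ ?_ <;> simp <;> ring)⟩
    (fun x hx => by
      refine (𝒯.ext_NZ' (v := 𝒯.ur x) (x := x • 𝒯.u) (fun k => rfl)).2 ?_
      obtain ⟨a, rfl⟩ := Ideal.mem_span_singleton'.1 hx
      rw [mul_comm, mul_smul]
      exact NZ_g 𝒯.alt _)
    (fun v hv => NZ_om 𝒯.alt _ _ hv)
    (fun j q hq h => 𝒯.left_inj ((𝒯.ext_NZ' (v := 𝒯.ur q) (x := q • 𝒯.u) (fun k => rfl)).1 h))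
    (fun j q hq => by
      change 𝒯.ω 𝒯.u (𝒯.ext (𝒯.ur q)) ∈ Ideal.span {𝒯.g}
      rw [𝒯.om_ext (v := 𝒯.ur q) (x := q • 𝒯.u) (fun k => rfl), map_smul, Gen3.ω, om_alt, smul_zero]
      exact zero_mem _)
    (fun j q hq h => by
      obtain ⟨x, hx⟩ := 𝒯.Exu _ (𝒯.mem_QN.1 h)
      have h1 := NZ_wc (𝒯.M2 𝒯.r) hx (j - d, m)
      refine ⟨wc (w2 𝒯.r) (j - (d + (𝒯.r + 1)), m - 1) x, wc_mem _ _, ?_⟩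
      refine (𝒯.ext_NZ' (x := fun b => wc (w2 𝒯.r) (j - d, m) ((𝒯.ext q - x • 𝒯.u) b)) ?_).2 h1
      intro k
      have e : ((j - d, m) - (𝒯.r + 1, 1) : ℤ × ℤ) = (j - (d + (𝒯.r + 1)), m - 1) := by
        refine Prod.ext ?_ ?_ <;> simp <;> ring
      change q k - wc (w2 𝒯.r) (j - (d + (𝒯.r + 1)), m - 1) x * 𝒯.u k =
        wc (w2 𝒯.r) (j - d, m) (𝒯.ext q k - x * 𝒯.u k)
      rw [map_sub, ext_mem _ _ k.2, wc_self (hq k trivial), mul_comm x, wc_mul' (𝒯.u2 _ _), e,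
        mul_comm])

theorem mem_gB {x : (MvPolynomial σ K)} : x ∈ (Ideal.span {𝒯.g0} : Ideal (MvPolynomial σ K)) ↔ ∃ a, a * 𝒯.g0 = x :=
  Ideal.mem_span_singleton'

noncomputable def sl : PP K σ →ₗ[(MvPolynomial σ K)] (MvPolynomial σ K) where
  toFun := 𝒯.s
  map_add' := map_add _
  map_smul' b p := by rw [smul_PP, map_mul, s_rn]; rfl

noncomputable def sN : Submodule (MvPolynomial σ K) (PP K σ) := Submodule.comap 𝒯.sl (Ideal.span {𝒯.g0})

noncomputable abbrev Ib (d m : ℤ) : GM K σ := qGM (PGM 𝒯.r d m) 𝒯.sN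

theorem gN_sN : 𝒯.gN ≤ 𝒯.sN := by
  intro x hx
  obtain ⟨a, rfl⟩ := Ideal.mem_span_singleton'.1 hx
  refine Ideal.mem_span_singleton'.2 ⟨𝒯.s a, ?_⟩
  change _ = 𝒯.s (a * 𝒯.g)
  rw [map_mul, s_g]

noncomputable def S4 (d : ℤ) (m : ℕ) : GM.SES (𝒯.QQ (d + (1 + 𝒯.r + 𝒯.n)) (m - 1)) (𝒯.Pb d m) (𝒯.Ib d m) :=
  sesQ (A' := FZM 𝒯.zt 𝒯.r (d + (1 + 𝒯.r + 𝒯.n)) (m - 1)) (A := PGM 𝒯.r d m)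
    ⟨((𝒯.ω 𝒯.u).comp 𝒯.ext).restrictScalars (MvPolynomial σ K), fun j q hq =>
      om_WP 𝒯.alt (𝒯.M2 𝒯.r) 𝒯.ndZ 𝒯.hZ (𝒯.u2 _) (𝒯.ext_WP fun k => hq k trivial)
        (by refine Prod.ext ?_ ?_ <;> simp <;> ring)⟩
    (fun x hx => hx) 𝒯.gN_sN (fun j q hq h => h)
    (fun j q hq => by
      obtain ⟨c, hc⟩ := 𝒯.cex
      refine Ideal.mem_span_singleton'.2 ⟨_, (mul_comm _ _).trans (hc _).symm⟩)
    (fun j q hq h => by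
      obtain ⟨v, hv⟩ := (mem_Lu _ _).1 (𝒯.lin_type (WP_w2_wt hq) h)
      obtain ⟨x, hx⟩ := Ideal.mem_span_singleton'.1 hv
      have h2 := congrArg (wc (w2 𝒯.r) (j - d, (m : ℤ))) hx
      rw [mul_comm, wc_mul' (𝒯.g2 _), map_sub, wc_self hq,
        om_wc 𝒯.alt (𝒯.M2 𝒯.r) 𝒯.ndZ 𝒯.hZ (𝒯.u2 _)] at h2
      refine ⟨fun k => wc (w2 𝒯.r) (j - (d + (1 + 𝒯.r + 𝒯.n)), (m - 1 : ℤ)) (v k), fun k _ => wc_mem _ _, ?_⟩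
      refine Ideal.mem_span_singleton'.2 ⟨_, (mul_comm _ _).trans (h2.trans ?_)⟩
      refine congrArg₂ _ rfl ((𝒯.om_ext ?_ _).symm)
      intro k
      congr 2
      refine Prod.ext ?_ ?_ <;> simp <;> ring)

theorem s_WP {j m : ℤ} {F : PP K σ} (hF : F ∈ WP (w2 𝒯.r) (j, m)) : 𝒯.s F ∈ WP (one' σ) j := by
  have key : ∀ a : σ ⊕ Fin 3 →₀ ℕ, 𝒯.s (monomial a 1) ∈ WP (one' σ) (Finsupp.weight (w2 𝒯.r) a).1 := by
    intro a
    induction a using Finsupp.induction_linear with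
    | zero => simpa using isWeightedHomogeneous_one K (one' σ)
    | add a b ha hb =>
      rw [← one_mul (1 : K), ← monomial_mul, map_mul, map_add]
      exact WP_mul' ha hb rfl
    | single i n =>
      rw [← X_pow_eq_monomial, map_pow, Finsupp.weight_apply, Finsupp.sum_single_index (by simp)]
      rcases i with i | i
      · have := (isWeightedHomogeneous_X K (one' σ) i).pow n
        simpa [w2, s] using this
      · rw [← 𝒯.hT, s_T]
        have := IsWeightedHomogeneous.pow (𝒯.f1 i) n
        simpa [w2] using this
  rw [F.as_sum, map_sum]
  refine Submodule.sum_mem _ fun a ha => ?_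
  have hw := hF (mem_support_iff.1 ha)
  have := key a
  rw [hw] at this
  rw [← mul_one (coeff a F), ← smul_eq_mul (coeff a F), ← smul_monomial, map_smul]
  exact Submodule.smul_mem _ _ this

theorem s_wc {m : ℤ} {F : PP K σ} (hF : F ∈ WP wt m) (j : ℤ) :
    wc (one' σ) j (𝒯.s F) = 𝒯.s (wc (w2 𝒯.r) (j, m) F) := by
  classical
  obtain ⟨S, hS, h⟩ := exists_sum (w := w2 𝒯.r) F (j, m)
  conv_lhs => rw [← h]
  rw [map_sum, map_sum, Finset.sum_eq_single (j, m)]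
  · exact wc_self (𝒯.s_WP (wc_mem _ _))
  · rintro ⟨i, k⟩ hi hne
    rw [wc_of_mem (𝒯.s_WP (wc_mem _ _))]
    split_ifs with hji
    · have : wc (w2 𝒯.r) (i, k) F = 0 := by
        ext a
        rw [coeff_weightedHomogeneousComponent, coeff_zero]
        split_ifs with ha
        · by_contra h0
          have h1 := hF h0
          rw [← weight_w2 𝒯.r, ha] at h1
          exact hne (by rw [hji]; exact Prod.ext rfl h1)
        · rfl
      rw [this, map_zero]
    · rfl
  · intro h; exact absurd hS h

noncomputable abbrev Bg (d : ℤ) : GM K σ := qGM (BGM d) (Ideal.span {𝒯.g0})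
noncomputable abbrev Lm (m : ℕ) : Ideal (MvPolynomial σ K) := 𝒯.I ^ m ⊔ Ideal.span {𝒯.g0}
noncomputable abbrev Dm (d : ℤ) (m : ℕ) : GM K σ := qGM (BGM d) (𝒯.Lm m)
noncomputable abbrev Em (d : ℤ) (m : ℕ) : GM K σ := qGM (BGM d) (𝒯.I ^ m)

noncomputable def S0 (d : ℤ) : GM.SES (BGM (d + (𝒯.n + 1))) (BGM d) (𝒯.Bg d) :=
  ses0 (A' := BGM (d + (𝒯.n + 1))) (A := BGM d)
    ⟨LinearMap.mulLeft (MvPolynomial σ K) 𝒯.g0, fun j q hq => WP_mul' 𝒯.g1 hq (by ring)⟩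
    (fun j q hq h => (mul_eq_zero.1 h).resolve_left 𝒯.g0_ne)
    (fun j q hq => Ideal.mem_span_singleton'.2 ⟨q, mul_comm _ _⟩)
    (fun j q hq h => by
      obtain ⟨b, hb, e⟩ := span_wc 𝒯.g1 h hq
      refine ⟨b, ?_, e.symm⟩
      change _ ∈ WP _ _
      rwa [show j - (d + (𝒯.n + 1)) = j - d - (𝒯.n + 1) by ring])

theorem Lm_J {m : ℕ} {x : (MvPolynomial σ K)} (h : x ∈ 𝒯.Lm m) : ∃ y ∈ 𝒯.J ^ m, x - y ∈ Ideal.span {𝒯.g0} := by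
  obtain ⟨i, hi, z, hz, rfl⟩ := Submodule.mem_sup.1 h
  rcases m with _ | m
  · exact ⟨i + z, by simp, by simp⟩
  · obtain ⟨j, hj, i', hi', rfl⟩ := 𝒯.I_dec hi
    refine ⟨j, hj, ?_⟩
    rw [show j + 𝒯.g0 * i' + z - j = 𝒯.g0 * i' + z by ring]
    exact add_mem (Ideal.mul_mem_right _ _ (Ideal.mem_span_singleton_self _)) hz

noncomputable def S5 (d : ℤ) (m : ℕ) : GM.SES (𝒯.Ib d m) (𝒯.Bg d) (𝒯.Dm d m) :=
  sesQ (A' := PGM 𝒯.r d m) (A := BGM d) ⟨𝒯.sl, fun j q hq => 𝒯.s_WP hq⟩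
    (fun x hx => hx) le_sup_right (fun j q hq h => h)
    (fun j q hq => (le_sup_left : _ ≤ 𝒯.Lm m) (𝒯.J_I m (𝒯.s_J (WP_w2_wt hq))))
    (fun j q hq h => by
      obtain ⟨y, hy, h1⟩ := 𝒯.Lm_J h
      obtain ⟨F, hF, rfl⟩ := 𝒯.J_SP _ hy
      refine ⟨wc (w2 𝒯.r) (j - d, (m : ℤ)) F, wc_mem _ _, ?_⟩
      have h2 := 𝒯.HCg _ h1 (j - d)
      rw [map_sub, wc_self hq, 𝒯.s_wc hF] at h2
      exact h2)

noncomputable def S6 (d : ℤ) (m : ℕ) : GM.SES (𝒯.Em (d + (𝒯.n + 1)) m) (𝒯.Em d (m + 1)) (𝒯.Dm d (m + 1)) :=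
  sesQ (A' := BGM (d + (𝒯.n + 1))) (A := BGM d)
    ⟨LinearMap.mulLeft (MvPolynomial σ K) 𝒯.g0, fun j q hq => WP_mul' 𝒯.g1 hq (by ring)⟩
    (fun x hx => by
      change 𝒯.g0 * x ∈ _
      rw [pow_succ, mul_comm 𝒯.g0]; exact Ideal.mul_mem_mul hx 𝒯.g0_I)
    le_sup_left (fun j q hq h => 𝒯.colon h)
    (fun j q hq => (le_sup_right : _ ≤ 𝒯.Lm (m + 1)) (Ideal.mem_span_singleton'.2 ⟨q, mul_comm _ _⟩))
    (fun j q hq h => by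
      obtain ⟨i, hi, z, hz, e⟩ := Submodule.mem_sup.1 h
      obtain ⟨b, rfl⟩ := Ideal.mem_span_singleton'.1 hz
      refine ⟨wc (one' σ) (j - (d + (𝒯.n + 1))) b, wc_mem _ _, ?_⟩
      have h2 := congrArg (wc (one' σ) (j - d)) e
      rw [map_add, wc_self hq, mul_comm, wc_mul' 𝒯.g1,
        show j - d - (𝒯.n + 1) = j - (d + (𝒯.n + 1)) by ring] at h2
      have h3 := 𝒯.HCI _ i hi (j - d)
      rw [← eq_sub_iff_add_eq] at h2
      rw [h2] at h3
      exact h3)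

end GD
end Mm
end PfReg

end FilePM

section FilePM2
set_option linter.unusedSectionVars false
namespace PfReg
section Mm2
open MvPolynomial

variable {K σ : Type} [Field K] {ι : Type} [Fintype ι] [DecidableEq ι] {M : ι → ι → PP K σ} (𝒯 : GD M)
namespace GD

theorem r_def : 𝒯.r = 𝒯.n + 2 := rfl

theorem rP (d m : ℤ) : Rg (PGM (K := K) (σ := σ) 𝒯.r d m) (d + 𝒯.r * m) :=
  Rg.fr (PFr _ _ _) fun _ => le_rfl
theorem rPb (d m : ℤ) : Rg (𝒯.Pb d m) (d + 𝒯.r * m + 𝒯.n) :=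
  Rg.c (𝒯.S1 d m) ((𝒯.rP d m).mono (by linarith [Int.natCast_nonneg 𝒯.n]))
    ((𝒯.rP _ m).mono (by linarith))
theorem rCC (d m : ℤ) : Rg (𝒯.CC d m) (d + 𝒯.r * m) :=
  Rg.c (𝒯.S2 d m) (Rg.fr (FZFr _ _ _ _) fun _ => le_rfl)
    (Rg.fr (FZFr _ _ _ _) fun _ => by linarith)
theorem rQQ (d m : ℤ) : Rg (𝒯.QQ d m) (d + 𝒯.r * m + 𝒯.n) :=
  Rg.c (𝒯.S3 d m) ((𝒯.rCC d m).mono (by linarith [Int.natCast_nonneg 𝒯.n]))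
    ((𝒯.rPb _ _).mono (by
      have := 𝒯.r_def; generalize 𝒯.r = r at *; apply le_of_eq; ring))
theorem rIb (d : ℤ) (m : ℕ) : Rg (𝒯.Ib d m) (d + 𝒯.r * m + 2 * 𝒯.n) :=
  Rg.c (𝒯.S4 d m) ((𝒯.rPb d m).mono (by linarith [Int.natCast_nonneg 𝒯.n]))
    ((𝒯.rQQ _ _).mono (by
      have := 𝒯.r_def; generalize 𝒯.r = r at *; apply le_of_eq; ring))
theorem rBg (d : ℤ) : Rg (𝒯.Bg d) (d + 𝒯.n) :=
  Rg.c (𝒯.S0 d) (Rg.fr (BFr _) fun _ => by linarith [Int.natCast_nonneg 𝒯.n])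
    (Rg.fr (BFr _) fun _ => by linarith)
theorem rm_ge (m : ℕ) : (𝒯.n : ℤ) + 2 ≤ 𝒯.r * ((m : ℤ) + 1) := by
  rw [r_def]; nlinarith [Int.natCast_nonneg 𝒯.n, Int.natCast_nonneg m,
    mul_nonneg (Int.natCast_nonneg 𝒯.n) (Int.natCast_nonneg m)]
theorem rDm (d : ℤ) (m : ℕ) : Rg (𝒯.Dm d (m + 1)) (d + 𝒯.r * (m + 1) + 2 * 𝒯.n - 1) :=
  Rg.c (𝒯.S5 d (m + 1)) ((𝒯.rBg d).mono (by linarith [Int.natCast_nonneg 𝒯.n, 𝒯.rm_ge m]))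
    ((𝒯.rIb _ _).mono (by push_cast; linarith))
theorem rEm (m : ℕ) : ∀ d : ℤ, Rg (𝒯.Em d (m + 1)) (d + 𝒯.r * (m + 1) + 2 * 𝒯.n - 1) := by
  induction m with
  | zero =>
    intro d
    have h := 𝒯.rDm d 0
    have e : 𝒯.Lm (0 + 1) = 𝒯.I ^ (0 + 1) := by
      rw [Lm, zero_add, pow_one]
      exact sup_eq_left.2 ((Ideal.span_singleton_le_iff_mem _).2 𝒯.g0_I)
    rwa [Dm, e] at h
  | succ m ih =>
    intro d
    refine Rg.e (𝒯.S6 d (m + 1)) ((ih _).mono ?_) ((𝒯.rDm d (m + 1)).mono (by push_cast; linarith))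
    rw [r_def]; push_cast; linarith

theorem low (k : ℕ) : ¬ VV (𝒯.Em 0 (k + 2)) (kk K σ (𝒯.r * (k + 2) + 2 * 𝒯.n + 3)) 4 := by
  intro h
  have hn := Int.natCast_nonneg 𝒯.n
  have hr := 𝒯.r_def
  have hg := 𝒯.rm_ge (k + 1)
  push_cast at hg
  have h1 := (𝒯.S6 0 (k + 1)).L2 (i := 3) h (𝒯.rEm k _ 3 _ (by push_cast; linarith))
  have h2 := (𝒯.S5 0 (k + 2)).L3 (i := 3) (𝒯.rBg _ 3 _ (by push_cast; linarith)) h1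
  have h3 := (𝒯.S4 0 (k + 2)).L3 (i := 2) (𝒯.rPb _ _ 2 _ (by push_cast; linarith)) h2
  have h4 := (𝒯.S3 _ _).L3 (i := 1) (𝒯.rCC _ _ 1 _ (by push_cast; linarith)) h3
  have h5 := (𝒯.S1 _ _).L3 (i := 0) ((PFr _ _ _).VV_zero (by
    intro _; push_cast; apply ne_of_lt; linarith)) h4
  have key : ∀ D mm J : ℤ, mm = k → VV (PGM 𝒯.r D mm) (kk K σ J) 0 → J ≠ D + 𝒯.r * mm := by
    rintro D mm J hmm hv rfl
    exact (PFr 𝒯.r D mm).nVV_zero ⟨Finsupp.single 0 k, by simp [hmm]⟩ hv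
  refine key _ _ _ ?_ h5 ?_
  · push_cast; ring
  · push_cast; rw [hr]; ring

theorem final (m : ℕ) (hm : 2 ≤ m) (R : MinGradedFreeRes K (MvPolynomial σ K)
        (zg (MvPolynomial.homogeneousSubmodule σ K))
        (irrel (MvPolynomial.homogeneousSubmodule σ K))
        (MvPolynomial σ K ⧸ (𝒯.I ^ m))
        (quotPieces (MvPolynomial.homogeneousSubmodule σ K) (𝒯.I ^ m))) :
    R.reg = ((𝒯.n : ℤ) + 2) * ((m : ℤ) + 2) - 5 := by
  obtain ⟨k, rfl⟩ : ∃ k, m = k + 2 := ⟨m - 2, by omega⟩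
  refine reg_eq (𝒯.HCI _) R (fun i j hij => ?_) ⟨4, ?_⟩
  · rw [← q_quot]
    refine 𝒯.rEm (k + 1) 0 i j ?_
    rw [r_def]; push_cast at hij ⊢; linarith
  · rw [← q_quot]
    have := 𝒯.low k
    convert this using 3
    rw [r_def]; push_cast; ring

end GD
end Mm2
end PfReg

end FilePM2

section FilePN
set_option linter.unusedSectionVars false
namespace PfReg
section Nn
open MvPolynomial

noncomputable def varX {K τ : Type} [Field K] [DecidableEq τ] (x : τ) : VarS (X x : MvPolynomial τ K) where
  ψ := eval₂Hom (Polynomial.C.comp MvPolynomial.C)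
    (fun j => if j = x then Polynomial.X else Polynomial.C (X j))
  hx := by simp
  hev s := by
    have : (Polynomial.evalRingHom (X x : MvPolynomial τ K)).comp (eval₂Hom (Polynomial.C.comp MvPolynomial.C)
      (fun j => if j = x then Polynomial.X else Polynomial.C (X j))) = RingHom.id _ := by
      ext j : 2
      · simp
      · by_cases h : j = x <;> simp [h]
    exact RingHom.congr_fun this s

theorem varX_mem {K τ : Type} [Field K] [DecidableEq τ] {x j : τ} (h : j ≠ x) :
    (X j : MvPolynomial τ K) ∈ (varX (K := K) x).R := by
  rw [VarS.mem]; simp [varX, h]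

variable (K : Type) [Field K] (q : ℕ)

noncomputable abbrev XM (i j : Fin (2 * q + 5)) : PP K (PairVar (2 * q + 5)) := rn (Xmat K (2 * q + 5) i j)

theorem XM_pos {i j : Fin (2 * q + 5)} (h : (i : ℕ) < (j : ℕ) ∧ 3 ≤ (j : ℕ)) :
    XM K q i j = X (Sum.inl ⟨(i, j), h⟩) := by
  simp only [XM, Xmat, dif_pos h]; exact rename_X _ _
theorem XM_zero {i j : Fin (2 * q + 5)} (h : ¬ ((i : ℕ) < (j : ℕ) ∧ 3 ≤ (j : ℕ)))
    (h' : ¬ ((j : ℕ) < (i : ℕ) ∧ 3 ≤ (i : ℕ))) : XM K q i j = 0 := by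
  simp only [XM, Xmat, dif_neg h, dif_neg h', map_zero]
theorem Xmat_skew (i j : Fin (2 * q + 5)) : Xmat K (2 * q + 5) i j = - Xmat K (2 * q + 5) j i := by
  by_cases h : (i : ℕ) < (j : ℕ) ∧ 3 ≤ (j : ℕ)
  · have h1 : ¬ ((j : ℕ) < (i : ℕ) ∧ 3 ≤ (i : ℕ)) := by omega
    simp only [Xmat, dif_pos h, dif_neg h1, neg_neg]
  · by_cases h' : (j : ℕ) < (i : ℕ) ∧ 3 ≤ (i : ℕ)
    · simp only [Xmat, dif_neg h, dif_pos h']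
    · simp only [Xmat, dif_neg h, dif_neg h', neg_zero]
theorem XM_alt : Alt (XM K q) where
  diag i := XM_zero K q (by omega) (by omega)
  skew i j := by rw [XM, Xmat_skew, map_neg]

theorem XM_mem {x : PairVar (2 * q + 5) ⊕ Fin 3} [DecidableEq (PairVar (2 * q + 5) ⊕ Fin 3)]
    (a b : Fin (2 * q + 5))
    (h1 : ∀ h, x ≠ Sum.inl ⟨(a, b), h⟩) (h2 : ∀ h, x ≠ Sum.inl ⟨(b, a), h⟩) :
    XM K q a b ∈ (varX (K := K) x).R := by
  by_cases h : (a : ℕ) < (b : ℕ) ∧ 3 ≤ (b : ℕ)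
  · rw [XM_pos K q h]; exact varX_mem (h1 _).symm
  · by_cases h' : (b : ℕ) < (a : ℕ) ∧ 3 ≤ (a : ℕ)
    · rw [(XM_alt K q).skew, XM_pos K q h']; exact neg_mem (varX_mem (h2 _).symm)
    · rw [XM_zero K q h h']; exact zero_mem _

def GG (i j : Fin (2 * q + 5)) : Prop := i ≠ j ∧ (3 ≤ (i : ℕ) ∨ 3 ≤ (j : ℕ))

theorem exV (i j : Fin (2 * q + 5)) (h : GG q i j) : ∃ V : VarS (XM K q i j),
    ∀ a b, ¬ (a = i ∧ b = j) → ¬ (a = j ∧ b = i) → XM K q a b ∈ V.R := by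
  classical
  obtain ⟨h0, h3⟩ := h
  have h0' : (i : ℕ) ≠ j := fun h => h0 (Fin.ext h)
  by_cases hij : (i : ℕ) < (j : ℕ) ∧ 3 ≤ (j : ℕ)
  · rw [XM_pos K q hij]
    refine ⟨varX _, fun a b h1 h2 => XM_mem K q a b ?_ ?_⟩
    · intro h e
      have := congrArg Subtype.val (Sum.inl_injective e)
      simp only [Prod.mk.injEq] at this
      exact h1 ⟨this.1.symm, this.2.symm⟩
    · intro h e
      have := congrArg Subtype.val (Sum.inl_injective e)
      simp only [Prod.mk.injEq] at this
      exact h2 ⟨this.2.symm, this.1.symm⟩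
  · have hji : (j : ℕ) < (i : ℕ) ∧ 3 ≤ (i : ℕ) := by omega
    rw [(XM_alt K q).skew, XM_pos K q hji]
    obtain ⟨V', hV'⟩ := (varX (K := K) (Sum.inl ⟨(j, i), hji⟩ : PairVar (2 * q + 5) ⊕ Fin 3)).neg_R
    refine ⟨V', fun a b h1 h2 => ?_⟩
    rw [hV']
    refine XM_mem K q a b ?_ ?_
    · intro h e
      have := congrArg Subtype.val (Sum.inl_injective e)
      simp only [Prod.mk.injEq] at this
      exact h2 ⟨this.1.symm, this.2.symm⟩
    · intro h e
      have := congrArg Subtype.val (Sum.inl_injective e)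
      simp only [Prod.mk.injEq] at this
      exact h1 ⟨this.2.symm, this.1.symm⟩

noncomputable def gen : Gen (XM K q) where
  G := GG q
  ne h := h.1
  symm h := ⟨h.1.symm, h.2.symm⟩
  alt := XM_alt K q
  V i j h := (exV K q i j h).choose
  free i j h := (exV K q i j h).choose_spec

def oo (i : Fin 3) : Fin (2 * q + 5) := ⟨i, by omega⟩
def zz (k : Fin (2 * q + 2)) : Fin (2 * q + 5) := emb3 k

theorem ofFn_zz : List.ofFn (zz q) = zz q 0 :: zz q 1 :: List.ofFn fun k : Fin (2 * q) => zz q k.succ.succ := by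
  rw [List.ofFn_succ, List.ofFn_succ]; rfl

open Classical in
noncomputable def gen3 : Gen3 (XM K q) where
  toGen := gen K q
  n := q
  b := zz q 0
  c := zz q 1
  l := List.ofFn fun k : Fin (2 * q) => zz q k.succ.succ
  hl := by simp
  o := oo q
  o_inj i j h e := h (Fin.ext (by simpa [oo] using e))
  gl i := by
    rw [← ofFn_zz]
    refine List.pairwise_cons.2 ⟨?_, List.pairwise_ofFn.2 ?_⟩
    · intro a ha
      obtain ⟨k, rfl⟩ := (List.mem_ofFn' _ _).1 ha
      refine ⟨fun e => ?_, Or.inr ?_⟩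
      · have := congrArg Fin.val e
        simp [oo, zz, emb3] at this
        omega
      · simp [zz, emb3]
    · intro i j hij
      refine ⟨fun e => ?_, Or.inr ?_⟩
      · have := congrArg Fin.val e
        simp [zz, emb3] at this
        omega
      · simp [zz, emb3]
  T i := X (Sum.inr i)
  VT i := varX _
  M_free i a b := XM_mem K q a b (fun _ => Sum.inr_ne_inl) (fun _ => Sum.inr_ne_inl)
  T_free i j h := varX_mem (fun e => h (Sum.inr_injective e).symm)

theorem gen3_Z : (gen3 K q).Z = List.ofFn (zz q) := (ofFn_zz q).symm

theorem pf_sub (n : ℕ) (f : Fin n → Fin (2 * q + 5)) :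
    rn (pfaffian n ((Xmat K (2 * q + 5)).submatrix f f)) = pf (XM K q) (List.ofFn f) := by
  rw [← pfaffian_eq (XM_alt K q)]
  exact pfaffian_map (rn (K := K) (σ := PairVar (2 * q + 5))).toRingHom _ _

theorem pf_two (a b : Fin 3) (f : Fin (2 * q + 4) → Fin (2 * q + 5)) (h0 : f 0 = oo q a) (h1 : f 1 = oo q b)
    (hk : ∀ k : Fin (2 * q + 2), f k.succ.succ = zz q k) :
    rn (pfaffian (2 * q + 4) ((Xmat K (2 * q + 5)).submatrix f f)) =
      (gen3 K q).ω ((gen3 K q).y a) ((gen3 K q).y b) := by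
  rw [pf_sub, List.ofFn_succ, List.ofFn_succ, pf_cons2 (XM_alt K q)]
  rw [show f (Fin.succ 0) = oo q b from h1, h0, show (fun i : Fin (2 * q + 2) => f i.succ.succ) = zz q from funext hk]
  rw [XM_zero K q (by simp [oo]) (by simp [oo]), zero_mul, zero_sub, ← om_skew, Gen3.ω, gen3_Z]
  rfl

noncomputable abbrev p1 (a : ℕ) := pfaffian (2 * q + 4) ((Xmat K (2 * q + 5)).submatrix (emb1 a) (emb1 a))

theorem p1_0 : rn (p1 K q 0) = (gen3 K q).ω ((gen3 K q).y 1) ((gen3 K q).y 2) :=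
  pf_two K q 1 2 _ (Fin.ext rfl) (Fin.ext rfl) (fun k => Fin.ext (by simp [emb1, zz, emb3]))
theorem p1_1 : rn (p1 K q 1) = (gen3 K q).ω ((gen3 K q).y 0) ((gen3 K q).y 2) :=
  pf_two K q 0 2 _ (Fin.ext rfl) (Fin.ext rfl) (fun k => Fin.ext (by simp [emb1, zz, emb3]))
theorem p1_2 : rn (p1 K q 2) = (gen3 K q).ω ((gen3 K q).y 0) ((gen3 K q).y 1) :=
  pf_two K q 0 1 _ (Fin.ext rfl) (Fin.ext rfl) (fun k => Fin.ext (by simp [emb1, zz, emb3]))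

theorem Xmat_deg (a b : Fin (2 * q + 5)) : Xmat K (2 * q + 5) a b ∈ WP (one' (PairVar (2 * q + 5))) 1 := by
  have hX : ∀ x : PairVar (2 * q + 5), (X x : MvPolynomial _ K) ∈ WP (one' (PairVar (2 * q + 5))) 1 :=
    fun x => isWeightedHomogeneous_X K (one' _) x
  unfold Xmat
  split_ifs
  · exact hX _
  · exact neg_mem (hX _)
  · exact zero_mem _

noncomputable def gd : GD (XM K q) where
  toGen3 := gen3 K q
  f := ![p1 K q 0, - p1 K q 1, p1 K q 2]
  hf i := by
    fin_cases i
    · exact p1_0 K q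
    · change rn (- p1 K q 1) = (gen3 K q).ω ((gen3 K q).y 2) ((gen3 K q).y 0)
      rw [map_neg, p1_1, Gen3.ω, om_skew, neg_neg]
    · exact p1_2 K q
  g0 := pfaffian (2 * q + 2) ((Xmat K (2 * q + 5)).submatrix emb3 emb3)
  hg0 := by rw [Gen3.g, gen3_Z]; exact pf_sub K q _ _
  Mr a b := ⟨_, Xmat_deg K q a b, rfl⟩
  hT _ := rfl

theorem span_aux {S : Type*} [CommRing S] (a b c d : S) :
    Ideal.span (Set.range ![a, - b, c]) ⊔ Ideal.span {d} = Ideal.span {a, b, c, d} := by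
  have : Set.range ![a, - b, c] = {a, - b, c} := by
    ext x; simp [eq_comm]; tauto
  rw [this]
  simp only [Ideal.span_insert]
  rw [show Ideal.span {- b} = Ideal.span {b} from Ideal.span_singleton_neg _]
  simp only [sup_assoc]

theorem gd_I : (gd K q).I = Ideal.span { p1 K q 0, p1 K q 1, p1 K q 2,
    pfaffian (2 * q + 2) ((Xmat K (2 * q + 5)).submatrix emb3 emb3) } :=
  span_aux _ _ _ _

end Nn
end PfReg

end FilePN

/-- For odd `t = 2q + 5 ≥ 5` (so `r = (t-1)/2 = q + 2`), let `I` be the grade-3 almost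
complete intersection Pfaffian ideal `⟨Pf_{1̄}, Pf_{2̄}, Pf_{3̄}, Pf_{123̄}⟩` in `B = K[X]`.
Then for every `m ≥ 2`, `reg (B/I^m) = r (m + 2) - 5`. -/
theorem reg_powers_pfaffian_odd (K : Type) [Field K] (q : ℕ)
    (I : Ideal (MvPolynomial (PairVar (2 * q + 5)) K))
    (hI : I = Ideal.span
      { pfaffian (2 * q + 4) ((Xmat K (2 * q + 5)).submatrix (emb1 0) (emb1 0)),
        pfaffian (2 * q + 4) ((Xmat K (2 * q + 5)).submatrix (emb1 1) (emb1 1)),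
        pfaffian (2 * q + 4) ((Xmat K (2 * q + 5)).submatrix (emb1 2) (emb1 2)),
        pfaffian (2 * q + 2) ((Xmat K (2 * q + 5)).submatrix emb3 emb3) }) :
    ∀ m : ℕ, 2 ≤ m →
    ∀ R : MinGradedFreeRes K (MvPolynomial (PairVar (2 * q + 5)) K)
        (zg (MvPolynomial.homogeneousSubmodule (PairVar (2 * q + 5)) K))
        (irrel (MvPolynomial.homogeneousSubmodule (PairVar (2 * q + 5)) K))
        (MvPolynomial (PairVar (2 * q + 5)) K ⧸ (I ^ m))
        (quotPieces (MvPolynomial.homogeneousSubmodule (PairVar (2 * q + 5)) K) (I ^ m)),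
      R.reg = ((q : ℤ) + 2) * ((m : ℤ) + 2) - 5 := by
  intro m hm
  subst hI
  have e := PfReg.gd_I K q
  rw [← e]
  intro R
  exact (PfReg.gd K q).final m hm R
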